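/- arXiv:2205.01976 — 4 statements merged into one kernel-verified Lean document; each statement's English description precedes it below -/
import Mathlib

section
/- If G is a finite simple graph with at least one vertex and χ(G) ∈ {Δ(G), Δ(G)+1}, then vs_χ(G) = ivs_χ(G). -/
/-- The chromatic number of `G` as a natural number. -/
noncomputable def chi {V : Type*} [Fintype V] (G : SimpleGraph V) : ℕ :=
  G.chromaticNumber.toNat

/-- The maximum degree of `G` (classical version, no decidability assumptions). -/
noncomputable def maxDeg {V : Type*} [Fintype V] (G : SimpleGraph V) : ℕ :=
  @SimpleGraph.maxDegree V G _ (Classical.decRel _)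

/-- The degree of a vertex `v` of `G` (classical version). -/
noncomputable def deg {V : Type*} [Fintype V] (G : SimpleGraph V) (v : V) : ℕ :=
  @SimpleGraph.degree V G v (@SimpleGraph.neighborSetFintype V G _ (Classical.decRel _) v)

/-- The chromatic vertex stability of `G`: the minimum size of a set `S` of vertices
such that the subgraph induced on the complement of `S` has chromatic number `χ(G) - 1`. -/
noncomputable def vsChi {V : Type*} [Fintype V] [DecidableEq V] (G : SimpleGraph V) : ℕ :=
  sInf {n : ℕ | ∃ S : Finset V, S.card = n ∧
    chi (G.induce (↑(Sᶜ) : Set V)) = chi G - 1}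

/-- The independent chromatic vertex stability of `G`: the minimum size of an independent
set `S` of vertices such that the subgraph induced on the complement of `S` has chromatic
number `χ(G) - 1`. -/
noncomputable def ivsChi {V : Type*} [Fintype V] [DecidableEq V] (G : SimpleGraph V) : ℕ :=
  sInf {n : ℕ | ∃ S : Finset V, S.card = n ∧
    (∀ x ∈ S, ∀ y ∈ S, ¬ G.Adj x y) ∧
    chi (G.induce (↑(Sᶜ) : Set V)) = chi G - 1}

open Relation

namespace ChromaticStability

section Core

variable {V : Type*} {G : SimpleGraph V} {n : ℕ}

/-- `c` restricts to a proper colouring of `G - S` with colours `0, …, n - 1`. -/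
def IsColoringOff (G : SimpleGraph V) (n : ℕ) (S : Finset V) (c : V → ℕ) : Prop :=
  (∀ a, a ∉ S → c a < n) ∧ ∀ a, a ∉ S → ∀ b, b ∉ S → G.Adj a b → c a ≠ c b

/-- `G - S` has a proper colouring with `n` colours. -/
def ColorableOff (G : SimpleGraph V) (n : ℕ) (S : Finset V) : Prop :=
  ∃ c, IsColoringOff G n S c

/-- `S` has minimum size among the sets whose deletion leaves an `n`-colourable graph. -/
def IsMinDeletion (G : SimpleGraph V) (n : ℕ) (S : Finset V) : Prop :=
  ColorableOff G n S ∧ ∀ R, ColorableOff G n R → S.card ≤ R.card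

open Classical in
/-- The number of neighbours of `x` in `T`. -/
noncomputable def degIn (G : SimpleGraph V) (T : Finset V) (x : V) : ℕ :=
  ∑ b ∈ T, if G.Adj x b then 1 else 0

/-- The number of ordered pairs of adjacent vertices of `S`. -/
noncomputable def arcs (G : SimpleGraph V) (S : Finset V) : ℕ :=
  ∑ a ∈ S, degIn G S a

/-- A minimum deletion set spanning as few edges as possible. -/
def IsOptimal (G : SimpleGraph V) (n : ℕ) (S : Finset V) : Prop :=
  IsMinDeletion G n S ∧ ∀ R, IsMinDeletion G n R → arcs G S ≤ arcs G R

/-- All sets of neighbours of a vertex have at most `d` elements. -/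
def DegreeLE (G : SimpleGraph V) (d : ℕ) : Prop :=
  ∀ v, ∀ A : Finset V, (∀ a ∈ A, G.Adj v a) → A.card ≤ d

/-- `y` can be reached from `x` by a walk all of whose later vertices avoid `T`. -/
def Reach (G : SimpleGraph V) (T : Finset V) : V → V → Prop :=
  ReflTransGen fun x y => G.Adj x y ∧ y ∉ T

lemma degIn_eq_card (T : Finset V) (x : V) [DecidablePred (G.Adj x)] :
    degIn G T x = (T.filter (G.Adj x)).card := by
  rw [degIn, Finset.card_filter]
  exact Finset.sum_congr rfl fun _ _ => by congr

lemma Reach.not_mem {T : Finset V} {x y : V} (h : Reach G T x y) (hx : x ∉ T) : y ∉ T := by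
  cases h with
  | refl => exact hx
  | tail _ h => exact h.2

lemma Reach.symm {T : Finset V} {x y : V} (h : Reach G T x y) (hx : x ∉ T) :
    Reach G T y x := by
  induction h with
  | refl => exact .refl
  | tail h₁ h₂ ih => exact .head ⟨h₂.1.symm, Reach.not_mem h₁ hx⟩ ih

lemma Reach.mono {T T' : Finset V} (hT : T' ⊆ T) {x y : V} (h : Reach G T x y) :
    Reach G T' x y :=
  ReflTransGen.mono (fun _ _ h => ⟨h.1, fun h' => h.2 (hT h')⟩) _ _ h

lemma one_le_of_adj {f : V → ℕ} (hf : IsColoringOff G (n + 1) ∅ f) {x y : V}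
    (hxy : G.Adj x y) : 1 ≤ n := by
  have h1 := hf.1 x (by simp)
  have h2 := hf.1 y (by simp)
  have h3 := hf.2 x (by simp) y (by simp) hxy
  omega

lemma exists_isOptimal [Finite V] : ∃ S, IsOptimal G n S := by
  cases nonempty_fintype V
  have huniv : ColorableOff G n Finset.univ := ⟨fun _ => 0, by simp, by simp⟩
  obtain ⟨S, hS, hmin⟩ := Set.exists_min_image {S | ColorableOff G n S} Finset.card
    (Set.toFinite _) ⟨_, huniv⟩
  obtain ⟨S', hS', hmin'⟩ := Set.exists_min_image {S | IsMinDeletion G n S} (arcs G)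
    (Set.toFinite _) ⟨S, hS, hmin⟩
  exact ⟨S', hS', hmin'⟩

variable [DecidableEq V]

/-- `T ∪ {x}` is optimal and `x` has a neighbour in `T`. -/
def Hot (G : SimpleGraph V) (n : ℕ) (T : Finset V) (x : V) : Prop :=
  x ∉ T ∧ IsOptimal G n (insert x T) ∧ ∃ w ∈ T, G.Adj x w

lemma arcs_insert {T : Finset V} {x : V} (hx : x ∉ T) :
    arcs G (insert x T) = arcs G T + 2 * degIn G T x := by
  classical
  have h : ∑ a ∈ T, (if G.Adj a x then 1 else 0) = degIn G T x := by
    simp only [degIn, G.adj_comm]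
  simp only [arcs, degIn, Finset.sum_insert hx, Finset.sum_add_distrib, SimpleGraph.irrefl,
    if_false] at h ⊢
  omega

lemma Reach.exists_first {T : Finset V} {x y : V} (h : Reach G T x y) (hne : y ≠ x) :
    ∃ z, G.Adj x z ∧ z ∉ T ∧ Reach G (insert x T) z y := by
  induction h with
  | refl => exact absurd rfl hne
  | @tail b c h₁ h₂ ih =>
    by_cases hb : b = x
    · subst hb
      exact ⟨c, h₂.1, h₂.2, .refl⟩
    · obtain ⟨z, hz, hzT, hr⟩ := ih hb
      exact ⟨z, hz, hzT, hr.tail ⟨h₂.1, by simp [hne, h₂.2]⟩⟩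

lemma IsMinDeletion.exists_adj_color {S : Finset V} (hS : IsMinDeletion G n S) {c : V → ℕ}
    (hc : IsColoringOff G n S c) {x : V} (hx : x ∈ S) {i : ℕ} (hi : i < n) :
    ∃ y, y ∉ S ∧ G.Adj x y ∧ c y = i := by
  by_contra! hno
  have hcol : ColorableOff G n (S.erase x) := by
    refine ⟨Function.update c x i, fun a ha => ?_, fun a ha b hb hab => ?_⟩
    · by_cases hax : a = x
      · simpa [hax] using hi
      · have : a ∉ S := fun h => ha (Finset.mem_erase.2 ⟨hax, h⟩)
        simpa [hax] using hc.1 a this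
    · by_cases hax : a = x
      · subst hax
        have hba : b ≠ a := hab.ne'
        have hbS : b ∉ S := fun h => hb (Finset.mem_erase.2 ⟨hba, h⟩)
        simpa [hba] using (hno b hbS hab).symm
      · have haS : a ∉ S := fun h => ha (Finset.mem_erase.2 ⟨hax, h⟩)
        by_cases hbx : b = x
        · subst hbx
          simpa [hax] using hno a haS hab.symm
        · have hbS : b ∉ S := fun h => hb (Finset.mem_erase.2 ⟨hbx, h⟩)
          simpa [hax, hbx] using hc.2 a haS b hbS hab
  have h1 := hS.2 _ hcol
  have h2 := Finset.card_erase_lt_of_mem hx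
  omega

/-- Exchange the roles of a hot vertex and its neighbour in `T`. -/
lemma Hot.swap {T : Finset V} {x w : V} (h : Hot G n T x) (hw : w ∈ T) (hxw : G.Adj x w) :
    Hot G n (insert x (T.erase w)) w := by
  have hins : insert w (insert x (T.erase w)) = insert x T := by
    rw [Finset.insert_comm, Finset.insert_erase hw]
  refine ⟨by simp [hxw.ne'], ?_, x, Finset.mem_insert_self _ _, hxw.symm⟩
  rw [hins]
  exact h.2.1

lemma hot_of_mem {S : Finset V} (hS : IsOptimal G n S) {x w : V} (hx : x ∈ S) (hw : w ∈ S)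
    (hxw : G.Adj x w) : Hot G n (S.erase x) x := by
  refine ⟨by simp, ?_, w, Finset.mem_erase.2 ⟨hxw.ne', hw⟩, hxw⟩
  rwa [Finset.insert_erase hx]

variable [Fintype V]

open Classical in
lemma IsMinDeletion.le_card_outside {S : Finset V} (hS : IsMinDeletion G n S) {c : V → ℕ}
    (hc : IsColoringOff G n S c) {x : V} (hx : x ∈ S) :
    n ≤ (Finset.univ.filter fun y => G.Adj x y ∧ y ∉ S).card := by
  have : Finset.range n ⊆ (Finset.univ.filter fun y => G.Adj x y ∧ y ∉ S).image c := by
    intro i hi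
    obtain ⟨y, hy, hxy, rfl⟩ := hS.exists_adj_color hc hx (Finset.mem_range.1 hi)
    exact Finset.mem_image_of_mem _ (by simp [hy, hxy])
  simpa using (Finset.card_le_card this).trans Finset.card_image_le

open Classical in
lemma DegreeLE.card_add_card_le {d : ℕ} (hd : DegreeLE G d) (S : Finset V) (x : V) :
    (S.filter (G.Adj x)).card + (Finset.univ.filter fun y => G.Adj x y ∧ y ∉ S).card ≤ d := by
  rw [← Finset.card_union_of_disjoint]
  · refine hd x _ fun a ha => ?_
    simp only [Finset.mem_union, Finset.mem_filter] at ha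
    tauto
  · rw [Finset.disjoint_left]
    intro a ha hb
    simp only [Finset.mem_filter] at ha hb
    exact hb.2.2 ha.1

lemma IsMinDeletion.degIn_le_one (hd : DegreeLE G (n + 1)) {S : Finset V}
    (hS : IsMinDeletion G n S) {x : V} (hx : x ∈ S) : degIn G S x ≤ 1 := by
  classical
  obtain ⟨c, hc⟩ := hS.1
  have h1 := hS.le_card_outside hc hx
  have h2 := hd.card_add_card_le S x
  rw [degIn_eq_card]
  omega

lemma Hot.eq_of_adj (hd : DegreeLE G (n + 1)) {T : Finset V} {x w w' : V} (h : Hot G n T x)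
    (hw : w ∈ T) (hw' : w' ∈ T) (hxw : G.Adj x w) (hxw' : G.Adj x w') : w = w' := by
  classical
  have h1 := h.2.1.1.degIn_le_one hd (Finset.mem_insert_self x T)
  rw [degIn_eq_card, Finset.card_le_one] at h1
  exact h1 _ (by simp [hw, hxw]) _ (by simp [hw', hxw'])

open Classical in
lemma Hot.card_outside (hd : DegreeLE G (n + 1)) {T : Finset V} {x : V} (h : Hot G n T x) :
    (Finset.univ.filter fun y => G.Adj x y ∧ y ∉ insert x T).card = n := by
  obtain ⟨c, hc⟩ := h.2.1.1.1
  have h1 := h.2.1.1.le_card_outside hc (Finset.mem_insert_self x T)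
  have h2 := hd.card_add_card_le (insert x T) x
  obtain ⟨w, hw, hxw⟩ := h.2.2
  have h3 : 0 < ((insert x T).filter (G.Adj x)).card :=
    Finset.card_pos.2 ⟨w, by simp [hw, hxw]⟩
  omega

lemma Hot.eq_of_color_eq (hd : DegreeLE G (n + 1)) {T : Finset V} {x y y' : V}
    (h : Hot G n T x) {c : V → ℕ} (hc : IsColoringOff G n (insert x T) c)
    (hy : y ∉ T) (hy' : y' ∉ T) (hxy : G.Adj x y) (hxy' : G.Adj x y') (hcy : c y = c y') :
    y = y' := by
  classical
  have hcard := h.card_outside hd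
  refine Finset.inj_on_of_surj_on_of_card_le
    (s := Finset.univ.filter fun y => G.Adj x y ∧ y ∉ insert x T) (t := Finset.range n)
    (fun a _ => c a) ?_ ?_ (by rw [hcard, Finset.card_range]) (by simp [hy, hxy, hxy.ne'])
    (by simp [hy', hxy', hxy'.ne']) hcy
  · intro a ha
    exact Finset.mem_range.2 (hc.1 a (Finset.mem_filter.1 ha).2.2)
  · intro i hi
    obtain ⟨z, hz, hxz, hi⟩ := h.2.1.1.exists_adj_color hc (Finset.mem_insert_self x T)
      (Finset.mem_range.1 hi)
    exact ⟨z, Finset.mem_filter.2 ⟨Finset.mem_univ _, hxz, hz⟩, hi⟩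

/-- Exchanging `x` for a neighbour outside `T` preserves hotness. -/
lemma Hot.step (hd : DegreeLE G (n + 1)) {T : Finset V} {x y : V} (h : Hot G n T x)
    (hxy : G.Adj x y) (hy : y ∉ T) : Hot G n T y := by
  classical
  obtain ⟨c, hc⟩ := h.2.1.1.1
  have hcol : ColorableOff G n (insert y T) := by
    have hout : ∀ a, a ∉ insert y T → a ≠ x → a ∉ insert x T := by
      intro a ha hax
      simp only [Finset.mem_insert, not_or] at ha ⊢
      exact ⟨hax, ha.2⟩
    have hyx : y ∉ insert x T := by simp [hxy.ne', hy]
    have key : ∀ b, b ∉ insert y T → G.Adj x b → c y ≠ c b := by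
      intro b hb hxb hcb
      simp only [Finset.mem_insert, not_or] at hb
      exact hb.1 (h.eq_of_color_eq hd hc hy hb.2 hxy hxb hcb).symm
    refine ⟨Function.update c x (c y), fun a ha => ?_, fun a ha b hb hab => ?_⟩
    · by_cases hax : a = x
      · simpa [hax] using hc.1 y hyx
      · simpa [hax] using hc.1 a (hout a ha hax)
    · by_cases hax : a = x
      · subst hax
        simpa [hab.ne'] using key b hb hab
      · by_cases hbx : b = x
        · subst hbx
          simpa [hax] using (key a ha hab.symm).symm
        · simpa [hax, hbx] using hc.2 a (hout a ha hax) b (hout b hb hbx) hab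
  have hcard : (insert y T).card = (insert x T).card := by
    rw [Finset.card_insert_of_notMem hy, Finset.card_insert_of_notMem h.1]
  have hmin : IsMinDeletion G n (insert y T) :=
    ⟨hcol, fun S' hS' => hcard ▸ h.2.1.1.2 S' hS'⟩
  have harcs := h.2.1.2 _ hmin
  rw [arcs_insert hy, arcs_insert h.1] at harcs
  have hsub : degIn G T y ≤ degIn G (insert y T) y := by
    simp only [degIn_eq_card]
    exact Finset.card_le_card (Finset.filter_subset_filter _ (Finset.subset_insert _ _))
  have hle := hsub.trans (hmin.degIn_le_one hd (Finset.mem_insert_self y T))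
  have hpos : 0 < degIn G T x := by
    obtain ⟨w, hw, hxw⟩ := h.2.2
    rw [degIn_eq_card]
    exact Finset.card_pos.2 ⟨w, by simp [hw, hxw]⟩
  refine ⟨hy, ⟨hmin, fun S' hS' => ?_⟩, ?_⟩
  · refine le_trans ?_ (h.2.1.2 S' hS')
    rw [arcs_insert hy, arcs_insert h.1]
    omega
  · have : 0 < degIn G T y := by omega
    rw [degIn_eq_card] at this
    obtain ⟨w, hw⟩ := Finset.card_pos.1 this
    exact ⟨w, (Finset.mem_filter.1 hw).1, (Finset.mem_filter.1 hw).2⟩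

lemma Hot.reach (hd : DegreeLE G (n + 1)) {T : Finset V} {x y : V} (h : Hot G n T x)
    (hr : Reach G T x y) : Hot G n T y := by
  induction hr with
  | refl => exact h
  | tail _ h₂ ih => exact ih.step hd h₂.1 h₂.2

/-- A hot vertex does not separate its neighbours: otherwise two colours could be exchanged on
one side, making two neighbours of `x` agree. -/
lemma Hot.reach_neighbors (hd : DegreeLE G (n + 1)) {T : Finset V} {x y y' : V}
    (h : Hot G n T x) (hxy : G.Adj x y) (hy : y ∉ T) (hxy' : G.Adj x y') (hy' : y' ∉ T) :
    Reach G (insert x T) y y' := by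
  classical
  by_contra hno
  obtain ⟨c, hc⟩ := h.2.1.1.1
  have hyx : y ∉ insert x T := by simp [hxy.ne', hy]
  have hyx' : y' ∉ insert x T := by simp [hxy'.ne', hy']
  let c' : V → ℕ := fun v =>
    if Reach G (insert x T) y v then Equiv.swap (c y) (c y') (c v) else c v
  have hc' : IsColoringOff G n (insert x T) c' := by
    refine ⟨fun a ha => ?_, fun a ha b hb hab => ?_⟩
    · have h1 := hc.1 y hyx
      have h2 := hc.1 y' hyx'
      have h3 := hc.1 a ha
      simp only [c', Equiv.swap_apply_def]
      split_ifs <;> assumption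
    · have hiff : Reach G (insert x T) y a ↔ Reach G (insert x T) y b :=
        ⟨fun hr => hr.tail ⟨hab, hb⟩, fun hr => hr.tail ⟨hab.symm, ha⟩⟩
      have := hc.2 a ha b hb hab
      simp only [c', hiff]
      split_ifs
      · simpa using this
      · exact this
  have heq : c' y = c' y' := by
    have : Reach G (insert x T) y y := ReflTransGen.refl
    simp [c', this, hno]
  have := h.eq_of_color_eq hd hc' hy hy' hxy hxy' heq
  subst this
  exact hno .refl

lemma Hot.reach_avoiding (hd : DegreeLE G (n + 1)) {T : Finset V} {x y z : V}
    (h : Hot G n T x) (hr : Reach G T x z) (hne : z ≠ x) (hxy : G.Adj x y) (hy : y ∉ T) :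
    Reach G (insert x T) z y := by
  obtain ⟨u, hxu, hu, hr'⟩ := hr.exists_first hne
  have huT : u ∉ insert x T := by simp [hxu.ne', hu]
  exact (hr'.symm huT).trans (h.reach_neighbors hd hxu hu hxy hy)

lemma Hot.adj_of_common (hd : DegreeLE G (n + 1)) {T : Finset V} {x y w : V}
    (h : Hot G n T x) (hr : Reach G T x y) (hne : y ≠ x) (hw : w ∈ T)
    (hxw : G.Adj x w) (hyw : G.Adj y w) : G.Adj y x := by
  have hy := h.reach hd hr
  have hy' : Hot G n (insert x (T.erase w)) y :=
    (h.swap hw hxw).step hd hyw.symm (by simp [hne, hy.1])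
  obtain ⟨v, hv, hyv⟩ := hy'.2.2
  rcases Finset.mem_insert.1 hv with rfl | hv
  · exact hyv
  · have := hy.eq_of_adj hd (Finset.mem_of_mem_erase hv) hw hyv hyw
    exact absurd this (Finset.ne_of_mem_erase hv)

/-- Distinct vertices of the component of a hot vertex have distinct neighbours in `T`. -/
lemma Hot.eq_of_common (hd : DegreeLE G (n + 1)) {f : V → ℕ} (hf : IsColoringOff G (n + 1) ∅ f)
    {T : Finset V} {x y w : V} (h : Hot G n T x) (hr : Reach G T x y) (hw : w ∈ T)
    (hxw : G.Adj x w) (hyw : G.Adj y w) : y = x := by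
  classical
  by_contra hne
  have hy := h.reach hd hr
  have hyx := h.adj_of_common hd hr hne hw hxw hyw
  have hyw' : Hot G n (insert x (T.erase w)) y :=
    (h.swap hw hxw).step hd hyw.symm (by simp [hne, hy.1])
  have hall : ∀ z, G.Adj x z → z ∉ T → G.Adj z w := by
    intro z hxz hz
    have hz' : Hot G n (insert x (T.erase w)) z := by
      refine hyw'.reach hd ((h.reach_neighbors hd hyx.symm hy.1 hxz hz).mono ?_)
      exact Finset.insert_subset_insert _ (Finset.erase_subset _ _)
    obtain ⟨v, hv, hzv⟩ := (h.step hd hxz hz).2.2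
    by_cases hvw : v = w
    · exact hvw ▸ hzv
    · have := hz'.eq_of_adj hd (Finset.mem_insert_self _ _)
        (Finset.mem_insert_of_mem (Finset.mem_erase.2 ⟨hvw, hv⟩)) hxz.symm hzv
      exact absurd (this ▸ hv) h.1
  let N := Finset.univ.filter fun z => G.Adj x z ∧ z ∉ insert x T
  have hN : ∀ z, z ∈ N → G.Adj x z ∧ z ∉ T := by
    intro z hz
    simp only [N, Finset.mem_filter, Finset.mem_insert, not_or] at hz
    exact ⟨hz.2.1, hz.2.2.2⟩
  have hNcard : N.card = n := h.card_outside hd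
  have hclique : ∀ a ∈ insert w (insert x N), ∀ b ∈ insert w (insert x N), a ≠ b →
      G.Adj a b := by
    intro a ha b hb hab
    simp only [Finset.mem_insert] at ha hb
    rcases ha with rfl | rfl | ha <;> rcases hb with rfl | rfl | hb
    · exact absurd rfl hab
    · exact hxw.symm
    · exact (hall b (hN b hb).1 (hN b hb).2).symm
    · exact hxw
    · exact absurd rfl hab
    · exact (hN b hb).1
    · exact hall a (hN a ha).1 (hN a ha).2
    · exact (hN a ha).1.symm
    · obtain ⟨ha, haT⟩ := hN a ha
      obtain ⟨hb, hbT⟩ := hN b hb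
      have hreach : Reach G T b a :=
        (h.reach_neighbors hd hb hbT ha haT).mono (Finset.subset_insert _ _)
      exact (h.step hd hb hbT).adj_of_common hd hreach hab hw (hall b hb hbT) (hall a ha haT)
  have hcard : (insert w (insert x N)).card = n + 2 := by
    rw [Finset.card_insert_of_notMem, Finset.card_insert_of_notMem, hNcard]
    · simp [N]
    · simp [N, hxw.ne', hw]
  have hle : (insert w (insert x N)).card ≤ (Finset.range (n + 1)).card := by
    refine Finset.card_le_card_of_injOn f (fun a _ => ?_) fun a ha b hb hab => ?_
    · simpa using hf.1 a (by simp)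
    · by_contra hne'
      exact hf.2 a (by simp) b (by simp) (hclique a ha b hb hne') hab
  rw [hcard, Finset.card_range] at hle
  omega

/-- The state of the exchange process started at the vertex `a` of the optimal set `S₀`:
`S` is the current set, `U` is the set of visited vertices, and `p` is the last exchanged vertex. -/
structure ExchangeState (G : SimpleGraph V) (n : ℕ) (f : V → ℕ) (S₀ : Finset V) (a : V)
    (U : Set V) (S : Finset V) (p : V) : Prop where
  optimal : IsOptimal G n S
  mem : p ∈ S
  exists_adj : ∃ q ∈ S, G.Adj p q
  visited : p ∈ U
  start_visited : a ∈ U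
  start_mem : a ∈ S
  isolated : ∀ x ∈ U, x ∈ S → x ≠ p → ∀ y ∈ S, ¬ G.Adj x y
  neighbors : ∀ x ∈ U, x ∈ S → ∀ y, y ∉ S → G.Adj x y → y ∈ U
  blocks : ∀ z ∈ U, z ∉ S →
    (∃ v s t, s ≠ t ∧ s ∈ U ∧ s ∈ S ∧ t ∈ U ∧ t ∈ S ∧ G.Adj v s ∧ G.Adj v t ∧ Reach G S z v) ∨
    ∀ y, G.Adj a y → y ∉ S₀ → Reach G S z y
  start_neighbors : ∀ y, G.Adj a y → y ∉ S₀ →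
    y ∈ U ∧ y ∉ S ∧ ∃ o ∈ S₀, o ∈ S ∧ o ≠ a ∧ G.Adj y o
  parity : n = 1 → f p = f a

lemma ExchangeState.start (hd : DegreeLE G (n + 1)) {f : V → ℕ} {S : Finset V}
    (hS : IsOptimal G n S) {a b : V} (ha : a ∈ S) (hb : b ∈ S) (hab : G.Adj a b) :
    ExchangeState G n f S a {z | Reach G (S.erase a) a z} S a := by
  have hot := hot_of_mem hS ha hb hab
  have hmem : ∀ z, Reach G (S.erase a) a z → z ∈ S → z = a := by
    intro z hz hzS
    by_contra hne
    exact (hz.not_mem hot.1) (Finset.mem_erase.2 ⟨hne, hzS⟩)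
  have hadj : ∀ y, y ∉ S → G.Adj a y → Reach G (S.erase a) a y := fun y hy hay =>
    .single ⟨hay, fun h => hy (Finset.mem_of_mem_erase h)⟩
  refine ⟨hS, ha, ⟨b, hb, hab⟩, .refl, .refl, ha, ?_, ?_, ?_, ?_, fun _ => rfl⟩
  · exact fun x hx hxS hne => absurd (hmem x hx hxS) hne
  · intro x hx hxS y hy hxy
    obtain rfl := hmem x hx hxS
    exact hadj y hy hxy
  · refine fun z hz hzS => .inr fun y hay hy => ?_
    have := hot.reach_avoiding hd hz (fun h => hzS (h ▸ ha)) hay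
      fun h => hy (Finset.mem_of_mem_erase h)
    rwa [Finset.insert_erase ha] at this
  · intro y hay hy
    obtain ⟨o, ho, hyo⟩ := (hot.reach hd (hadj y hy hay)).2.2
    obtain ⟨hoa, hoS⟩ := Finset.mem_erase.1 ho
    exact ⟨hadj y hy hay, hy, o, hoS, hoS, hoa, hyo⟩

/-- The component entered next by the exchange process contains no visited vertex. -/
lemma ExchangeState.disjoint (hd : DegreeLE G (n + 1)) {f : V → ℕ}
    (hf : IsColoringOff G (n + 1) ∅ f) {S₀ : Finset V} {a b : V} (hS₀ : IsOptimal G n S₀)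
    (ha : a ∈ S₀) (hb : b ∈ S₀) (hab : G.Adj a b) {U : Set V} {S : Finset V} {p q : V}
    (h : ExchangeState G n f S₀ a U S p) (hq : q ∈ S) (hpq : G.Adj p q) (hqU : q ∉ U)
    {z : V} (hz : Reach G (S.erase q) q z) : z ∉ U := by
  classical
  intro hzU
  have hot := hot_of_mem h.optimal hq h.mem hpq.symm
  have hzS : z ∉ S := fun hzS =>
    (hz.not_mem hot.1) (Finset.mem_erase.2 ⟨fun hzq => hqU (hzq ▸ hzU), hzS⟩)
  have hne : ∀ s, s ∈ U → s ≠ q := fun s hs hsq => hqU (hsq ▸ hs)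
  rcases h.blocks z hzU hzS with ⟨v, s, t, hst, hsU, hsS, htU, htS, hvs, hvt, hr⟩ | hr
  · have hv := hot.reach hd (hz.trans (hr.mono (Finset.erase_subset _ _)))
    exact hst (hv.eq_of_adj hd (Finset.mem_erase.2 ⟨hne s hsU, hsS⟩)
      (Finset.mem_erase.2 ⟨hne t htU, htS⟩) hvs hvt)
  · have key : ∀ y, G.Adj a y → y ∉ S₀ → q ∈ S₀ ∧ q ≠ a ∧ G.Adj y q := by
      intro y hay hy
      obtain ⟨-, -, o, hoS₀, hoS, hoa, hyo⟩ := h.start_neighbors y hay hy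
      have hv := hot.reach hd (hz.trans ((hr y hay hy).mono (Finset.erase_subset _ _)))
      by_cases hoq : o = q
      · exact hoq ▸ ⟨hoS₀, hoa, hyo⟩
      · exact absurd (hv.eq_of_adj hd (Finset.mem_erase.2 ⟨hoq, hoS⟩)
          (Finset.mem_erase.2 ⟨hne a h.start_visited, h.start_mem⟩) hyo hay.symm) hoa
    have hot₀ := hot_of_mem hS₀ ha hb hab
    have hcard := hot₀.card_outside hd
    rw [Finset.insert_erase ha] at hcard
    have hn := one_le_of_adj hf hab
    rcases hn.eq_or_lt with hn | hn
    · obtain ⟨y, hy⟩ := Finset.card_pos.1 (hcard.symm ▸ hn.le : 0 < _)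
      obtain ⟨-, hay, hy⟩ := Finset.mem_filter.1 hy
      have h1 := hf.2 _ (by simp) _ (by simp) hpq
      have h2 := hf.2 _ (by simp) _ (by simp) hay
      have h3 := hf.2 _ (by simp) _ (by simp) (key y hay hy).2.2
      have h4 := h.parity hn.symm
      have h5 := hf.1 a (by simp)
      have h6 := hf.1 y (by simp)
      have h7 := hf.1 q (by simp)
      omega
    · obtain ⟨y, hy, y', hy', hyy⟩ := Finset.one_lt_card.1 (hcard.symm ▸ hn)
      obtain ⟨-, hay, hy⟩ := Finset.mem_filter.1 hy
      obtain ⟨-, hay', hy'⟩ := Finset.mem_filter.1 hy'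
      have hyT : y ∉ S₀.erase a := fun h => hy (Finset.mem_of_mem_erase h)
      have hyT' : y' ∉ S₀.erase a := fun h => hy' (Finset.mem_of_mem_erase h)
      obtain ⟨hq₀, hqa, hyq⟩ := key y hay hy
      have hreach : Reach G (S₀.erase a) y' y :=
        (hot₀.reach_neighbors hd hay' hyT' hay hyT).mono (Finset.subset_insert _ _)
      exact hyy ((hot₀.step hd hay' hyT').eq_of_common hd hf hreach
        (Finset.mem_erase.2 ⟨hqa, hq₀⟩) (key y' hay' hy').2.2 hyq)

/-- The exchange process can always be continued. -/
lemma ExchangeState.next (hd : DegreeLE G (n + 1)) {f : V → ℕ}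
    (hf : IsColoringOff G (n + 1) ∅ f) {S₀ : Finset V} {a b : V} (hS₀ : IsOptimal G n S₀)
    (ha : a ∈ S₀) (hb : b ∈ S₀) (hab : G.Adj a b) {U : Set V} {S : Finset V} {p : V}
    (h : ExchangeState G n f S₀ a U S p) :
    ∃ U' S' p', U < U' ∧ ExchangeState G n f S₀ a U' S' p' := by
  classical
  obtain ⟨q, hq, hpq⟩ := h.exists_adj
  have hqU : q ∉ U := fun hqU => h.isolated q hqU hq hpq.ne' p h.mem hpq.symm
  have hdis : ∀ z, Reach G (S.erase q) q z → z ∉ U := fun z hz =>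
    h.disjoint hd hf hS₀ ha hb hab hq hpq hqU hz
  have hot := hot_of_mem h.optimal hq h.mem hpq.symm
  have hpT : p ∈ S.erase q := Finset.mem_erase.2 ⟨hpq.ne, h.mem⟩
  have hcard := hot.card_outside hd
  rw [Finset.insert_erase hq] at hcard
  obtain ⟨q', hq'⟩ := Finset.card_pos.1 (hcard.symm ▸ one_le_of_adj hf hab : 0 < _)
  obtain ⟨-, hqq', hq'S⟩ := Finset.mem_filter.1 hq'
  have hq'T : q' ∉ S.erase q := fun h => hq'S (Finset.mem_of_mem_erase h)
  have hreach' : Reach G (S.erase q) q q' := .single ⟨hqq', hq'T⟩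
  have hreach'q : Reach G (S.erase q) q' q := hreach'.symm hot.1
  have hot' := hot.step hd hqq' hq'T
  have hpq' : ¬ G.Adj q' p := fun hadj =>
    hqq'.ne' (hot.eq_of_common hd hf hreach' hpT hpq.symm hadj)
  have hq'U : q' ∉ U := hdis _ hreach'
  have hold : ∀ x ∈ U, x ∈ insert q' (S.erase q) ↔ x ∈ S := by
    intro x hx
    have h1 : x ≠ q' := fun e => hq'U (e ▸ hx)
    have h2 : x ≠ q := fun e => hqU (e ▸ hx)
    simp [h1, h2]
  have hnew : ∀ x, Reach G (S.erase q) q x → x ∈ insert q' (S.erase q) → x = q' := by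
    intro x hx hxS
    rcases Finset.mem_insert.1 hxS with h | h
    · exact h
    · exact absurd h (hx.not_mem hot.1)
  have hmono : ∀ z ∈ U, z ∉ S → ∀ v, Reach G S z v → Reach G (insert q' (S.erase q)) z v := by
    intro z hzU hzS v hr
    induction hr with
    | refl => exact .refl
    | @tail u v h₁ h₂ ih =>
      refine ih.tail ⟨h₂.1, ?_⟩
      have hv : v ≠ q' := by
        rintro rfl
        have : Reach G S z v := h₁.tail h₂
        exact hdis z (hreach'.trans ((this.symm hzS).mono (Finset.erase_subset _ _))) hzU
      simp [hv, h₂.2]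
  refine ⟨U ∪ {z | Reach G (S.erase q) q z}, insert q' (S.erase q), q', ?_, ?_⟩
  · refine (Set.ssubset_iff_of_subset Set.subset_union_left).2 ?_
    exact ⟨q, .inr .refl, hqU⟩
  refine ⟨hot'.2.1, Finset.mem_insert_self _ _, ?_, .inr hreach', .inl h.start_visited,
    (hold a h.start_visited).2 h.start_mem, ?_, ?_, ?_, ?_, ?_⟩
  · obtain ⟨w, hw, hqw⟩ := hot'.2.2
    exact ⟨w, Finset.mem_insert_of_mem hw, hqw⟩
  · rintro x (hxU | hx) hxS hne y hy hxy
    · have hxS' := (hold x hxU).1 hxS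
      rcases Finset.mem_insert.1 hy with rfl | hy
      · by_cases hxp : x = p
        · exact hpq' (hxp ▸ hxy.symm)
        · exact hq'U (h.neighbors x hxU hxS' _ hq'S hxy)
      · obtain ⟨hyq, hyS⟩ := Finset.mem_erase.1 hy
        by_cases hxp : x = p
        · subst hxp
          have hotp := hot_of_mem h.optimal h.mem hq hpq
          exact hyq (hotp.eq_of_adj hd (Finset.mem_erase.2 ⟨hxy.ne', hyS⟩)
            (Finset.mem_erase.2 ⟨hpq.ne', hq⟩) hxy hpq)
        · exact h.isolated x hxU hxS' hxp y hyS hxy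
    · exact hne (hnew x hx hxS)
  · rintro x (hxU | hx) hxS y hy hxy
    · by_cases hyq : y = q
      · exact .inr (hyq ▸ .refl)
      · refine .inl (h.neighbors x hxU ((hold x hxU).1 hxS) y (fun hyS => hy ?_) hxy)
        exact Finset.mem_insert_of_mem (Finset.mem_erase.2 ⟨hyq, hyS⟩)
    · exact .inr (ReflTransGen.tail hx ⟨hxy, fun hyT => hy (Finset.mem_insert_of_mem hyT)⟩)
  · rintro z (hzU | hz) hzS
    · have hzS' : z ∉ S := fun hh => hzS ((hold z hzU).2 hh)
      rcases h.blocks z hzU hzS' with ⟨v, s, t, hst, hsU, hsS, htU, htS, hvs, hvt, hr⟩ | hr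
      · exact .inl ⟨v, s, t, hst, .inl hsU, (hold s hsU).2 hsS, .inl htU, (hold t htU).2 htS,
          hvs, hvt, hmono z hzU hzS' v hr⟩
      · exact .inr fun y hay hy => hmono z hzU hzS' y (hr y hay hy)
    · refine .inl ⟨q, p, q', fun e => hq'S (e ▸ h.mem), .inl h.visited,
        Finset.mem_insert_of_mem hpT, .inr hreach', Finset.mem_insert_self _ _, hpq.symm, hqq', ?_⟩
      exact hot'.reach_avoiding hd (hreach'q.trans hz)
        (fun e => hzS (e ▸ Finset.mem_insert_self _ _)) hqq'.symm hot.1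
  · intro y hay hy
    obtain ⟨hyU, hyS, o, hoS₀, hoS, hoa, hyo⟩ := h.start_neighbors y hay hy
    refine ⟨.inl hyU, fun hh => hyS ((hold y hyU).1 hh), o, hoS₀, ?_, hoa, hyo⟩
    refine Finset.mem_insert_of_mem (Finset.mem_erase.2 ⟨?_, hoS⟩)
    rintro rfl
    exact hdis y (.single ⟨hyo.symm, fun hh => hyS (Finset.mem_of_mem_erase hh)⟩) hyU
  · intro hn
    have h1 := hf.2 _ (by simp) _ (by simp) hpq
    have h2 := hf.2 _ (by simp) _ (by simp) hqq'
    have h4 := h.parity hn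
    have h5 := hf.1 p (by simp)
    have h6 := hf.1 q (by simp)
    have h7 := hf.1 q' (by simp)
    omega

/-- An optimal deletion set is independent. -/
theorem IsOptimal.not_adj (hd : DegreeLE G (n + 1)) {f : V → ℕ}
    (hf : IsColoringOff G (n + 1) ∅ f) {S : Finset V} (hS : IsOptimal G n S) {a b : V}
    (ha : a ∈ S) (hb : b ∈ S) : ¬ G.Adj a b := by
  intro hab
  have key : ∀ U : Set V, ∀ T p, ¬ ExchangeState G n f S a U T p := by
    intro U
    induction U using WellFoundedGT.induction with
    | ind U ih =>
      intro T p h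
      obtain ⟨U', T', p', hlt, h'⟩ := h.next hd hf hS ha hb hab
      exact ih U' hlt T' p' h'
  exact key _ _ _ (ExchangeState.start hd hS ha hb hab)

end Core

lemma colorable_succ_of_independent {V : Type*} {G : SimpleGraph V} {n : ℕ} {S : Finset V}
    (hS : ColorableOff G n S) (hind : ∀ x ∈ S, ∀ y ∈ S, ¬ G.Adj x y) : G.Colorable (n + 1) := by
  classical
  obtain ⟨c, hc⟩ := hS
  refine ⟨SimpleGraph.Coloring.mk (fun v => if hv : v ∈ S then Fin.last n else
    Fin.castSucc ⟨c v, hc.1 v hv⟩) fun {u v} huv heq => ?_⟩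
  by_cases hu : u ∈ S <;> by_cases hv : v ∈ S
  · exact hind u hu v hv huv
  · simp [hu, hv, Fin.ext_iff] at heq
    have := hc.1 v hv
    omega
  · simp [hu, hv, Fin.ext_iff] at heq
    have := hc.1 u hu
    omega
  · simp [hu, hv] at heq
    exact hc.2 u hu v hv huv heq

section Chi

variable {V : Type*} [Fintype V] {G : SimpleGraph V}

lemma chi_le_iff {n : ℕ} : chi G ≤ n ↔ G.Colorable n := by
  have htop : G.chromaticNumber ≠ ⊤ :=
    SimpleGraph.chromaticNumber_ne_top_iff_exists.2 ⟨_, G.colorable_of_fintype⟩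
  rw [← SimpleGraph.chromaticNumber_le_iff_colorable, chi, ← ENat.natCast_toNat htop, Nat.cast_le,
    ENat.toNat_natCast]

lemma colorableOff_iff [DecidableEq V] {n : ℕ} {S : Finset V} :
    ColorableOff G n S ↔ (G.induce (↑(Sᶜ) : Set V)).Colorable n := by
  classical
  constructor
  · rintro ⟨c, hc⟩
    have hmem : ∀ v : (↑(Sᶜ) : Set V), (v : V) ∉ S := fun v => by simpa using v.2
    exact ⟨SimpleGraph.Coloring.mk (fun v => ⟨c v, hc.1 v (hmem v)⟩) fun {u v} huv heq =>
      hc.2 u (hmem u) v (hmem v) huv (congrArg Fin.val heq)⟩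
  · rintro ⟨C⟩
    have hmem : ∀ {v}, v ∉ S → v ∈ (↑(Sᶜ) : Set V) := fun {v} hv => by simpa using hv
    refine ⟨fun v => if hv : v ∉ S then (C ⟨v, hmem hv⟩ : ℕ) else 0, fun a ha => ?_,
      fun a ha b hb hab => ?_⟩
    · simp [ha]
    · have : C ⟨a, hmem ha⟩ ≠ C ⟨b, hmem hb⟩ := C.valid hab
      simpa [ha, hb, Fin.val_inj] using this

lemma degreeLE_maxDeg : DegreeLE G (maxDeg G) := by
  intro v A hA
  let _ := Classical.decRel G.Adj
  refine le_trans (Finset.card_le_card fun a ha => ?_) (G.degree_le_maxDegree v)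
  exact (G.mem_neighborFinset v a).2 (hA a ha)

end Chi

end ChromaticStability

open ChromaticStability in
/-- If `G` is a nonempty finite simple graph with `χ(G) ∈ {Δ(G), Δ(G)+1}`,
then `vs_χ(G) = ivs_χ(G)`. -/
theorem stmt_0 {V : Type*} [Fintype V] [DecidableEq V] [Nonempty V] (G : SimpleGraph V)
    (h : chi G = maxDeg G ∨ chi G = maxDeg G + 1) :
    vsChi G = ivsChi G := by
  have hpos : 1 ≤ chi G := by
    by_contra hlt
    obtain ⟨C⟩ := chi_le_iff.1 (show chi G ≤ 0 by omega)
    exact (C (Classical.arbitrary V)).elim0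
  obtain ⟨n, hn⟩ : ∃ n, chi G = n + 1 := ⟨chi G - 1, by omega⟩
  have hd : DegreeLE G (n + 1) := fun v A hA => (degreeLE_maxDeg v A hA).trans (by omega)
  obtain ⟨C⟩ := chi_le_iff.1 hn.le
  have hf : IsColoringOff G (n + 1) ∅ fun v => (C v : ℕ) :=
    ⟨fun a _ => (C a).2, fun a _ b _ hab heq => C.valid hab (Fin.ext heq)⟩
  obtain ⟨S, hS⟩ := exists_isOptimal (G := G) (n := n)
  have hind : ∀ x ∈ S, ∀ y ∈ S, ¬ G.Adj x y := fun x hx y hy => hS.not_adj hd hf hx hy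
  have hchi : chi (G.induce (↑(Sᶜ) : Set V)) = chi G - 1 := by
    refine le_antisymm (chi_le_iff.2 ?_) ?_
    · rw [hn]
      exact colorableOff_iff.1 hS.1.1
    · have := chi_le_iff.2 (colorable_succ_of_independent
        (colorableOff_iff.2 (chi_le_iff.1 (le_refl (chi (G.induce (↑(Sᶜ) : Set V)))))) hind)
      omega
  have hivs : ivsChi G ≤ S.card := Nat.sInf_le ⟨S, rfl, hind, hchi⟩
  refine le_antisymm ?_ (hivs.trans ?_)
  · obtain ⟨S', hcard, -, hS'⟩ := Nat.sInf_mem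
      (show {m : ℕ | ∃ S : Finset V, S.card = m ∧ (∀ x ∈ S, ∀ y ∈ S, ¬ G.Adj x y) ∧
        chi (G.induce (↑(Sᶜ) : Set V)) = chi G - 1}.Nonempty from ⟨_, S, rfl, hind, hchi⟩)
    exact Nat.sInf_le ⟨S', hcard, hS'⟩
  · obtain ⟨S', hcard, hS'⟩ := Nat.sInf_mem
      (show {m : ℕ | ∃ S : Finset V, S.card = m ∧
        chi (G.induce (↑(Sᶜ) : Set V)) = chi G - 1}.Nonempty from ⟨_, S, rfl, hchi⟩)
    have := hS.1.2 S' (colorableOff_iff.2 (chi_le_iff.1 (by omega)))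
    exact this.trans hcard.le
end

section
/- For every natural number n ≥ 11, there exist at least 2^⌊(n−11)/2⌋ pairwise non-isomorphic finite simple graphs G on n vertices with Δ(G) = 4, χ(G) = 3, ivs_χ(G) = 3 and vs_χ(G) = 2. -/
namespace StabilityGraph

/-- The edges `u < v` of a graph on `ℕ`: a core on `{0, …, 8}`, a path `8, 9, 11, 13, …`, and for
each `i` with `x i = 1` a pendant edge from `9 + 2 * i` to `10 + 2 * i`. -/
def Edge (x : ℕ → ℕ) (u v : ℕ) : Prop :=
  (u = 0 ∧ (v = 1 ∨ v = 4 ∨ v = 6 ∨ v = 8)) ∨ (u = 1 ∧ (v = 4 ∨ v = 5 ∨ v = 7)) ∨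
  (u = 2 ∧ (v = 5 ∨ v = 6)) ∨ (u = 3 ∧ (v = 6 ∨ v = 7)) ∨ (u = 4 ∧ (v = 6 ∨ v = 8)) ∨
  (u = 8 ∧ v = 9) ∨ (9 ≤ u ∧ u % 2 = 1 ∧ v = u + 2) ∨
  (9 ≤ u ∧ u % 2 = 1 ∧ v = u + 1 ∧ x ((u - 9) / 2) = 1)

lemma Edge.lt {x : ℕ → ℕ} {u v : ℕ} (h : Edge x u v) : u < v := by
  unfold Edge at h
  omega

/-- The graph on `Fin n` whose edges are given by `Edge x`. -/
def graph (n : ℕ) (x : ℕ → ℕ) : SimpleGraph (Fin n) where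
  Adj u v := Edge x u v ∨ Edge x v u
  symm := ⟨fun _ _ h => h.symm⟩
  loopless := ⟨fun _ h => h.elim (fun h => h.lt.ne rfl) (fun h => h.lt.ne rfl)⟩

variable {n : ℕ} {x y : ℕ → ℕ}

lemma graph_adj {u v : Fin n} : (graph n x).Adj u v ↔ Edge x u v ∨ Edge x v u := Iff.rfl

/-! ### Degrees -/

/-- Membership in the set of vertices of degree four. -/
def IsHub (v : ℕ) : Prop := v = 0 ∨ v = 1 ∨ v = 4 ∨ v = 6

lemma ncard_neighborSet_le (v : Fin n) (s : Finset ℕ)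
    (hs : ∀ w : Fin n, (graph n x).Adj v w → (w : ℕ) ∈ s) :
    ((graph n x).neighborSet v).ncard ≤ s.card := by
  rw [← Set.ncard_image_of_injective _ Fin.val_injective, ← Set.ncard_coe_finset s]
  refine Set.ncard_le_ncard ?_ s.finite_toSet
  rintro _ ⟨w, hw, rfl⟩
  exact hs w hw

lemma le_ncard_neighborSet (v : Fin n) (s : Finset ℕ) (hsn : ∀ w ∈ s, w < n)
    (hs : ∀ w : Fin n, (w : ℕ) ∈ s → (graph n x).Adj v w) :
    s.card ≤ ((graph n x).neighborSet v).ncard := by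
  rw [← Set.ncard_image_of_injective _ Fin.val_injective, ← Set.ncard_coe_finset s]
  refine Set.ncard_le_ncard ?_ (Set.toFinite _)
  intro w hw
  exact ⟨⟨w, hsn w hw⟩, hs ⟨w, hsn w hw⟩ hw, rfl⟩

lemma ncard_neighborSet_of_isHub (hn : 9 ≤ n) (v : Fin n) (hv : IsHub v) :
    ((graph n x).neighborSet v).ncard = 4 := by
  have key : ∀ s : Finset ℕ, s.card = 4 → (∀ w ∈ s, w < 9) →
      (∀ w : Fin n, (graph n x).Adj v w ↔ (w : ℕ) ∈ s) →
      ((graph n x).neighborSet v).ncard = 4 := fun s h4 h9 h =>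
    le_antisymm (h4 ▸ ncard_neighborSet_le v s fun w => (h w).1)
      (h4 ▸ le_ncard_neighborSet v s (fun w hw => (h9 w hw).trans_le hn) fun w => (h w).2)
  obtain ⟨v, hvn⟩ := v
  simp only [IsHub] at hv
  rcases hv with rfl | rfl | rfl | rfl
  · refine key {1, 4, 6, 8} rfl (by simp) fun w => ?_
    simp only [graph_adj, Edge, Finset.mem_insert, Finset.mem_singleton]
    exact ⟨fun h => by omega, by rintro (h | h | h | h) <;> simp [h]⟩
  · refine key {0, 4, 5, 7} rfl (by simp) fun w => ?_
    simp only [graph_adj, Edge, Finset.mem_insert, Finset.mem_singleton]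
    exact ⟨fun h => by omega, by rintro (h | h | h | h) <;> simp [h]⟩
  · refine key {0, 1, 6, 8} rfl (by simp) fun w => ?_
    simp only [graph_adj, Edge, Finset.mem_insert, Finset.mem_singleton]
    exact ⟨fun h => by omega, by rintro (h | h | h | h) <;> simp [h]⟩
  · refine key {0, 2, 3, 4} rfl (by simp) fun w => ?_
    simp only [graph_adj, Edge, Finset.mem_insert, Finset.mem_singleton]
    exact ⟨fun h => by omega, by rintro (h | h | h | h) <;> simp [h]⟩

lemma ncard_neighborSet_of_not_isHub (v : Fin n) (hv : ¬ IsHub v) :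
    ((graph n x).neighborSet v).ncard ≤ 3 := by
  have key : ∀ a b c : ℕ,
      (∀ w : Fin n, (graph n x).Adj v w → (w : ℕ) = a ∨ (w : ℕ) = b ∨ (w : ℕ) = c) →
      ((graph n x).neighborSet v).ncard ≤ 3 := fun a b c h =>
    (ncard_neighborSet_le v {a, b, c} fun w hw => by simpa using h w hw).trans
      Finset.card_le_three
  obtain ⟨v, hvn⟩ := v
  simp only [graph_adj, Edge, IsHub] at key hv
  by_cases h9 : 9 < v
  · exact key (v - 2) (if v % 2 = 1 then v + 1 else v - 1) (v + 2) fun w hw => by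
      split_ifs <;> omega
  · obtain rfl | rfl | rfl | rfl | rfl | rfl : v = 2 ∨ v = 3 ∨ v = 5 ∨ v = 7 ∨ v = 8 ∨ v = 9 := by
      omega
    · exact key 5 6 6 fun w hw => by omega
    · exact key 6 7 7 fun w hw => by omega
    · exact key 1 2 2 fun w hw => by omega
    · exact key 1 3 3 fun w hw => by omega
    · exact key 0 4 9 fun w hw => by omega
    · exact key 8 10 11 fun w hw => by omega

lemma ncard_neighborSet_eq_four_iff (hn : 9 ≤ n) (v : Fin n) :
    ((graph n x).neighborSet v).ncard = 4 ↔ IsHub v := by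
  refine ⟨fun h => ?_, ncard_neighborSet_of_isHub hn v⟩
  by_contra hv
  have := ncard_neighborSet_of_not_isHub (x := x) v hv
  omega

lemma maxDeg_graph (hn : 9 ≤ n) : maxDeg (graph n x) = 4 := by
  classical
  have hdeg : ∀ v, (graph n x).degree v = ((graph n x).neighborSet v).ncard := fun v => by
    rw [← SimpleGraph.card_neighborSet_eq_degree, Set.ncard_eq_toFinset_card',
      Set.toFinset_card]
  have hmax : maxDeg (graph n x) = (graph n x).maxDegree := by
    unfold maxDeg
    congr!
  rw [hmax]
  refine le_antisymm (SimpleGraph.maxDegree_le_of_forall_degree_le _ _ fun v => ?_) ?_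
  · rw [hdeg]
    by_cases hv : IsHub v
    · exact (ncard_neighborSet_of_isHub hn v hv).le
    · exact (ncard_neighborSet_of_not_isHub v hv).trans (by norm_num)
  · rw [← ncard_neighborSet_of_isHub (x := x) hn ⟨0, by omega⟩ (Or.inl rfl), ← hdeg]
    exact SimpleGraph.degree_le_maxDegree _ _

/-! ### Isomorphisms -/

/-- The vertices at distance at most `j` from the set of vertices of degree four. -/
def Near (x : ℕ → ℕ) (j v : ℕ) : Prop :=
  IsHub v ∨ (v < 9 ∧ 1 ≤ j) ∨ (9 ≤ v ∧ v % 2 = 1 ∧ (v - 9) / 2 + 2 ≤ j) ∨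
  (9 ≤ v ∧ v % 2 = 0 ∧ x ((v - 10) / 2) = 1 ∧ (v - 10) / 2 + 3 ≤ j)

lemma near_zero {v : ℕ} : Near x 0 v ↔ IsHub v := by
  unfold Near IsHub
  omega

lemma near_succ (hn : 9 ≤ n) (j : ℕ) (v : Fin n) :
    Near x (j + 1) v ↔ Near x j v ∨ ∃ w, (graph n x).Adj v w ∧ Near x j w := by
  obtain ⟨v, hv⟩ := v
  constructor
  · intro h
    change Near x (j + 1) v at h
    have go : ∀ w, w < v ∨ w < 9 → (Edge x v w ∨ Edge x w v) → Near x j w →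
        Near x j v ∨ ∃ w : Fin n, (graph n x).Adj ⟨v, hv⟩ w ∧ Near x j w :=
      fun w hw he hj => Or.inr ⟨⟨w, by omega⟩, he, hj⟩
    rcases h with h | ⟨h, -⟩ | ⟨h, h1, h2⟩ | ⟨h, h1, h2, h3⟩
    · exact Or.inl (Or.inl h)
    · by_cases hh : IsHub v
      · exact Or.inl (Or.inl hh)
      unfold IsHub at hh
      obtain rfl | rfl | rfl | rfl | rfl : v = 2 ∨ v = 3 ∨ v = 5 ∨ v = 7 ∨ v = 8 := by omega
      · exact go 6 (by simp) (by simp [Edge]) (by simp [Near, IsHub])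
      · exact go 6 (by simp) (by simp [Edge]) (by simp [Near, IsHub])
      · exact go 1 (by simp) (by simp [Edge]) (by simp [Near, IsHub])
      · exact go 1 (by simp) (by simp [Edge]) (by simp [Near, IsHub])
      · exact go 0 (by simp) (by simp [Edge]) (by simp [Near, IsHub])
    · by_cases h9 : v = 9
      · subst h9
        exact go 8 (by simp) (by simp [Edge]) (Or.inr (Or.inl ⟨by simp, by omega⟩))
      · exact go (v - 2) (by omega) (Or.inr (by unfold Edge; omega))
          (Or.inr (Or.inr (Or.inl (by omega))))
    · have hx : x ((v - 1 - 9) / 2) = 1 := by rwa [show v - 1 - 9 = v - 10 by omega]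
      exact go (v - 1) (by omega) (Or.inr (by unfold Edge; omega))
        (Or.inr (Or.inr (Or.inl (by omega))))
  · rintro (h | ⟨⟨w, hw⟩, he, h⟩)
    · unfold Near IsHub at h ⊢
      omega
    · simp only [graph_adj, Edge] at he
      simp only [Near, IsHub] at h ⊢
      have hx : v = w + 1 → x ((w - 9) / 2) = x ((v - 10) / 2) := by
        rintro rfl
        rw [show w + 1 - 10 = w - 9 by omega]
      rcases he with (he | he | he | he | he | he | he | he) |
        (he | he | he | he | he | he | he | he) <;> omega

lemma near_iso (hn : 9 ≤ n) (φ : graph n x ≃g graph n y) (j : ℕ) (v : Fin n) :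
    Near x j v ↔ Near y j (φ v) := by
  induction j generalizing v with
  | zero =>
    rw [near_zero, near_zero, ← ncard_neighborSet_eq_four_iff (x := x) hn,
      ← ncard_neighborSet_eq_four_iff (x := y) hn, ← Nat.card_coe_set_eq, ← Nat.card_coe_set_eq,
      Nat.card_congr (φ.mapNeighborSet v)]
  | succ j ih =>
    rw [near_succ hn, near_succ hn, ih v]
    refine or_congr_right ⟨?_, ?_⟩
    · rintro ⟨w, hw, h⟩
      exact ⟨φ w, φ.map_adj_iff.2 hw, (ih w).1 h⟩
    · rintro ⟨w, hw, h⟩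
      refine ⟨φ.symm w, ?_, ?_⟩
      · rw [← φ.map_adj_iff, φ.apply_symm_apply]
        exact hw
      · rw [ih, φ.apply_symm_apply]
        exact h

lemma imp_of_iso (hn : 9 ≤ n) (φ : graph n x ≃g graph n y) {i : ℕ} (hi : 10 + 2 * i < n)
    (hlt : ∀ k < i, x k = 1 ↔ y k = 1) (hx : x i = 1) : y i = 1 := by
  by_contra hy
  let A (z : ℕ → ℕ) : Set (Fin n) := {v | Near z (i + 3) v}
  have hcard : (A x).ncard = (A y).ncard := by
    rw [← Set.ncard_image_of_injective (A x) φ.injective]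
    congr 1
    ext v
    constructor
    · rintro ⟨w, hw, rfl⟩
      exact (near_iso hn φ _ w).1 hw
    · intro hv
      refine ⟨φ.symm v, ?_, φ.apply_symm_apply v⟩
      rw [Set.mem_ofPred_eq, near_iso hn φ, φ.apply_symm_apply]
      exact hv
  have hss : A y ⊂ A x := by
    refine ⟨fun v hv => ?_, fun h => ?_⟩
    · simp only [A, Set.mem_ofPred_eq, Near] at hv ⊢
      rcases hv with hv | hv | hv | ⟨h9, h2, hyv, hle⟩
      · tauto
      · tauto
      · tauto
      · have hne : ((v : ℕ) - 10) / 2 ≠ i := fun h => hy (h ▸ hyv)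
        exact Or.inr (Or.inr (Or.inr ⟨h9, h2, (hlt _ (by omega)).2 hyv, hle⟩))
    · have hi2 : (10 + 2 * i - 10) / 2 = i := by omega
      have hmem : (⟨10 + 2 * i, hi⟩ : Fin n) ∈ A x := by
        refine Or.inr (Or.inr (Or.inr ⟨?_, ?_, ?_, ?_⟩)) <;> simp only [hi2]
        · omega
        · omega
        · exact hx
        · omega
      have hmem' : Near y (i + 3) (10 + 2 * i) := h hmem
      unfold Near IsHub at hmem'
      rw [hi2] at hmem'
      omega
  exact (Set.ncard_lt_ncard hss (Set.toFinite _)).ne' hcard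

lemma iff_of_iso (hn : 9 ≤ n) (φ : graph n x ≃g graph n y) (i : ℕ) (hi : 10 + 2 * i < n) :
    x i = 1 ↔ y i = 1 := by
  induction i using Nat.strong_induction_on with
  | _ i ih =>
    have hlt : ∀ k < i, x k = 1 ↔ y k = 1 := fun k hk => ih k hk (by omega)
    exact ⟨imp_of_iso hn φ hi hlt, imp_of_iso hn φ.symm hi fun k hk => (hlt k hk).symm⟩

/-! ### Colourings -/

lemma chi_eq_succ {V : Type*} [Fintype V] {G : SimpleGraph V} {k : ℕ}
    (h : G.Colorable (k + 1)) (h' : ¬ G.Colorable k) : chi G = k + 1 := by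
  have : G.chromaticNumber = ((k + 1 : ℕ) : ℕ∞) := by
    refine le_antisymm h.chromaticNumber_le ?_
    rw [Nat.cast_add, Nat.cast_one, ENat.add_one_le_iff (ENat.natCast_ne_top k), ← not_le]
    exact fun hle => h' (SimpleGraph.chromaticNumber_le_iff_colorable.1 hle)
  rw [chi, this, ENat.toNat_natCast]

lemma colorable_chi {V : Type*} [Fintype V] (G : SimpleGraph V) : G.Colorable (chi G) :=
  SimpleGraph.colorable_chromaticNumber G.colorable_of_fintype

/-- No odd closed walk of length three survives in a two-colourable graph. -/
lemma not_colorable_two_of_triangle {V : Type*} {G : SimpleGraph V} {a b c : V}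
    (hab : G.Adj a b) (hbc : G.Adj b c) (hca : G.Adj c a) : ¬ G.Colorable 2 := by
  rintro ⟨C⟩
  have h1 := C.valid hab
  have h2 := C.valid hbc
  have h3 := C.valid hca
  omega

/-- No odd closed walk of length five survives in a two-colourable graph. -/
lemma not_colorable_two_of_pentagon {V : Type*} {G : SimpleGraph V} {a b c d e : V}
    (hab : G.Adj a b) (hbc : G.Adj b c) (hcd : G.Adj c d) (hde : G.Adj d e) (hea : G.Adj e a) :
    ¬ G.Colorable 2 := by
  rintro ⟨C⟩
  have h1 := C.valid hab
  have h2 := C.valid hbc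
  have h3 := C.valid hcd
  have h4 := C.valid hde
  have h5 := C.valid hea
  omega

/-- Deleting at most two vertices that are equal or non-adjacent leaves an odd cycle. -/
lemma not_colorable_two_of_avoid (hn : 9 ≤ n) (s : Set (Fin n)) (p q : Fin n)
    (hpq : ¬ (graph n x).Adj p q) (hs : ∀ v, v ≠ p → v ≠ q → v ∈ s) :
    ¬ ((graph n x).induce s).Colorable 2 := by
  have mem : ∀ v : ℕ, (h : v < 9) → v ≠ p → v ≠ q → (⟨v, by omega⟩ : Fin n) ∈ s :=
    fun v h hp hq => hs _ (fun h => hp (congrArg Fin.val h)) (fun h => hq (congrArg Fin.val h))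
  have tri : ∀ a b c : ℕ, a < 9 → b < 9 → c < 9 →
      (∀ v : ℕ, v = a ∨ v = b ∨ v = c → v ≠ p ∧ v ≠ q) →
      (Edge x a b ∨ Edge x b a) → (Edge x b c ∨ Edge x c b) → (Edge x c a ∨ Edge x a c) →
      ¬ ((graph n x).induce s).Colorable 2 := by
    intro a b c ha hb hc hv hab hbc hca
    have m : ∀ v : ℕ, (h : v < 9) → (v = a ∨ v = b ∨ v = c) → (⟨v, by omega⟩ : Fin n) ∈ s :=
      fun v h hv' => mem v h (hv v hv').1 (hv v hv').2
    exact not_colorable_two_of_triangle (G := (graph n x).induce s)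
      (a := ⟨_, m a ha (by simp)⟩) (b := ⟨_, m b hb (by simp)⟩) (c := ⟨_, m c hc (by simp)⟩)
      hab hbc hca
  have pent : ∀ a b c d e : ℕ, a < 9 → b < 9 → c < 9 → d < 9 → e < 9 →
      (∀ v : ℕ, v = a ∨ v = b ∨ v = c ∨ v = d ∨ v = e → v ≠ p ∧ v ≠ q) →
      (Edge x a b ∨ Edge x b a) → (Edge x b c ∨ Edge x c b) → (Edge x c d ∨ Edge x d c) →
      (Edge x d e ∨ Edge x e d) → (Edge x e a ∨ Edge x a e) →
      ¬ ((graph n x).induce s).Colorable 2 := by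
    intro a b c d e ha hb hc hd he hv hab hbc hcd hde hea
    have m : ∀ v : ℕ, (h : v < 9) → (v = a ∨ v = b ∨ v = c ∨ v = d ∨ v = e) →
        (⟨v, by omega⟩ : Fin n) ∈ s :=
      fun v h hv' => mem v h (hv v hv').1 (hv v hv').2
    exact not_colorable_two_of_pentagon (G := (graph n x).induce s)
      (a := ⟨_, m a ha (by simp)⟩) (b := ⟨_, m b hb (by simp)⟩) (c := ⟨_, m c hc (by simp)⟩)
      (d := ⟨_, m d hd (by simp)⟩) (e := ⟨_, m e he (by simp)⟩) hab hbc hcd hde hea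
  have nonadj : ∀ a b : ℕ, Edge x a b → ¬ ((p : ℕ) = a ∧ (q : ℕ) = b) ∧
      ¬ ((p : ℕ) = b ∧ (q : ℕ) = a) := by
    intro a b h
    constructor <;> rintro ⟨rfl, rfl⟩
    · exact hpq (Or.inl h)
    · exact hpq (Or.inr h)
  have h01 : Edge x 0 1 := by simp [Edge]
  have h04 : Edge x 0 4 := by simp [Edge]
  have h06 : Edge x 0 6 := by simp [Edge]
  have h08 : Edge x 0 8 := by simp [Edge]
  have h14 : Edge x 1 4 := by simp [Edge]
  have h15 : Edge x 1 5 := by simp [Edge]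
  have h17 : Edge x 1 7 := by simp [Edge]
  have h25 : Edge x 2 5 := by simp [Edge]
  have h26 : Edge x 2 6 := by simp [Edge]
  have h36 : Edge x 3 6 := by simp [Edge]
  have h37 : Edge x 3 7 := by simp [Edge]
  have h46 : Edge x 4 6 := by simp [Edge]
  have h48 : Edge x 4 8 := by simp [Edge]
  by_cases h0 : (p : ℕ) = 0 ∨ (q : ℕ) = 0
  · have n1 := nonadj 0 1 h01
    have n4 := nonadj 0 4 h04
    have n6 := nonadj 0 6 h06
    by_cases h52 : ((p : ℕ) = 5 ∨ (p : ℕ) = 2) ∨ ((q : ℕ) = 5 ∨ (q : ℕ) = 2)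
    · exact pent 1 7 3 6 4 (by decide) (by decide) (by decide) (by decide) (by decide)
        (fun v hv => by omega) (Or.inl h17) (Or.inr h37) (Or.inl h36) (Or.inr h46) (Or.inr h14)
    · exact pent 1 5 2 6 4 (by decide) (by decide) (by decide) (by decide) (by decide)
        (fun v hv => by omega) (Or.inl h15) (Or.inr h25) (Or.inl h26) (Or.inr h46) (Or.inr h14)
  by_cases h4 : (p : ℕ) = 4 ∨ (q : ℕ) = 4
  · have n1 := nonadj 1 4 h14
    have n6 := nonadj 4 6 h46
    by_cases h52 : ((p : ℕ) = 5 ∨ (p : ℕ) = 2) ∨ ((q : ℕ) = 5 ∨ (q : ℕ) = 2)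
    · exact pent 1 7 3 6 0 (by decide) (by decide) (by decide) (by decide) (by decide)
        (fun v hv => by omega) (Or.inl h17) (Or.inr h37) (Or.inl h36) (Or.inr h06) (Or.inl h01)
    · exact pent 1 5 2 6 0 (by decide) (by decide) (by decide) (by decide) (by decide)
        (fun v hv => by omega) (Or.inl h15) (Or.inr h25) (Or.inl h26) (Or.inr h06) (Or.inl h01)
  by_cases h1 : (p : ℕ) = 1 ∨ (q : ℕ) = 1
  · by_cases h6 : (p : ℕ) = 6 ∨ (q : ℕ) = 6
    · exact tri 0 4 8 (by decide) (by decide) (by decide)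
        (fun v hv => by omega) (Or.inl h04) (Or.inl h48) (Or.inr h08)
    · exact tri 0 4 6 (by decide) (by decide) (by decide)
        (fun v hv => by omega) (Or.inl h04) (Or.inl h46) (Or.inr h06)
  · exact tri 0 1 4 (by decide) (by decide) (by decide)
      (fun v hv => by omega) (Or.inl h01) (Or.inl h14) (Or.inr h04)

lemma not_colorable_two (hn : 9 ≤ n) : ¬ (graph n x).Colorable 2 := fun h =>
  not_colorable_two_of_avoid (x := x) hn Set.univ ⟨0, by omega⟩ ⟨0, by omega⟩
    (SimpleGraph.irrefl _) (fun _ _ _ => trivial)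
    (h.of_hom (SimpleGraph.Embedding.induce (G := graph n x) Set.univ).toHom)

/-- A proper colouring of the graph obtained by deleting the vertices `0`, `5` and `7`. -/
def tripleColor (v : ℕ) : ℕ :=
  if v = 1 ∨ v = 6 ∨ v = 8 then 1 else if v < 9 then 0 else v / 2 % 2

/-- A proper colouring of the graph obtained by deleting the vertices `0` and `4`. -/
def pairColor (v : ℕ) : ℕ :=
  if v = 1 ∨ v = 2 ∨ v = 3 ∨ v = 8 then 1 else if v < 9 then 0 else v / 2 % 2

lemma tripleColor_lt (v : ℕ) : tripleColor v < 2 := by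
  unfold tripleColor
  split_ifs <;> omega

lemma pairColor_lt (v : ℕ) : pairColor v < 2 := by
  unfold pairColor
  split_ifs <;> omega

lemma tripleColor_ne {u v : ℕ} (h : Edge x u v) (hu : ¬ (u = 0 ∨ u = 5 ∨ u = 7))
    (hv : ¬ (v = 0 ∨ v = 5 ∨ v = 7)) : tripleColor u ≠ tripleColor v := by
  unfold tripleColor
  unfold Edge at h
  split_ifs <;> omega

lemma pairColor_ne {u v : ℕ} (h : Edge x u v) (hu : ¬ (u = 0 ∨ u = 4))
    (hv : ¬ (v = 0 ∨ v = 4)) : pairColor u ≠ pairColor v := by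
  unfold pairColor
  unfold Edge at h
  split_ifs <;> omega

lemma not_both_mem_triple {u v : ℕ} (h : Edge x u v) (hu : u = 0 ∨ u = 5 ∨ u = 7)
    (hv : v = 0 ∨ v = 5 ∨ v = 7) : False := by
  unfold Edge at h
  omega

lemma colorable_three : (graph n x).Colorable 3 := by
  let C (v : ℕ) : ℕ := if v = 0 ∨ v = 5 ∨ v = 7 then 2 else tripleColor v
  have hC : ∀ v, C v < 3 := fun v => by
    have := tripleColor_lt v
    simp only [C]
    split_ifs <;> omega
  have hne : ∀ u v, Edge x u v → C u ≠ C v := fun u v h => by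
    have hu := tripleColor_lt u
    have hv := tripleColor_lt v
    simp only [C]
    split_ifs with h1 h2 h2
    · exact (not_both_mem_triple h h1 h2).elim
    · omega
    · omega
    · exact tripleColor_ne h h1 h2
  refine ⟨SimpleGraph.Coloring.mk (fun v => ⟨C v, hC v⟩) ?_⟩
  rintro u v (h | h) heq
  · exact hne _ _ h (congrArg Fin.val heq)
  · exact hne _ _ h (congrArg Fin.val heq).symm

lemma chi_graph (hn : 9 ≤ n) : chi (graph n x) = 3 :=
  chi_eq_succ colorable_three (not_colorable_two hn)

lemma chi_induce_eq_two {s : Set (Fin n)} (C : ℕ → ℕ) (hC : ∀ v, C v < 2)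
    (hne : ∀ u ∈ s, ∀ v ∈ s, Edge x u v → C u ≠ C v) [Fintype s]
    {a b : Fin n} (ha : a ∈ s) (hb : b ∈ s) (hab : Edge x a b) :
    chi ((graph n x).induce s) = 2 := by
  refine chi_eq_succ ⟨SimpleGraph.Coloring.mk (fun v => ⟨C v, hC v⟩) ?_⟩ ?_
  · rintro ⟨u, hu⟩ ⟨v, hv⟩ (h | h) heq
    · exact hne _ hu _ hv h (congrArg Fin.val heq)
    · exact hne _ hv _ hu h (congrArg Fin.val heq).symm
  · rintro ⟨D⟩
    have : ((graph n x).induce s).Adj ⟨a, ha⟩ ⟨b, hb⟩ := Or.inl hab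
    exact D.valid this (Subsingleton.elim _ _)

lemma vsChi_graph (hn : 9 ≤ n) : vsChi (graph n x) = 2 := by
  unfold vsChi
  rw [chi_graph hn]
  refine IsLeast.csInf_eq ⟨⟨{⟨0, by omega⟩, ⟨4, by omega⟩}, ?_, ?_⟩, ?_⟩
  · exact Finset.card_pair (by simp)
  · refine chi_induce_eq_two (a := ⟨1, by omega⟩) (b := ⟨5, by omega⟩) pairColor pairColor_lt ?_
      (by simp) (by simp) (by simp [Edge])
    intro u hu v hv h
    simp only [Finset.coe_compl, Finset.coe_insert, Finset.coe_singleton, Set.mem_compl_iff,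
      Set.mem_insert_iff, Set.mem_singleton_iff, Fin.ext_iff] at hu hv
    exact pairColor_ne h hu hv
  · rintro m ⟨S, rfl, hS⟩
    by_contra! hlt
    obtain ⟨p, hp⟩ : ∃ p, S ⊆ {p} :=
      haveI : Nonempty (Fin n) := ⟨⟨0, by omega⟩⟩
      Finset.card_le_one_iff_subset_singleton.1 (Nat.lt_succ_iff.1 hlt)
    refine not_colorable_two_of_avoid (x := x) hn (↑Sᶜ) p p (SimpleGraph.irrefl _) ?_ ?_
    · intro v hv _
      simpa using fun h => hv (Finset.mem_singleton.1 (hp h))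
    · have := colorable_chi ((graph n x).induce (↑Sᶜ : Set (Fin n)))
      rwa [hS] at this

lemma ivsChi_graph (hn : 9 ≤ n) : ivsChi (graph n x) = 3 := by
  unfold ivsChi
  rw [chi_graph hn]
  refine IsLeast.csInf_eq ⟨⟨{⟨0, by omega⟩, ⟨5, by omega⟩, ⟨7, by omega⟩}, ?_, ?_, ?_⟩, ?_⟩
  · exact Finset.card_eq_three.2 ⟨_, _, _, by simp, by simp, by simp, rfl⟩
  · intro u hu v hv h
    simp only [Finset.mem_insert, Finset.mem_singleton, Fin.ext_iff] at hu hv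
    exact h.elim (not_both_mem_triple · hu hv) (not_both_mem_triple · hv hu)
  · refine chi_induce_eq_two (a := ⟨1, by omega⟩) (b := ⟨4, by omega⟩) tripleColor
      tripleColor_lt ?_ (by simp) (by simp) (by simp [Edge])
    intro u hu v hv h
    simp only [Finset.coe_compl, Finset.coe_insert, Finset.coe_singleton, Set.mem_compl_iff,
      Set.mem_insert_iff, Set.mem_singleton_iff, Fin.ext_iff] at hu hv
    exact tripleColor_ne h hu hv
  · rintro m ⟨S, rfl, hind, hS⟩
    by_contra! hlt
    obtain ⟨p, q, hpq, hsub⟩ : ∃ p q, ¬ (graph n x).Adj p q ∧ S ⊆ {p, q} := by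
      obtain h | h := (Nat.lt_succ_iff.1 hlt).lt_or_eq
      · obtain ⟨p, hp⟩ : ∃ p, S ⊆ {p} :=
          haveI : Nonempty (Fin n) := ⟨⟨0, by omega⟩⟩
          Finset.card_le_one_iff_subset_singleton.1 (Nat.lt_succ_iff.1 h)
        exact ⟨p, p, SimpleGraph.irrefl _, by simpa using hp⟩
      · obtain ⟨p, q, -, rfl⟩ := Finset.card_eq_two.1 h
        exact ⟨p, q, hind p (by simp) q (by simp), subset_rfl⟩
    refine not_colorable_two_of_avoid (x := x) hn (↑Sᶜ) p q hpq ?_ ?_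
    · intro v hvp hvq
      have hv : v ∉ S := fun h => by simpa [hvp, hvq] using hsub h
      simpa using hv
    · have := colorable_chi ((graph n x).induce (↑Sᶜ : Set (Fin n)))
      rwa [hS] at this

end StabilityGraph

/-- For every `n ≥ 11` there are at least `2 ^ ⌊(n - 11)/2⌋` pairwise non-isomorphic graphs
on `n` vertices with `Δ = 4`, `χ = 3`, `ivs_χ = 3` and `vs_χ = 2`. -/
theorem stmt_8 (n : ℕ) (hn : 11 ≤ n) :
    ∃ f : Fin (2 ^ ((n - 11) / 2)) → SimpleGraph (Fin n),
      (∀ i, maxDeg (f i) = 4 ∧ chi (f i) = 3 ∧ ivsChi (f i) = 3 ∧ vsChi (f i) = 2) ∧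
      (∀ i j, i ≠ j → IsEmpty (f i ≃g f j)) := by
  refine ⟨fun i => StabilityGraph.graph n fun k => (Nat.testBit i k).toNat, fun i => ?_,
    fun i j hij => ⟨fun φ => hij (Fin.ext (Nat.eq_of_testBit_eq fun k => ?_))⟩⟩
  · have h9 : 9 ≤ n := by omega
    exact ⟨StabilityGraph.maxDeg_graph h9, StabilityGraph.chi_graph h9,
      StabilityGraph.ivsChi_graph h9, StabilityGraph.vsChi_graph h9⟩
  · by_cases hk : k < (n - 11) / 2
    · simpa [Bool.toNat_eq_one, Bool.coe_iff_coe] using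
        StabilityGraph.iff_of_iso (by omega) φ k (by omega)
    · have hle : 2 ^ ((n - 11) / 2) ≤ 2 ^ k := Nat.pow_le_pow_right (by norm_num) (by omega)
      rw [Nat.testBit_lt_two_pow (i.2.trans_le hle), Nat.testBit_lt_two_pow (j.2.trans_le hle)]
end

section
/- Let G be a finite simple graph with Δ(G) = 4, χ(G) = 3, ivs_χ(G) = 3 and vs_χ(G) = 2. Let C_χ(G) be the set of vertices x ∈ V(G) for which there exists y ∈ V(G) such that the subgraph induced on V(G) \ {x, y} has chromatic number 2. Let e₁, …, e_t be distinct edges of G, where each eᵢ has endpoints xᵢ, yᵢ and at most one endpoint of eᵢ lies in C_χ(G), and let n₁, …, n_t be positive even integers. Let H be the graph with vertex set V(G) together with new vertices pᵢⱼ for 1 ≤ i ≤ t, 1 ≤ j ≤ nᵢ, whose edges are: all edges of G except e₁, …, e_t, and for each i the path edges xᵢpᵢ₁, pᵢ₁pᵢ₂, …, p_{i,nᵢ−1}p_{i,nᵢ}, p_{i,nᵢ}yᵢ (i.e., H is obtained from G by subdividing each eᵢ with nᵢ new vertices). Then Δ(H) = 4, χ(H) = 3, ivs_χ(H) = 3 and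 vs_χ(H) = 2. -/
/-- `x` belongs to `C_χ(G)`: there is a vertex `y` such that deleting `{x, y}` leaves a
graph of chromatic number `2`. -/
def memCchi {V : Type*} [Fintype V] [DecidableEq V] (G : SimpleGraph V) (x : V) : Prop :=
  ∃ y : V, chi (G.induce (↑(({x, y} : Finset V)ᶜ) : Set V)) = 2

/-- The graph obtained from `G` by deleting the edges `xᵢyᵢ` (for `i < t`) and, for each
`i`, adding the path `xᵢ, pᵢ₁, …, pᵢₙᵢ, yᵢ` through `n i` new vertices, i.e. subdividing
the edge `xᵢyᵢ` with `n i` new vertices. -/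
def subdivide {V : Type*} (G : SimpleGraph V) (t : ℕ) (x y : Fin t → V) (n : Fin t → ℕ) :
    SimpleGraph (V ⊕ Σ i : Fin t, Fin (n i)) :=
  SimpleGraph.fromRel (fun a b =>
    match a, b with
    | Sum.inl u, Sum.inl v =>
        G.Adj u v ∧ ∀ i, ¬((u = x i ∧ v = y i) ∨ (u = y i ∧ v = x i))
    | Sum.inl u, Sum.inr p => u = x p.1 ∧ (p.2 : ℕ) = 0
    | Sum.inr p, Sum.inl u => u = y p.1 ∧ (p.2 : ℕ) = n p.1 - 1
    | Sum.inr p, Sum.inr q => p.1 = q.1 ∧ (p.2 : ℕ) + 1 = (q.2 : ℕ))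

/-- `K` has a proper coloring with `k` colors away from the vertices in `S`. -/
def ColorableOff {W : Type*} (K : SimpleGraph W) (S : Finset W) (k : ℕ) : Prop :=
  ∃ c : W → ℕ, (∀ v, v ∉ S → c v < k) ∧ ∀ u v, u ∉ S → v ∉ S → K.Adj u v → c u ≠ c v

section ChromaticNumber

variable {W : Type*}

theorem chi_le_iff_colorable [Fintype W] (K : SimpleGraph W) (k : ℕ) : chi K ≤ k ↔ K.Colorable k := by
  have htop : K.chromaticNumber ≠ ⊤ :=
    SimpleGraph.chromaticNumber_ne_top_iff_exists.2 ⟨_, K.colorable_of_fintype⟩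
  rw [← SimpleGraph.chromaticNumber_le_iff_colorable, chi, ← ENat.natCast_toNat htop]
  simp

theorem colorableOff_of_forall_ne {α : Type*} [Fintype α] {K : SimpleGraph W} {S : Finset W}
    (c : W → α) (hc : ∀ u v, u ∉ S → v ∉ S → K.Adj u v → c u ≠ c v) :
    ColorableOff K S (Fintype.card α) :=
  ⟨fun v => Fintype.equivFin α (c v), fun v _ => (Fintype.equivFin α (c v)).isLt,
    fun u v hu hv huv h => hc u v hu hv huv ((Fintype.equivFin α).injective (Fin.ext h))⟩

theorem ColorableOff.exists_bool {K : SimpleGraph W} {S : Finset W} (h : ColorableOff K S 2) :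
    ∃ c : W → Bool, ∀ u v, u ∉ S → v ∉ S → K.Adj u v → c u ≠ c v := by
  obtain ⟨c, hlt, hc⟩ := h
  refine ⟨fun v => decide (c v = 0), fun u v hu hv huv => ?_⟩
  have := hlt u hu
  have := hlt v hv
  have := hc u v hu hv huv
  simp only [ne_eq, decide_eq_decide]
  omega

theorem chi_le_iff_colorableOff_empty [Fintype W] (K : SimpleGraph W) (k : ℕ) :
    chi K ≤ k ↔ ColorableOff K ∅ k := by
  rw [chi_le_iff_colorable]
  constructor
  · rintro ⟨c⟩
    exact ⟨fun v => c v, fun v _ => (c v).isLt, fun u v _ _ huv h => c.valid huv (Fin.ext h)⟩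
  · rintro ⟨c, hlt, hc⟩
    exact ⟨SimpleGraph.Coloring.mk (fun v => ⟨c v, hlt v (by simp)⟩)
      fun {u v} huv h => hc u v (by simp) (by simp) huv (Fin.mk.inj h)⟩

variable [DecidableEq W]

/-- Reinserting an independent set costs at most one color. -/
theorem ColorableOff.of_union_independent {K : SimpleGraph W} {S R : Finset W} {k : ℕ}
    (h : ColorableOff K (S ∪ R) k) (hR : ∀ u ∈ R, ∀ v ∈ R, ¬ K.Adj u v) :
    ColorableOff K S (k + 1) := by
  obtain ⟨c, hlt, hc⟩ := h
  refine ⟨fun v => if v ∈ R then k else c v, fun v hv => ?_, fun u v hu hv huv => ?_⟩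
  · have := hlt v
    grind
  · have := hlt u
    have := hlt v
    have := hc u v
    have := hR u
    grind

variable [Fintype W]

theorem chi_induce_compl_le_iff (K : SimpleGraph W) (S : Finset W) (k : ℕ) :
    chi (K.induce (↑(Sᶜ) : Set W)) ≤ k ↔ ColorableOff K S k := by
  rw [chi_le_iff_colorable]
  constructor
  · rintro ⟨c⟩
    refine ⟨fun v => if hv : v ∈ (↑(Sᶜ) : Set W) then c ⟨v, hv⟩ else 0, ?_, ?_⟩
    · intro v hv
      have hv' : v ∈ (↑(Sᶜ) : Set W) := by simpa using hv
      simp only [hv', dite_true]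
      exact (c _).isLt
    · intro u v hu hv huv
      have hu' : u ∈ (↑(Sᶜ) : Set W) := by simpa using hu
      have hv' : v ∈ (↑(Sᶜ) : Set W) := by simpa using hv
      simp only [hu', hv', dite_true]
      intro h
      exact c.valid (v := ⟨u, hu'⟩) (w := ⟨v, hv'⟩) huv (Fin.ext h)
  · rintro ⟨c, hlt, hc⟩
    have hS : ∀ v : (↑(Sᶜ) : Set W), (v : W) ∉ S := fun v => by simpa using v.2
    exact ⟨SimpleGraph.Coloring.mk (fun v => ⟨c v, hlt v (hS v)⟩)
      fun {u v} huv h => hc u v (hS u) (hS v) huv (Fin.mk.inj h)⟩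

theorem chi_induce_compl_eq_two {K : SimpleGraph W} {S : Finset W} (hK : chi K = 3)
    (hS : ∀ u ∈ S, ∀ v ∈ S, ¬ K.Adj u v) (h : ColorableOff K S 2) :
    chi (K.induce (↑(Sᶜ) : Set W)) = 2 := by
  refine le_antisymm ((chi_induce_compl_le_iff K S 2).2 h) (not_lt.1 fun hlt => ?_)
  have h1 := (chi_induce_compl_le_iff K S 1).1 (by omega)
  have h2 : ColorableOff K ∅ 2 :=
    ColorableOff.of_union_independent (R := S) (by simpa using h1) hS
  have := (chi_le_iff_colorableOff_empty K 2).2 h2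
  omega

theorem chi_induce_compl_pair_eq_two {K : SimpleGraph W}
    (hK : ∀ S : Finset W, S.card ≤ 1 → ¬ ColorableOff K S 2) {a b : W}
    (h : ColorableOff K {a, b} 2) : chi (K.induce (↑(({a, b} : Finset W)ᶜ) : Set W)) = 2 := by
  refine le_antisymm ((chi_induce_compl_le_iff K _ 2).2 h) (not_lt.1 fun hlt => ?_)
  have h1 := (chi_induce_compl_le_iff K _ 1).1 (Nat.le_of_lt_succ hlt)
  exact hK {a} (by simp)
    (ColorableOff.of_union_independent (R := {b}) h1 (by simp))

theorem vsChi_eq_two_iff {K : SimpleGraph W} (hK : chi K = 3) :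
    vsChi K = 2 ↔ (∀ S : Finset W, S.card ≤ 1 → ¬ ColorableOff K S 2) ∧
      ∃ S : Finset W, S.card = 2 ∧ ColorableOff K S 2 := by
  unfold vsChi
  rw [hK]
  constructor
  · intro h
    constructor
    · intro S hS hcol
      have hind : ∀ u ∈ S, ∀ v ∈ S, ¬ K.Adj u v := fun u hu v hv huv =>
        huv.ne (Finset.card_le_one.1 hS u hu v hv)
      have := Nat.sInf_le (s := {n : ℕ | ∃ S : Finset W, S.card = n ∧
        chi (K.induce (↑(Sᶜ) : Set W)) = 3 - 1}) ⟨S, rfl, chi_induce_compl_eq_two hK hind hcol⟩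
      omega
    · obtain ⟨S, hS, hcol⟩ := Nat.sInf_mem (Nat.nonempty_of_pos_sInf (h ▸ two_pos))
      exact ⟨S, hS.trans h, (chi_induce_compl_le_iff K S 2).1 hcol.le⟩
  · rintro ⟨hlow, S, hS, hcol⟩
    refine IsLeast.csInf_eq ⟨⟨S, hS, ?_⟩, ?_⟩
    · obtain ⟨a, b, -, rfl⟩ := Finset.card_eq_two.1 hS
      exact chi_induce_compl_pair_eq_two hlow hcol
    · rintro n ⟨T, rfl, hT⟩
      by_contra hlt
      exact hlow T (by omega) ((chi_induce_compl_le_iff K T 2).1 hT.le)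

theorem ivsChi_eq_three_iff {K : SimpleGraph W} (hK : chi K = 3) :
    ivsChi K = 3 ↔
      (∀ S : Finset W, S.card ≤ 2 → (∀ u ∈ S, ∀ v ∈ S, ¬ K.Adj u v) → ¬ ColorableOff K S 2) ∧
      ∃ S : Finset W, S.card = 3 ∧ (∀ u ∈ S, ∀ v ∈ S, ¬ K.Adj u v) ∧ ColorableOff K S 2 := by
  unfold ivsChi
  rw [hK]
  constructor
  · intro h
    constructor
    · intro S hS hind hcol
      have := Nat.sInf_le (s := {n : ℕ | ∃ S : Finset W, S.card = n ∧
        (∀ u ∈ S, ∀ v ∈ S, ¬ K.Adj u v) ∧ chi (K.induce (↑(Sᶜ) : Set W)) = 3 - 1})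
        ⟨S, rfl, hind, chi_induce_compl_eq_two hK hind hcol⟩
      omega
    · obtain ⟨S, hS, hind, hcol⟩ := Nat.sInf_mem (Nat.nonempty_of_pos_sInf (h ▸ three_pos))
      exact ⟨S, hS.trans h, hind, (chi_induce_compl_le_iff K S 2).1 hcol.le⟩
  · rintro ⟨hlow, S, hS, hind, hcol⟩
    refine IsLeast.csInf_eq ⟨⟨S, hS, hind, chi_induce_compl_eq_two hK hind hcol⟩, ?_⟩
    rintro n ⟨T, rfl, hind, hT⟩
    by_contra hlt
    exact hlow T (by omega) hind ((chi_induce_compl_le_iff K T 2).1 hT.le)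

end ChromaticNumber

section Subdivide

variable {V : Type*} {G : SimpleGraph V} {t : ℕ} {x y : Fin t → V} {n : Fin t → ℕ}

theorem subdivide_adj_inl_inl {u v : V} :
    (subdivide G t x y n).Adj (Sum.inl u) (Sum.inl v) ↔
      G.Adj u v ∧ ∀ i, ¬((u = x i ∧ v = y i) ∨ (u = y i ∧ v = x i)) := by
  have := G.adj_comm u v
  have := G.ne_of_adj (a := u) (b := v)
  simp only [subdivide, SimpleGraph.fromRel_adj, ne_eq, Sum.inl.injEq]
  grind

theorem subdivide_adj_inl_inr {u : V} {p : Σ i : Fin t, Fin (n i)} :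
    (subdivide G t x y n).Adj (Sum.inl u) (Sum.inr p) ↔
      (u = x p.1 ∧ (p.2 : ℕ) = 0) ∨ (u = y p.1 ∧ (p.2 : ℕ) = n p.1 - 1) := by
  simp [subdivide, SimpleGraph.fromRel_adj]

theorem subdivide_adj_inr_inr {p q : Σ i : Fin t, Fin (n i)} :
    (subdivide G t x y n).Adj (Sum.inr p) (Sum.inr q) ↔
      p.1 = q.1 ∧ ((p.2 : ℕ) + 1 = q.2 ∨ (q.2 : ℕ) + 1 = p.2) := by
  simp only [subdivide, SimpleGraph.fromRel_adj, ne_eq, Sum.inr.injEq]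
  constructor
  · grind
  · rintro ⟨h, h'⟩
    refine ⟨?_, by grind⟩
    rintro rfl
    omega

/-- A coloring of `G`, with distinct colors `a i` and `b i` prescribed for the ends of the
`i`-th subdivided edge, extends alternately along the new paths. -/
theorem exists_coloring_subdivide {α : Type*} {S : Set V} (hn : ∀ i, 0 < n i ∧ Even (n i))
    (c : V → α) (hc : ∀ u v, u ∉ S → v ∉ S → G.Adj u v → c u ≠ c v)
    (a b : Fin t → α) (hab : ∀ i, a i ≠ b i) (ha : ∀ i, x i ∉ S → a i = c (x i))
    (hb : ∀ i, y i ∉ S → b i = c (y i)) :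
    ∃ d : V ⊕ (Σ i : Fin t, Fin (n i)) → α, ∀ u v, u ∉ Sum.inl '' S → v ∉ Sum.inl '' S →
      (subdivide G t x y n).Adj u v → d u ≠ d v := by
  let d : V ⊕ (Σ i : Fin t, Fin (n i)) → α :=
    Sum.elim c fun p => if Even (p.2 : ℕ) then b p.1 else a p.1
  have hmixed : ∀ (u : V) (p : Σ i : Fin t, Fin (n i)), u ∉ S →
      (subdivide G t x y n).Adj (Sum.inl u) (Sum.inr p) → d (Sum.inl u) ≠ d (Sum.inr p) := by
    intro u p hu hup
    simp only [d, Sum.elim_inl, Sum.elim_inr]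
    rcases subdivide_adj_inl_inr.1 hup with ⟨rfl, h⟩ | ⟨rfl, h⟩
    · rw [if_pos (by simp [h]), ← ha _ hu]
      exact hab _
    · have hodd : ¬ Even (p.2 : ℕ) := by
        have := hn p.1
        rw [h]
        grind
      rw [if_neg hodd, ← hb _ hu]
      exact (hab _).symm
  refine ⟨d, ?_⟩
  rintro (u | p) (v | q) hu hv huv
  · exact hc u v (by simpa using hu) (by simpa using hv) (subdivide_adj_inl_inl.1 huv).1
  · exact hmixed u q (by simpa using hu) huv
  · exact (hmixed v p (by simpa using hv) huv.symm).symm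
  · obtain ⟨h, h'⟩ := subdivide_adj_inr_inr.1 huv
    have hne := hab q.1
    simp only [d, Sum.elim_inr, h]
    grind

theorem ColorableOff.subdivide_two [Fintype V] [DecidableEq V] {S : Finset V}
    (hn : ∀ i, 0 < n i ∧ Even (n i)) (hadj : ∀ i, G.Adj (x i) (y i)) (h : ColorableOff G S 2) :
    ColorableOff (subdivide G t x y n) (S.map Function.Embedding.inl) 2 := by
  obtain ⟨c, hc⟩ := h.exists_bool
  obtain ⟨d, hd⟩ := exists_coloring_subdivide (S := (S : Set V)) hn c (by simpa using hc)
    (fun i => !(if y i ∈ S then !(c (x i)) else c (y i)))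
    (fun i => if y i ∈ S then !(c (x i)) else c (y i))
    (fun i => Bool.not_ne_self _)
    (fun i hi => by
      split_ifs with hy
      · exact Bool.not_not _
      · exact (Bool.eq_not.2 (hc _ _ hi hy (hadj i))).symm)
    (fun i hi => if_neg hi)
  exact colorableOff_of_forall_ne d fun u v hu hv huv =>
    hd u v (by simpa using hu) (by simpa using hv) huv

theorem ColorableOff.subdivide_empty [Fintype V] {k : ℕ}
    (hn : ∀ i, 0 < n i ∧ Even (n i)) (hadj : ∀ i, G.Adj (x i) (y i)) (h : ColorableOff G ∅ k) :
    ColorableOff (subdivide G t x y n) ∅ k := by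
  obtain ⟨c, hlt, hc⟩ := h
  obtain ⟨d, hd⟩ := exists_coloring_subdivide (S := ∅) hn
    (fun v => (⟨c v, hlt v (by simp)⟩ : Fin k))
    (fun u v _ _ huv h => hc u v (by simp) (by simp) huv (Fin.mk.inj h))
    (fun i => ⟨c (x i), hlt _ (by simp)⟩) (fun i => ⟨c (y i), hlt _ (by simp)⟩)
    (fun i h => hc _ _ (by simp) (by simp) (hadj i) (Fin.mk.inj h))
    (fun _ _ => rfl) (fun _ _ => rfl)
  simpa using colorableOff_of_forall_ne (S := ∅) d fun u v _ _ huv =>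
    hd u v (by simp) (by simp) huv

/-- In a 2-coloring, the ends of an intact subdivided edge receive different colors. -/
theorem ne_of_bool_coloring_subdivide {T : Set (V ⊕ Σ i : Fin t, Fin (n i))} {i : Fin t}
    (hn : 0 < n i ∧ Even (n i)) {c : V ⊕ (Σ i : Fin t, Fin (n i)) → Bool}
    (hc : ∀ u v, u ∉ T → v ∉ T → (subdivide G t x y n).Adj u v → c u ≠ c v)
    (hx : Sum.inl (x i) ∉ T) (hy : Sum.inl (y i) ∉ T) (hp : ∀ j, Sum.inr ⟨i, j⟩ ∉ T) :
    c (Sum.inl (x i)) ≠ c (Sum.inl (y i)) := by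
  have hpath : ∀ (j : ℕ) (hj : j < n i),
      c (Sum.inr ⟨i, j, hj⟩) = (c (Sum.inl (x i)) ^^ decide (Even j)) := by
    intro j
    induction j with
    | zero =>
      intro hj
      have := hc _ _ hx (hp ⟨0, hj⟩) (subdivide_adj_inl_inr.2 (Or.inl ⟨rfl, rfl⟩))
      simpa using Bool.eq_not.2 this.symm
    | succ j ih =>
      intro hj
      have h1 := ih (by omega)
      have := hc _ _ (hp ⟨j, by omega⟩) (hp ⟨j + 1, hj⟩)
        (subdivide_adj_inr_inr.2 ⟨rfl, Or.inl rfl⟩)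
      have h2 : decide (Even (j + 1)) = !decide (Even j) := by
        rw [← decide_not, decide_eq_decide, Nat.even_add_one]
      rw [h2, Bool.xor_not, ← h1]
      exact Bool.eq_not.2 this.symm
  have hlast := hpath (n i - 1) (by omega)
  have hodd : ¬ Even (n i - 1) := by grind
  have := hc _ _ hy (hp ⟨n i - 1, by omega⟩) (subdivide_adj_inl_inr.2 (Or.inr ⟨rfl, rfl⟩))
  simp only [hodd, decide_false, Bool.xor_false] at hlast
  rw [hlast] at this
  exact this.symm

/-- Deleted new vertices can be replaced by either end of the edge they subdivide. -/
theorem ColorableOff.of_subdivide [Fintype V] [DecidableEq V]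
    {T : Finset (V ⊕ Σ i : Fin t, Fin (n i))} (hn : ∀ i, 0 < n i ∧ Even (n i))
    (h : ColorableOff (subdivide G t x y n) T 2)
    (f : V ⊕ (Σ i : Fin t, Fin (n i)) → V) (hf : ∀ v, f (Sum.inl v) = v)
    (hf' : ∀ p, f (Sum.inr p) = x p.1 ∨ f (Sum.inr p) = y p.1) :
    ColorableOff G (T.image f) 2 := by
  obtain ⟨c, hc⟩ := h.exists_bool
  have hT : ∀ w, f w ∉ T.image f → w ∉ T := fun w hw hwT => hw (Finset.mem_image_of_mem f hwT)
  have hinl : ∀ v, v ∉ T.image f → Sum.inl v ∉ T := fun v hv => hT _ (by rwa [hf])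
  have hends : ∀ i, x i ∉ T.image f → y i ∉ T.image f →
      c (Sum.inl (x i)) ≠ c (Sum.inl (y i)) := fun i hx hy =>
    ne_of_bool_coloring_subdivide (T := (T : Set _)) (hn i) (by simpa using hc)
      (by simpa using hinl _ hx) (by simpa using hinl _ hy) fun j => by
        have : f (Sum.inr ⟨i, j⟩) ∉ T.image f := by
          rcases hf' ⟨i, j⟩ with h | h <;> rw [h] <;> assumption
        simpa using hT _ this
  refine colorableOff_of_forall_ne (fun v => c (Sum.inl v)) fun u v hu hv huv => ?_
  by_cases he : ∃ i, (u = x i ∧ v = y i) ∨ (u = y i ∧ v = x i)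
  · obtain ⟨i, ⟨rfl, rfl⟩ | ⟨rfl, rfl⟩⟩ := he
    · exact hends i hu hv
    · exact (hends i hv hu).symm
  · exact hc _ _ (hinl u hu) (hinl v hv)
      (subdivide_adj_inl_inl.2 ⟨huv, fun i hi => he ⟨i, hi⟩⟩)

theorem deg_subdivide_inl [Fintype V] (hadj : ∀ i, G.Adj (x i) (y i))
    (hdistinct : ∀ i j, i ≠ j → ¬((x i = x j ∧ y i = y j) ∨ (x i = y j ∧ y i = x j)))
    (hn : ∀ i, 0 < n i) (v : V) : deg (subdivide G t x y n) (Sum.inl v) = deg G v := by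
  classical
  unfold deg
  simp only [← SimpleGraph.card_neighborFinset_eq_degree]
  refine Finset.card_bij
    (fun w _ => Sum.elim id (fun p => if v = x p.1 then y p.1 else x p.1) w) ?_ ?_ ?_
  · rintro (u | p) h <;> rw [SimpleGraph.mem_neighborFinset] at h ⊢
    · exact (subdivide_adj_inl_inl.1 h).1
    · have h1 := subdivide_adj_inl_inr.1 h
      have h2 := hadj p.1
      have h3 := h2.symm
      simp only [Sum.elim_inr]
      grind
  · rintro (u | p) hu (w | q) hw h <;> rw [SimpleGraph.mem_neighborFinset] at hu hw <;>
      simp only [Sum.elim_inl, Sum.elim_inr, id] at h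
    · rw [h]
    · have h1 := (subdivide_adj_inl_inl.1 hu).2 q.1
      have h2 := subdivide_adj_inl_inr.1 hw
      grind
    · have h1 := (subdivide_adj_inl_inl.1 hw).2 p.1
      have h2 := subdivide_adj_inl_inr.1 hu
      grind
    · have h1 := subdivide_adj_inl_inr.1 hu
      have h2 := subdivide_adj_inl_inr.1 hw
      have hpq : p.1 = q.1 := by
        by_contra hne
        have := hdistinct p.1 q.1 hne
        grind
      obtain ⟨i, j⟩ := p
      obtain ⟨i', j'⟩ := q
      obtain rfl : i = i' := hpq
      have hne := (hadj i).ne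
      have : (j : ℕ) = j' := by grind
      rw [Fin.ext this]
  · intro u hu
    rw [SimpleGraph.mem_neighborFinset] at hu
    by_cases he : ∃ i, (v = x i ∧ u = y i) ∨ (v = y i ∧ u = x i)
    · obtain ⟨i, ⟨rfl, rfl⟩ | ⟨rfl, rfl⟩⟩ := he
      · refine ⟨Sum.inr ⟨i, 0, hn i⟩, ?_, by simp⟩
        rw [SimpleGraph.mem_neighborFinset]
        exact subdivide_adj_inl_inr.2 (Or.inl ⟨rfl, rfl⟩)
      · refine ⟨Sum.inr ⟨i, n i - 1, Nat.sub_lt (hn i) one_pos⟩, ?_, by simp [hu.ne]⟩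
        rw [SimpleGraph.mem_neighborFinset]
        exact subdivide_adj_inl_inr.2 (Or.inr ⟨rfl, rfl⟩)
    · refine ⟨Sum.inl u, ?_, rfl⟩
      rw [SimpleGraph.mem_neighborFinset]
      exact subdivide_adj_inl_inl.2 ⟨hu, fun i hi => he ⟨i, hi⟩⟩

theorem deg_subdivide_inr_le [Fintype V] (p : Σ i : Fin t, Fin (n i)) :
    deg (subdivide G t x y n) (Sum.inr p) ≤ 2 := by
  classical
  unfold deg
  rw [← SimpleGraph.card_neighborFinset_eq_degree]
  obtain ⟨i, j⟩ := p
  let before : V ⊕ Σ i : Fin t, Fin (n i) :=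
    if (j : ℕ) = 0 then Sum.inl (x i) else Sum.inr ⟨i, j - 1, by omega⟩
  let after : V ⊕ Σ i : Fin t, Fin (n i) :=
    if h : (j : ℕ) + 1 < n i then Sum.inr ⟨i, j + 1, h⟩ else Sum.inl (y i)
  refine (Finset.card_le_card (t := {before, after}) ?_).trans Finset.card_le_two
  rintro (u | ⟨i', j'⟩) hu <;> rw [SimpleGraph.mem_neighborFinset] at hu <;>
    rw [Finset.mem_insert, Finset.mem_singleton]
  · rcases subdivide_adj_inl_inr.1 hu.symm with ⟨rfl, h⟩ | ⟨rfl, h⟩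
    · exact Or.inl (if_pos h).symm
    · have h' : ¬ (j : ℕ) + 1 < n i := by
        simp only at h
        omega
      right
      simp only [after, h', dite_false]
  · obtain ⟨h, h'⟩ := subdivide_adj_inr_inr.1 hu
    obtain rfl : i = i' := h
    simp only at h'
    rcases h' with h' | h'
    · have hlt : (j : ℕ) + 1 < n i := by omega
      right
      simp only [after, hlt, dite_true]
      congr 2
      exact Fin.ext h'.symm
    · have hne : (j : ℕ) ≠ 0 := by omega
      left
      simp only [before, hne, if_false]
      congr 2
      exact Fin.ext (by simp only; omega)

theorem maxDeg_subdivide [Fintype V] (hadj : ∀ i, G.Adj (x i) (y i))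
    (hdistinct : ∀ i j, i ≠ j → ¬((x i = x j ∧ y i = y j) ∨ (x i = y j ∧ y i = x j)))
    (hn : ∀ i, 0 < n i) (hG : 2 ≤ maxDeg G) :
    maxDeg (subdivide G t x y n) = maxDeg G := by
  classical
  refine le_antisymm ?_ ?_
  · refine @SimpleGraph.maxDegree_le_of_forall_degree_le _ _ _ (Classical.decRel _) _ ?_
    rintro (v | p)
    · exact (deg_subdivide_inl hadj hdistinct hn v).trans_le
        (@SimpleGraph.degree_le_maxDegree _ G _ (Classical.decRel _) v)
    · exact (deg_subdivide_inr_le p).trans hG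
  · refine @SimpleGraph.maxDegree_le_of_forall_degree_le _ _ _ (Classical.decRel _) _ fun v => ?_
    exact (deg_subdivide_inl hadj hdistinct hn v).symm.trans_le
      (@SimpleGraph.degree_le_maxDegree _ _ _ (Classical.decRel _) (Sum.inl v))

theorem chi_subdivide_eq_three [Fintype V] [DecidableEq V] (hadj : ∀ i, G.Adj (x i) (y i))
    (hn : ∀ i, 0 < n i ∧ Even (n i)) (hχ : chi G = 3) : chi (subdivide G t x y n) = 3 := by
  refine le_antisymm ?_ (not_lt.1 fun hlt => ?_)
  · exact (chi_le_iff_colorableOff_empty _ 3).2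
      (((chi_le_iff_colorableOff_empty G 3).1 hχ.le).subdivide_empty hn hadj)
  · have h := ((chi_le_iff_colorableOff_empty _ 2).1 (Nat.le_of_lt_succ hlt)).of_subdivide hn
      (Sum.elim id fun p => x p.1) (fun _ => rfl) (fun _ => Or.inl rfl)
    have := (chi_le_iff_colorableOff_empty G 2).2 (by simpa using h)
    omega

theorem vsChi_subdivide_eq_two [Fintype V] [DecidableEq V] (hadj : ∀ i, G.Adj (x i) (y i))
    (hn : ∀ i, 0 < n i ∧ Even (n i)) (hχ : chi G = 3) (hvs : vsChi G = 2) :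
    vsChi (subdivide G t x y n) = 2 := by
  obtain ⟨hlow, S, hS, hcol⟩ := (vsChi_eq_two_iff hχ).1 hvs
  refine (vsChi_eq_two_iff (chi_subdivide_eq_three hadj hn hχ)).2
    ⟨fun T hT hTcol => ?_, _, (Finset.card_map _).trans hS, hcol.subdivide_two hn hadj⟩
  exact hlow _ (Finset.card_image_le.trans hT) (hTcol.of_subdivide hn
    (Sum.elim id fun p => x p.1) (fun _ => rfl) (fun _ => Or.inl rfl))

/-- A pair whose deletion makes the subdivision 2-colorable contains no new vertex. -/
theorem not_colorableOff_subdivide_inr [Fintype V] [DecidableEq V]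
    (hn : ∀ i, 0 < n i ∧ Even (n i))
    (hlow : ∀ S : Finset V, S.card ≤ 1 → ¬ ColorableOff G S 2)
    (hC : ∀ i, ¬(memCchi G (x i) ∧ memCchi G (y i)))
    (p : Σ i : Fin t, Fin (n i)) (w : V ⊕ Σ i : Fin t, Fin (n i)) :
    ¬ ColorableOff (subdivide G t x y n) {Sum.inr p, w} 2 := by
  intro h
  have hx := h.of_subdivide hn (Sum.elim id fun p => x p.1) (fun _ => rfl) (fun _ => Or.inl rfl)
  have hy := h.of_subdivide hn (Sum.elim id fun p => y p.1) (fun _ => rfl) (fun _ => Or.inr rfl)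
  rw [Finset.image_insert, Finset.image_singleton] at hx hy
  exact hC p.1 ⟨⟨_, chi_induce_compl_pair_eq_two hlow hx⟩,
    ⟨_, chi_induce_compl_pair_eq_two hlow hy⟩⟩

theorem ivsChi_subdivide_eq_three [Fintype V] [DecidableEq V] (hadj : ∀ i, G.Adj (x i) (y i))
    (hn : ∀ i, 0 < n i ∧ Even (n i)) (hC : ∀ i, ¬(memCchi G (x i) ∧ memCchi G (y i)))
    (hχ : chi G = 3) (hvs : vsChi G = 2) (hivs : ivsChi G = 3) :
    ivsChi (subdivide G t x y n) = 3 := by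
  have hχ' := chi_subdivide_eq_three hadj hn hχ
  have hlow := ((vsChi_eq_two_iff hχ).1 hvs).1
  have hlow' := ((vsChi_eq_two_iff hχ').1 (vsChi_subdivide_eq_two hadj hn hχ hvs)).1
  obtain ⟨hind, S, hS, hSind, hcol⟩ := (ivsChi_eq_three_iff hχ).1 hivs
  refine (ivsChi_eq_three_iff hχ').2 ⟨fun T hT hTind hTcol => ?_, _,
    (Finset.card_map _).trans hS, ?_, hcol.subdivide_two hn hadj⟩
  · have hcard : T.card = 2 := by
      by_contra hne
      exact hlow' T (by omega) hTcol
    obtain ⟨a, b, -, rfl⟩ := Finset.card_eq_two.1 hcard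
    rcases a with u | p
    · rcases b with v | q
      · have huv : ColorableOff G {u, v} 2 := by
          simpa using hTcol.of_subdivide hn (Sum.elim id fun p => x p.1)
            (fun _ => rfl) (fun _ => Or.inl rfl)
        have hu : memCchi G u := ⟨v, chi_induce_compl_pair_eq_two hlow huv⟩
        have hv : memCchi G v :=
          ⟨u, chi_induce_compl_pair_eq_two hlow (Finset.pair_comm u v ▸ huv)⟩
        have hnadj : ¬ G.Adj u v := fun h => by
          refine hTind (Sum.inl u) (by simp) (Sum.inl v) (by simp)
            (subdivide_adj_inl_inl.2 ⟨h, ?_⟩)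
          rintro i (⟨rfl, rfl⟩ | ⟨rfl, rfl⟩)
          · exact hC i ⟨hu, hv⟩
          · exact hC i ⟨hv, hu⟩
        refine hind {u, v} Finset.card_le_two ?_ huv
        have hnadj' : ¬ G.Adj v u := fun h => hnadj h.symm
        simp [hnadj, hnadj']
      · exact not_colorableOff_subdivide_inr hn hlow hC q (Sum.inl u)
          (by rwa [Finset.pair_comm])
    · exact not_colorableOff_subdivide_inr hn hlow hC p b hTcol
  · simp only [Finset.mem_map, Function.Embedding.inl_apply]
    rintro _ ⟨u, hu, rfl⟩ _ ⟨v, hv, rfl⟩ huv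
    exact hSind u hu v hv (subdivide_adj_inl_inl.1 huv).1

end Subdivide

/-- Subdividing, with even positive numbers of new vertices, edges of `G` each having at
most one endpoint in `C_χ(G)` preserves `Δ = 4`, `χ = 3`, `ivs_χ = 3` and `vs_χ = 2`. -/
theorem stmt_9 {V : Type*} [Fintype V] [DecidableEq V] (G : SimpleGraph V)
    (hΔ : maxDeg G = 4) (hχ : chi G = 3) (hivs : ivsChi G = 3) (hvs : vsChi G = 2)
    (t : ℕ) (x y : Fin t → V) (n : Fin t → ℕ)
    (hadj : ∀ i, G.Adj (x i) (y i))
    (hdistinct : ∀ i j, i ≠ j →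
      ¬((x i = x j ∧ y i = y j) ∨ (x i = y j ∧ y i = x j)))
    (hC : ∀ i, ¬(memCchi G (x i) ∧ memCchi G (y i)))
    (hn : ∀ i, 0 < n i ∧ Even (n i)) :
    maxDeg (subdivide G t x y n) = 4 ∧ chi (subdivide G t x y n) = 3 ∧
      ivsChi (subdivide G t x y n) = 3 ∧ vsChi (subdivide G t x y n) = 2 := by
  exact ⟨(maxDeg_subdivide hadj hdistinct (fun i => (hn i).1) (by omega)).trans hΔ,
    chi_subdivide_eq_three hadj hn hχ, ivsChi_subdivide_eq_three hadj hn hC hχ hvs hivs,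
    vsChi_subdivide_eq_two hadj hn hχ hvs⟩
end

section
/- There are exactly 30 isomorphism classes of finite simple graphs G on 9 vertices with Δ(G) = 4, χ(G) = 3, ivs_χ(G) = 3 and vs_χ(G) = 2. -/
open SimpleGraph

/-- `G` becomes bipartite after deleting the vertices `p` and `q`. -/
def BipartiteAway {V : Type*} (G : SimpleGraph V) (p q : V) : Prop :=
  ∃ s : V → Bool, ∀ a b, a ≠ p → a ≠ q → b ≠ p → b ≠ q → G.Adj a b → s a ≠ s b

/-- Maximum degree at most four, `3`-colorable, bipartite after deleting the ends of some edge,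
but not after deleting two nonadjacent vertices. -/
structure IsEdgeCritical (G : SimpleGraph (Fin 9)) : Prop where
  deg_le : ∀ v, deg G v ≤ 4
  colorable : G.Colorable 3
  not_bipartiteAway : ∀ p q, p ≠ q → ¬ G.Adj p q → ¬ BipartiteAway G p q
  exists_edge : ∃ p q, G.Adj p q ∧ BipartiteAway G p q

theorem chi_le_iff {V : Type*} [Fintype V] (G : SimpleGraph V) (n : ℕ) :
    chi G ≤ n ↔ G.Colorable n := by
  have h : G.chromaticNumber ≠ ⊤ :=
    chromaticNumber_ne_top_iff_exists.2 ⟨_, G.colorable_of_fintype⟩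
  rw [← chromaticNumber_le_iff_colorable, chi, ← ENat.natCast_toNat h, Nat.cast_le,
    ENat.toNat_natCast]

theorem deg_eq_sum {V : Type*} [Fintype V] (G : SimpleGraph V) [DecidableRel G.Adj] (v : V) :
    deg G v = ∑ w, (decide (G.Adj v w)).toNat := by
  classical
  have h : deg G v = G.degree v := by
    unfold deg
    congr!
  rw [h, ← card_neighborFinset_eq_degree, neighborFinset_eq_filter, Finset.card_filter]
  exact Finset.sum_congr rfl fun w _ => by by_cases hw : G.Adj v w <;> simp [hw]

theorem deg_le_maxDeg {V : Type*} [Fintype V] (G : SimpleGraph V) (v : V) :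
    deg G v ≤ maxDeg G := by
  classical
  unfold deg maxDeg
  exact @SimpleGraph.degree_le_maxDegree V G _ (Classical.decRel _) v

theorem maxDeg_le {V : Type*} [Fintype V] (G : SimpleGraph V) {k : ℕ} (h : ∀ v, deg G v ≤ k) :
    maxDeg G ≤ k :=
  @SimpleGraph.maxDegree_le_of_forall_degree_le V G _ (Classical.decRel _) k h

/-- In a graph of maximum degree at most four on nine vertices every vertex has a non-neighbor. -/
theorem exists_not_adj {G : SimpleGraph (Fin 9)} (h : ∀ v, deg G v ≤ 4) (p : Fin 9) :
    ∃ q, p ≠ q ∧ ¬ G.Adj p q := by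
  classical
  by_contra! hc
  have h1 := h p
  rw [deg_eq_sum] at h1
  have h2 : ∑ w, (if w = p then 0 else 1) ≤ ∑ w, (decide (G.Adj p w)).toNat := by
    refine Finset.sum_le_sum fun w _ => ?_
    split_ifs with hw
    · simp
    · simp [hc w (Ne.symm hw)]
  have h3 : ∑ w, (if w = p then 0 else 1) = 8 := by
    clear hc h1 h2
    revert p
    decide
  omega

theorem exists_pair_of_card_le_two {G : SimpleGraph (Fin 9)} (h : ∀ v, deg G v ≤ 4)
    {S : Finset (Fin 9)} (hS : S.card ≤ 2) (hi : ∀ x ∈ S, ∀ y ∈ S, ¬ G.Adj x y) :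
    ∃ p q, p ≠ q ∧ ¬ G.Adj p q ∧ S ⊆ {p, q} := by
  interval_cases hc : S.card
  · obtain ⟨q, h1, h2⟩ := exists_not_adj h 0
    exact ⟨0, q, h1, h2, by simp [Finset.card_eq_zero.1 hc]⟩
  · obtain ⟨p, rfl⟩ := Finset.card_eq_one.1 hc
    obtain ⟨q, h1, h2⟩ := exists_not_adj h p
    exact ⟨p, q, h1, h2, by simp⟩
  · obtain ⟨p, q, hpq, rfl⟩ := Finset.card_eq_two.1 hc
    exact ⟨p, q, hpq, hi p (by simp) q (by simp), subset_rfl⟩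

theorem bipartiteAway_of_induce {V : Type*} [Fintype V] [DecidableEq V] {G : SimpleGraph V}
    {S : Finset V} (h : (G.induce (↑(Sᶜ) : Set V)).Colorable 2) {p q : V} (hS : S ⊆ {p, q}) :
    BipartiteAway G p q := by
  obtain ⟨c⟩ := h
  have key : ∀ a, a ≠ p → a ≠ q → a ∈ (↑(Sᶜ) : Set V) := fun a h1 h2 => by
    simpa using fun ha => by simpa [h1, h2] using hS ha
  refine ⟨fun a => if ha : a ∈ (↑(Sᶜ) : Set V) then decide (c ⟨a, ha⟩ = 0) else false,
    fun a b ha ha' hb hb' hab he => ?_⟩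
  have hv : c ⟨a, key a ha ha'⟩ ≠ c ⟨b, key b hb hb'⟩ := c.valid (by simpa using hab)
  simp only [key a ha ha', key b hb hb', dite_true, decide_eq_decide] at he
  generalize c ⟨a, _⟩ = x at *
  generalize c ⟨b, _⟩ = y at *
  revert x y; decide

theorem colorable_induce_of_bipartiteAway {V : Type*} [Fintype V] [DecidableEq V]
    {G : SimpleGraph V} {p q : V} (h : BipartiteAway G p q) :
    (G.induce (↑(({p, q} : Finset V)ᶜ) : Set V)).Colorable 2 := by
  obtain ⟨s, hs⟩ := h
  have c : (G.induce (↑(({p, q} : Finset V)ᶜ) : Set V)).Coloring Bool := by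
    refine Coloring.mk (fun a => s a) ?_
    rintro ⟨a, ha⟩ ⟨b, hb⟩ hab
    simp only [Finset.coe_compl, Finset.coe_insert, Finset.coe_singleton, Set.mem_compl_iff,
      Set.mem_insert_iff, Set.mem_singleton_iff, not_or] at ha hb
    exact hs a b ha.1 ha.2 hb.1 hb.2 hab
  exact c.colorable

theorem not_adj_of_induce_colorable_one {V : Type*} [Fintype V] [DecidableEq V]
    {G : SimpleGraph V} {S : Finset V} (h : (G.induce (↑(Sᶜ) : Set V)).Colorable 1) {a b : V}
    (ha : a ∉ S) (hb : b ∉ S) : ¬ G.Adj a b := by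
  intro hab
  obtain ⟨c⟩ := h
  exact c.valid (v := ⟨a, by simpa using ha⟩) (w := ⟨b, by simpa using hb⟩) (by simpa using hab)
    (Subsingleton.elim _ _)

theorem colorable_two_of_indep {V : Type*} [Fintype V] [DecidableEq V]
    {G : SimpleGraph V} {S : Finset V} (h : (G.induce (↑(Sᶜ) : Set V)).Colorable 1)
    (hi : ∀ x ∈ S, ∀ y ∈ S, ¬ G.Adj x y) : G.Colorable 2 := by
  have c : G.Coloring Bool := by
    refine Coloring.mk (fun a => decide (a ∈ S)) fun {a b} hab he => ?_
    by_cases ha : a ∈ S <;> by_cases hb : b ∈ S <;> simp [ha, hb] at he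
    · exact hi a ha b hb hab
    · exact not_adj_of_induce_colorable_one h ha hb hab
  exact c.colorable

theorem isEdgeCritical_of_params {G : SimpleGraph (Fin 9)} (hd : maxDeg G = 4) (hc : chi G = 3)
    (hi : ivsChi G = 3) (hv : vsChi G = 2) : IsEdgeCritical G := by
  have hnot : ∀ S : Finset (Fin 9), S.card = 2 → (∀ x ∈ S, ∀ y ∈ S, ¬ G.Adj x y) →
      ¬ (G.induce (↑(Sᶜ) : Set (Fin 9))).Colorable 2 := by
    intro S hS hS' h2
    have h1 : ¬ (G.induce (↑(Sᶜ) : Set (Fin 9))).Colorable 1 := fun h1 => by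
      have := (chi_le_iff G 2).2 (colorable_two_of_indep h1 hS')
      omega
    rw [← chi_le_iff] at h1 h2
    have : ivsChi G ≤ 2 := Nat.sInf_le ⟨S, hS, hS', by omega⟩
    omega
  refine ⟨fun v => hd ▸ deg_le_maxDeg G v, (chi_le_iff G 3).1 hc.le, ?_, ?_⟩
  · intro p q hpq hadj hb
    refine hnot {p, q} (Finset.card_pair hpq) ?_ (colorable_induce_of_bipartiteAway hb)
    have hadj' : ¬ G.Adj q p := fun h => hadj h.symm
    simp [hadj, hadj']
  · have hmem : vsChi G ∈ {n : ℕ | ∃ S : Finset (Fin 9), S.card = n ∧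
        chi (G.induce (↑(Sᶜ) : Set (Fin 9))) = chi G - 1} := by
      refine Nat.sInf_mem (Set.nonempty_iff_ne_empty.2 fun h0 => ?_)
      rw [vsChi, h0, Nat.sInf_empty] at hv
      omega
    obtain ⟨S, hS, hS'⟩ := hmem
    rw [hv] at hS
    have h2 : (G.induce (↑(Sᶜ) : Set (Fin 9))).Colorable 2 := by rw [← chi_le_iff]; omega
    obtain ⟨p, q, hpq, rfl⟩ := Finset.card_eq_two.1 hS
    refine ⟨p, q, ?_, bipartiteAway_of_induce h2 subset_rfl⟩
    by_contra hadj
    have hadj' : ¬ G.Adj q p := fun h => hadj h.symm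
    exact hnot {p, q} hS (by simp [hadj', hadj]) h2

/-- Every color class of a proper `3`-coloring has at least three vertices. -/
theorem IsEdgeCritical.three_le_card_class {G : SimpleGraph (Fin 9)} (hG : IsEdgeCritical G)
    (c : G.Coloring (Fin 3)) (x : Fin 3) : 3 ≤ (Finset.univ.filter fun v => c v = x).card := by
  by_contra! hlt
  obtain ⟨p, q, hpq, hadj, hsub⟩ := exists_pair_of_card_le_two hG.deg_le
    (S := Finset.univ.filter fun v => c v = x) (by omega) (fun a ha b hb hab => by
      simp only [Finset.mem_filter, Finset.mem_univ, true_and] at ha hb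
      exact c.valid hab (ha.trans hb.symm))
  refine hG.not_bipartiteAway p q hpq hadj
    ⟨fun v => decide (c v = x + 1), fun a b ha ha' hb hb' hab he => ?_⟩
  have hne : ∀ a, a ≠ p → a ≠ q → c a ≠ x := fun a h1 h2 h3 => by
    have := hsub (Finset.mem_filter.2 ⟨Finset.mem_univ a, h3⟩)
    simp [h1, h2] at this
  have h1 := hne a ha ha'
  have h2 := hne b hb hb'
  have h3 := c.valid hab
  simp only [decide_eq_decide] at he
  generalize c a = y at *
  generalize c b = z at *
  clear hlt hsub hne
  revert x y z
  decide

theorem IsEdgeCritical.card_class {G : SimpleGraph (Fin 9)} (hG : IsEdgeCritical G)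
    (c : G.Coloring (Fin 3)) (x : Fin 3) : (Finset.univ.filter fun v => c v = x).card = 3 := by
  have h := Finset.card_eq_sum_card_fiberwise (f := c) (s := Finset.univ) (t := Finset.univ)
    (by simp)
  simp only [Finset.card_univ, Fintype.card_fin, Fin.sum_univ_three] at h
  have h0 := hG.three_le_card_class c 0
  have h1 := hG.three_le_card_class c 1
  have h2 := hG.three_le_card_class c 2
  fin_cases x <;> simp <;> omega

/-- Every vertex sees both color classes other than its own. -/
theorem IsEdgeCritical.exists_adj_color {G : SimpleGraph (Fin 9)} (hG : IsEdgeCritical G)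
    (c : G.Coloring (Fin 3)) (w : Fin 9) (y : Fin 3) (hy : y ≠ c w) :
    ∃ v, G.Adj w v ∧ c v = y := by
  classical
  by_contra! hn
  let c' : G.Coloring (Fin 3) := Coloring.mk (Function.update c w y) (by
    intro a b hab
    by_cases ha : a = w
    · subst ha
      rw [Function.update_self, Function.update_of_ne hab.ne']
      exact (hn b hab).symm
    · by_cases hb : b = w
      · subst hb
        rw [Function.update_self, Function.update_of_ne ha]
        exact hn a hab.symm
      · rw [Function.update_of_ne ha, Function.update_of_ne hb]
        exact c.valid hab)
  have h1 := hG.card_class c (c w)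
  have h2 := hG.card_class c' (c w)
  have h3 : (Finset.univ.filter fun v => c' v = c w) ⊂ Finset.univ.filter fun v => c v = c w := by
    refine Finset.ssubset_iff_subset_ne.2 ⟨fun v hv => ?_, fun he => ?_⟩
    · simp only [Finset.mem_filter, Finset.mem_univ, true_and] at hv ⊢
      change Function.update c w y v = c w at hv
      by_cases hvw : v = w
      · rw [hvw]
      · rwa [Function.update_of_ne hvw] at hv
    · have : w ∈ Finset.univ.filter fun v => c' v = c w := by rw [he]; simp
      simp only [Finset.mem_filter, Finset.mem_univ, true_and] at this
      change Function.update c w y w = c w at this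
      rw [Function.update_self] at this
      exact hy this
  have := Finset.card_lt_card h3
  omega

theorem IsEdgeCritical.exists_two_adj {G : SimpleGraph (Fin 9)} (hG : IsEdgeCritical G)
    (w : Fin 9) : ∃ a b, a ≠ b ∧ G.Adj w a ∧ G.Adj w b := by
  obtain ⟨c⟩ := hG.colorable
  have h3 : ∀ x : Fin 3, x + 1 ≠ x ∧ x + 2 ≠ x ∧ x + 1 ≠ x + 2 := by decide
  obtain ⟨h, h', h''⟩ := h3 (c w)
  obtain ⟨a, ha, hca⟩ := hG.exists_adj_color c w _ h
  obtain ⟨b, hb, hcb⟩ := hG.exists_adj_color c w _ h'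
  exact ⟨a, b, fun hab => h'' (by rw [← hca, ← hcb, hab]), ha, hb⟩

theorem params_of_isEdgeCritical {G : SimpleGraph (Fin 9)} (hG : IsEdgeCritical G)
    (h4 : ∃ v, deg G v = 4) :
    maxDeg G = 4 ∧ chi G = 3 ∧ ivsChi G = 3 ∧ vsChi G = 2 := by
  have hsmall : ∀ S : Finset (Fin 9), S.card ≤ 2 → (∀ x ∈ S, ∀ y ∈ S, ¬ G.Adj x y) →
      ¬ (G.induce (↑(Sᶜ) : Set (Fin 9))).Colorable 2 := by
    intro S hS hS' h2
    obtain ⟨p, q, hpq, hadj, hsub⟩ := exists_pair_of_card_le_two hG.deg_le hS hS'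
    exact hG.not_bipartiteAway p q hpq hadj (bipartiteAway_of_induce h2 hsub)
  have hn2 : ¬ G.Colorable 2 := fun h => hsmall ∅ (by simp) (by simp)
    (h.of_hom (Embedding.induce _).toHom)
  have hchi : chi G = 3 := by
    have h3 := (chi_le_iff G 3).2 hG.colorable
    rw [← chi_le_iff] at hn2
    omega
  have hn1 : ∀ S : Finset (Fin 9), (∀ x ∈ S, ∀ y ∈ S, ¬ G.Adj x y) →
      ¬ (G.induce (↑(Sᶜ) : Set (Fin 9))).Colorable 1 :=
    fun S hS h => hn2 (colorable_two_of_indep h hS)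
  refine ⟨?_, hchi, ?_, ?_⟩
  · obtain ⟨v, hv⟩ := h4
    exact le_antisymm (maxDeg_le G hG.deg_le) (hv ▸ deg_le_maxDeg G v)
  · obtain ⟨c⟩ := hG.colorable
    have hind : ∀ x ∈ Finset.univ.filter fun v => c v = 0,
        ∀ y ∈ Finset.univ.filter fun v => c v = 0, ¬ G.Adj x y := fun a ha b hb hab => by
      simp only [Finset.mem_filter, Finset.mem_univ, true_and] at ha hb
      exact c.valid hab (ha.trans hb.symm)
    have hmem : 3 ∈ {n : ℕ | ∃ S : Finset (Fin 9), S.card = n ∧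
        (∀ x ∈ S, ∀ y ∈ S, ¬ G.Adj x y) ∧
        chi (G.induce (↑(Sᶜ) : Set (Fin 9))) = chi G - 1} := by
      refine ⟨_, hG.card_class c 0, hind, ?_⟩
      have h1 := hn1 _ hind
      have h2 :
          (G.induce (↑((Finset.univ.filter fun v => c v = 0)ᶜ) : Set (Fin 9))).Colorable 2 := by
        have d : (G.induce (↑((Finset.univ.filter fun v => c v = 0)ᶜ) : Set (Fin 9))).Coloring
            Bool := by
          refine Coloring.mk (fun a => decide (c a = 1)) ?_
          rintro ⟨a, ha⟩ ⟨b, hb⟩ hab he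
          have h3 := c.valid (show G.Adj a b from hab)
          simp only [Finset.coe_compl, Finset.coe_filter, Finset.mem_univ, true_and,
            Set.mem_compl_iff, Set.mem_ofPred_eq, decide_eq_decide] at ha hb he
          generalize c a = y at *
          generalize c b = z at *
          clear hind h1
          revert y z
          decide
        exact d.colorable
      rw [← chi_le_iff] at h1 h2
      omega
    refine le_antisymm (Nat.sInf_le hmem) (le_csInf ⟨3, hmem⟩ ?_)
    rintro n ⟨S, rfl, hS, hS'⟩
    by_contra! hlt
    exact hsmall S (by omega) hS (by rw [← chi_le_iff]; omega)
  · obtain ⟨p, q, hpq, hb⟩ := hG.exists_edge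
    have hmem : 2 ∈ {n : ℕ | ∃ S : Finset (Fin 9), S.card = n ∧
        chi (G.induce (↑(Sᶜ) : Set (Fin 9))) = chi G - 1} := by
      refine ⟨{p, q}, Finset.card_pair hpq.ne, ?_⟩
      have h2 := colorable_induce_of_bipartiteAway hb
      have h1 : ¬ (G.induce (↑(({p, q} : Finset (Fin 9))ᶜ) : Set (Fin 9))).Colorable 1 := by
        intro h1
        obtain ⟨r, hpr, hadj⟩ := exists_not_adj hG.deg_le p
        refine hG.not_bipartiteAway p r hpr hadj
          ⟨fun a => decide (a = q), fun a b ha _ hb _ hab he => ?_⟩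
        simp only [decide_eq_decide] at he
        by_cases haq : a = q
        · exact hab.ne (haq.trans (he.1 haq).symm)
        · exact not_adj_of_induce_colorable_one h1 (a := a) (b := b) (by simp [ha, haq])
            (by simp [hb, mt he.2 haq]) hab
      rw [← chi_le_iff] at h1 h2
      omega
    refine le_antisymm (Nat.sInf_le hmem) (le_csInf ⟨2, hmem⟩ ?_)
    rintro n ⟨S, rfl, hS'⟩
    by_contra! hlt
    refine hsmall S (by omega) (fun x hx y hy hxy => ?_) (by rw [← chi_le_iff]; omega)
    exact hxy.ne (Finset.card_le_one.1 (by omega) x hx y hy)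

/-- The adjacency of `v` to the first two vertices together with its side. -/
def coreKey (H : SimpleGraph (Fin 9)) [DecidableRel H.Adj] (σ : Fin 9 → Bool) (v : Fin 9) : ℕ :=
  (decide (H.Adj 0 v)).toNat + 2 * (decide (H.Adj 1 v)).toNat + 4 * (σ v).toNat

/-- The neighbors of `v` among the first five vertices, as a bit mask. -/
def coreNeighbors (H : SimpleGraph (Fin 9)) [DecidableRel H.Adj] (v : Fin 9) : ℕ :=
  (decide (H.Adj 0 v)).toNat + 2 * (decide (H.Adj 1 v)).toNat + 4 * (decide (H.Adj 2 v)).toNat +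
    8 * (decide (H.Adj 3 v)).toNat + 16 * (decide (H.Adj 4 v)).toNat

/-- The labeling of `H` found by sorting: deleting the adjacent vertices `0` and `1` leaves a
bipartite graph with sides `σ`, one of which contains the last four vertices. -/
structure IsNormalized (H : SimpleGraph (Fin 9)) [DecidableRel H.Adj] (σ : Fin 9 → Bool) :
    Prop where
  adj : H.Adj 0 1
  side : ∀ v, 5 ≤ v → σ v = true
  separates : ∀ a b, 2 ≤ a → 2 ≤ b → H.Adj a b → σ a ≠ σ b
  key_two_le : coreKey H σ 2 ≤ coreKey H σ 3
  key_three_le : coreKey H σ 3 ≤ coreKey H σ 4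
  neighbors_five_le : coreNeighbors H 5 ≤ coreNeighbors H 6
  neighbors_six_le : coreNeighbors H 6 ≤ coreNeighbors H 7
  neighbors_seven_le : coreNeighbors H 7 ≤ coreNeighbors H 8

theorem BipartiteAway.exists_large_side {G : SimpleGraph (Fin 9)} {u v : Fin 9} (huv : u ≠ v)
    (h : BipartiteAway G u v) :
    ∃ s : Fin 9 → Bool, (∀ a b, a ≠ u → a ≠ v → b ≠ u → b ≠ v → G.Adj a b → s a ≠ s b) ∧
      4 ≤ (Finset.univ.filter fun w => s w = true ∧ w ≠ u ∧ w ≠ v).card := by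
  obtain ⟨s, hs⟩ := h
  by_cases h4 : 4 ≤ (Finset.univ.filter fun w => s w = true ∧ w ≠ u ∧ w ≠ v).card
  · exact ⟨s, hs, h4⟩
  · refine ⟨fun w => !s w, fun a b ha ha' hb hb' hab he =>
      hs a b ha ha' hb hb' hab (by simpa using he), ?_⟩
    have hsub : (Finset.univ : Finset (Fin 9)) ⊆
        ((Finset.univ.filter fun w => s w = true ∧ w ≠ u ∧ w ≠ v) ∪
          (Finset.univ.filter fun w => (!s w) = true ∧ w ≠ u ∧ w ≠ v)) ∪ {u, v} := by
      intro w _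
      by_cases hu : w = u <;> by_cases hv : w = v <;> cases hw : s w <;> simp [hu, hv, hw]
    have h1 := Finset.card_le_card hsub
    have h2 := Finset.card_union_le ((Finset.univ.filter fun w => s w = true ∧ w ≠ u ∧ w ≠ v) ∪
          (Finset.univ.filter fun w => (!s w) = true ∧ w ≠ u ∧ w ≠ v)) {u, v}
    have h3 := Finset.card_union_le (Finset.univ.filter fun w => s w = true ∧ w ≠ u ∧ w ≠ v)
          (Finset.univ.filter fun w => (!s w) = true ∧ w ≠ u ∧ w ≠ v)
    rw [Finset.card_pair huv] at h2
    rw [Finset.card_univ, Fintype.card_fin] at h1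
    change 4 ≤ (Finset.univ.filter fun w => (!s w) = true ∧ w ≠ u ∧ w ≠ v).card
    omega

/-- A finite set can be listed in increasing order of any key. -/
theorem exists_sorted_enumeration {n k : ℕ} (A : Finset (Fin n)) (hA : A.card = k)
    (f : Fin n → ℕ) :
    ∃ a : Fin k → Fin n, Function.Injective a ∧ (∀ i, a i ∈ A) ∧ Monotone (f ∘ a) :=
  ⟨A.orderEmbOfFin hA ∘ Tuple.sort (f ∘ A.orderEmbOfFin hA),
    (A.orderEmbOfFin hA).injective.comp (Equiv.injective _),
    fun _ => A.orderEmbOfFin_mem hA _, Tuple.monotone_sort (f ∘ A.orderEmbOfFin hA)⟩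

theorem IsEdgeCritical.exists_normalized {G : SimpleGraph (Fin 9)} (hG : IsEdgeCritical G) :
    ∃ (e : Fin 9 ≃ Fin 9) (σ : Fin 9 → Bool), letI := Classical.decRel (G.comap e).Adj
      IsNormalized (G.comap e) σ := by
  classical
  obtain ⟨u, v, huv, hb⟩ := hG.exists_edge
  obtain ⟨s, hs, h4⟩ := hb.exists_large_side huv.ne
  obtain ⟨B, hBs, hB⟩ := Finset.exists_subset_card_eq h4
  have hBt : ∀ w ∈ B, s w = true ∧ w ≠ u ∧ w ≠ v := fun w hw => by simpa using hBs hw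
  have huB : u ∉ B := fun h => (hBt u h).2.1 rfl
  have hvB : v ∉ B := fun h => (hBt v h).2.2 rfl
  have hA : (insert u (insert v B))ᶜ.card = 3 := by
    rw [Finset.card_compl, Finset.card_insert_of_notMem (by simp [huv.ne, huB]),
      Finset.card_insert_of_notMem hvB, hB, Fintype.card_fin]
  obtain ⟨a, ha, haA, hak⟩ := exists_sorted_enumeration _ hA fun w =>
    (decide (G.Adj u w)).toNat + 2 * (decide (G.Adj v w)).toNat + 4 * (s w).toNat
  obtain ⟨b, hb', hbB, hbk⟩ := exists_sorted_enumeration _ hB fun w =>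
    (decide (G.Adj u w)).toNat + 2 * (decide (G.Adj v w)).toNat +
      4 * (decide (G.Adj (a 0) w)).toNat + 8 * (decide (G.Adj (a 1) w)).toNat +
        16 * (decide (G.Adj (a 2) w)).toNat
  simp only [Finset.mem_compl, Finset.mem_insert, not_or] at haA
  have hab : ∀ i j, a i ≠ b j := fun i j h => (haA i).2.2 (h ▸ hbB j)
  have hnodup : [u, v, a 0, a 1, a 2, b 0, b 1, b 2, b 3].Nodup := by
    have h1 : ∀ i, u ≠ a i := fun i => Ne.symm (haA i).1
    have h2 : ∀ i, v ≠ a i := fun i => Ne.symm (haA i).2.1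
    have h3 : ∀ i, u ≠ b i := fun i => Ne.symm (hBt _ (hbB i)).2.1
    have h4 : ∀ i, v ≠ b i := fun i => Ne.symm (hBt _ (hbB i)).2.2
    simp [huv.ne, h1, h2, h3, h4, hab, ha.eq_iff, hb'.eq_iff]
  let ef : Fin 9 → Fin 9 := fun i => [u, v, a 0, a 1, a 2, b 0, b 1, b 2, b 3].get i
  have hinj : Function.Injective ef := List.nodup_iff_injective_get.1 hnodup
  have haway : ∀ i : Fin 9, 2 ≤ i → ef i ≠ u ∧ ef i ≠ v := fun i hi =>
    ⟨fun h => absurd (hinj (h.trans (show u = ef 0 from rfl))) (by omega),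
      fun h => absurd (hinj (h.trans (show v = ef 1 from rfl))) (by omega)⟩
  refine ⟨Equiv.ofBijective ef (Finite.injective_iff_bijective.1 hinj), s ∘ ef, ?_⟩
  refine ⟨huv, fun i hi => ?_, fun i j hi hj hij => hs _ _ (haway i hi).1 (haway i hi).2
    (haway j hj).1 (haway j hj).2 hij, ?_, ?_, ?_, ?_, ?_⟩
  · have : ∀ i : Fin 9, 5 ≤ i → i = 5 ∨ i = 6 ∨ i = 7 ∨ i = 8 := by decide
    rcases this i hi with rfl | rfl | rfl | rfl
    exacts [(hBt _ (hbB 0)).1, (hBt _ (hbB 1)).1, (hBt _ (hbB 2)).1, (hBt _ (hbB 3)).1]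
  · exact hak (show (0 : Fin 3) ≤ 1 by decide)
  · exact hak (show (1 : Fin 3) ≤ 2 by decide)
  · exact hbk (show (0 : Fin 4) ≤ 1 by decide)
  · exact hbk (show (1 : Fin 4) ≤ 2 by decide)
  · exact hbk (show (2 : Fin 4) ≤ 3 by decide)

theorem IsEdgeCritical.comap {G : SimpleGraph (Fin 9)} (hG : IsEdgeCritical G)
    (e : Fin 9 ≃ Fin 9) : IsEdgeCritical (G.comap e) := by
  classical
  refine ⟨fun v => ?_, ?_, ?_, ?_⟩
  · have h := hG.deg_le (e v)
    rw [deg_eq_sum] at h ⊢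
    rw [← Equiv.sum_comp e] at h
    exact h
  · exact hG.colorable.of_hom (Hom.comap e G)
  · rintro p q hpq hadj ⟨s, hs⟩
    refine hG.not_bipartiteAway (e p) (e q) (by simpa using hpq) hadj
      ⟨s ∘ e.symm, fun a b h1 h2 h3 h4 hab => hs _ _ ?_ ?_ ?_ ?_ (by simpa using hab)⟩
    all_goals rwa [Ne, Equiv.symm_apply_eq]
  · obtain ⟨p, q, hpq, s, hs⟩ := hG.exists_edge
    refine ⟨e.symm p, e.symm q, by simpa using hpq,
      ⟨s ∘ e, fun a b h1 h2 h3 h4 hab => hs _ _ ?_ ?_ ?_ ?_ hab⟩⟩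
    all_goals rwa [Ne, ← Equiv.eq_symm_apply]

/-- The position of the pair `{i, j}` in the colexicographic order of pairs. -/
def pairIndex (i j : ℕ) : ℕ :=
  if i < j then j * (j - 1) / 2 + i else i * (i - 1) / 2 + j

/-- The adjacency relation stored in the bits of `g`. -/
def codeAdj (g i j : ℕ) : Bool := g.testBit (pairIndex i j)

theorem pairIndex_comm (i j : ℕ) : pairIndex i j = pairIndex j i := by
  unfold pairIndex
  rcases lt_trichotomy i j with h | h | h
  · simp [h, h.le]
  · simp [h]
  · simp [h, h.le]

/-- The graph whose edges are the bits of `g`. -/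
def graphOfCode (g : ℕ) : SimpleGraph (Fin 9) where
  Adj i j := i ≠ j ∧ codeAdj g i j = true
  symm := ⟨fun i j h => ⟨h.1.symm, by rw [codeAdj, pairIndex_comm]; exact h.2⟩⟩
  loopless := ⟨fun _ h => h.1 rfl⟩

instance (g : ℕ) : DecidableRel (graphOfCode g).Adj :=
  fun i j => inferInstanceAs (Decidable (i ≠ j ∧ codeAdj g i j = true))

/-- The sets of two to four of the first five vertices, as bit masks, each with the
hexadecimal number having a digit `1` at the elements of the set. -/
def typeTable : List (ℕ × ℕ) := [
    (3, 17), (5, 257), (6, 272), (7, 273), (9, 4097), (10, 4112), (11, 4113), (12, 4352),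
    (13, 4353), (14, 4368), (15, 4369), (17, 65537), (18, 65552), (19, 65553), (20, 65792),
    (21, 65793), (22, 65808), (23, 65809), (24, 69632), (25, 69633), (26, 69648), (27, 69649),
    (28, 69888), (29, 69889), (30, 69904)]

/-- `f n`, written so that reduction evaluates `n` first. -/
def withValue {α : Type*} (n : ℕ) (f : ℕ → α) : α :=
  Nat.rec (f 0) (fun k _ => f (Nat.succ k)) n

theorem withValue_eq {α : Type*} (n : ℕ) (f : ℕ → α) : withValue n f = f n := by
  cases n <;> rfl

/-- Add further vertices to the graph coded by `g`, writing their neighborhoods at the bit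
positions in `ns`, and collect the results with `leaf`. The neighborhoods come in increasing order
from the table; the hexadecimal digits of `d` are the degrees of the first five vertices plus
three, and the mask `559240`, with hexadecimal digits `88888`, detects a degree above four. Like
the other functions of the search it is a bare recursor, which the kernel reduces much
faster than compiled pattern matching. -/
def extend (leaf : ℕ → List ℕ → List ℕ) (ns : List ℕ) :
    List (ℕ × ℕ) → ℕ → ℕ → List ℕ → List ℕ :=
  List.rec (fun _ _ g acc => leaf g acc)
    (fun n _ ih ts d g acc => List.rec acc (fun p ps r => withValue (Nat.add d p.2) fun d' =>
      Bool.rec r (withValue (Nat.add g (Nat.mul p.1 (Nat.pow 2 n))) fun g' => ih (p :: ps) d' g' r)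
        (Nat.beq (Nat.land d' 559240) 0)) ts) ns

/-- Two vertices, one side of a bipartition of the others, and a set of pairs. -/
structure Obstruction where
  fst : ℕ
  snd : ℕ
  side : ℕ
  pairs : ℕ

/-- The pair `{i, j}` is the deleted pair or lies inside one side of the bipartition. -/
def Obstruction.covers (o : Obstruction) (i j : ℕ) : Bool :=
  (i == o.fst && j == o.snd) ||
    (i != o.fst && i != o.snd && j != o.fst && j != o.snd && (o.side.testBit i == o.side.testBit j))

/-- Obstructions whose pairs all lie inside the first five or inside the last four vertices. -/
def coreObstructions : List Obstruction := [
    ⟨0, 4, 14, 60331917428⟩, ⟨0, 2, 26, 60331917970⟩, ⟨1, 2, 25, 60331917900⟩,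
    ⟨1, 4, 13, 60331917482⟩, ⟨0, 3, 22, 60331917708⟩, ⟨1, 3, 21, 60331917650⟩]

/-- Obstructions used to discard codes on all nine vertices. -/
def obstructions : List Obstruction := [
    ⟨4, 5, 14, 51944407092⟩, ⟨4, 5, 13, 52214972458⟩, ⟨0, 8, 14, 504905780⟩, ⟨1, 8, 13, 773341226⟩,
    ⟨0, 6, 28, 43557882656⟩, ⟨0, 8, 28, 475073312⟩, ⟨1, 8, 28, 741377824⟩, ⟨4, 6, 14, 43287839796⟩,
    ⟨0, 8, 112, 299384884⟩, ⟨0, 7, 28, 26309888800⟩, ⟨1, 2, 120, 34632131076⟩,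
    ⟨0, 3, 6, 64660979724⟩, ⟨1, 7, 28, 26043516704⟩, ⟨4, 6, 13, 43558373418⟩,
    ⟨1, 8, 112, 565723178⟩, ⟨0, 2, 120, 34902663682⟩, ⟨0, 3, 116, 34902528264⟩,
    ⟨1, 2, 112, 36796121100⟩, ⟨0, 3, 112, 35984523276⟩, ⟨0, 8, 60, 406942496⟩,
    ⟨0, 5, 28, 52214957856⟩, ⟨1, 3, 112, 35713990674⟩, ⟨0, 2, 112, 37066653714⟩,
    ⟨0, 2, 232, 5051261058⟩, ⟨1, 3, 116, 34631995664⟩, ⟨2, 4, 170, 17536428304⟩,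
    ⟨0, 2, 10, 64660979730⟩, ⟨0, 6, 60, 34900865824⟩, ⟨1, 2, 56, 51944415748⟩,
    ⟨0, 7, 60, 17718932256⟩, ⟨0, 8, 120, 282878468⟩, ⟨1, 2, 104, 38960111684⟩,
    ⟨1, 8, 84, 623518984⟩, ⟨3, 4, 166, 17528035844⟩, ⟨0, 3, 52, 52214976776⟩,
    ⟨0, 8, 56, 415457796⟩, ⟨0, 8, 116, 291131664⟩, ⟨1, 8, 120, 549216770⟩,
    ⟨4, 6, 137, 10219952140⟩, ⟨0, 8, 84, 357181712⟩, ⟨1, 7, 56, 18526429698⟩,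
    ⟨1, 8, 56, 681763330⟩, ⟨2, 4, 169, 17802798344⟩, ⟨2, 4, 194, 11144340744⟩,
    ⟨2, 4, 201, 9280194824⟩, ⟨3, 4, 194, 10070595074⟩, ⟨0, 7, 56, 18792800772⟩,
    ⟨1, 8, 116, 557469960⟩, ⟨2, 3, 162, 21815134304⟩, ⟨3, 4, 165, 17794405890⟩,
    ⟨3, 4, 197, 9271675394⟩, ⟨4, 6, 138, 9953612818⟩, ⟨4, 6, 169, 1697129484⟩,
    ⟨4, 6, 170, 1430792210⟩]

/-- The code `g` contains a pair of each obstruction. -/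
def hitsAll (os : List Obstruction) (g : ℕ) : Bool :=
  List.rec true (fun o _ r => Bool.rec r false (Nat.beq (Nat.land g o.pairs) 0)) os

/-- The set of neighbors of `v` below `v`. -/
def lowerNeighbors (g v : ℕ) : ℕ := Nat.mod (Nat.div g (Nat.pow 2 (v * (v - 1) / 2))) (Nat.pow 2 v)

/-- Whether the vertices in the list can be added one by one to the classes `a`, `b`, `c` so that no
`v` joins a class meeting `r v`. -/
def extendsColoring (r : ℕ → ℕ) (vs : List ℕ) : ℕ → ℕ → ℕ → Bool :=
  List.rec (fun _ _ _ => true) (fun v _ ih a b c => withValue (r v) fun n =>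
    Bool.rec (Bool.rec
      (Bool.rec false (ih a b (Nat.lor c (Nat.pow 2 v))) (Nat.beq (Nat.land n c) 0))
      true (Bool.rec false (ih a (Nat.lor b (Nat.pow 2 v)) c) (Nat.beq (Nat.land n b) 0)))
      true (Bool.rec false (ih (Nat.lor a (Nat.pow 2 v)) b c) (Nat.beq (Nat.land n a) 0))) vs

/-- The code of a graph on the first five vertices with edge `{0, 1}`: `x`, `y`, `z` describe the
adjacency of `2`, `3`, `4` to `0` and `1`, and `w` the edges among them. -/
def coreCode (x y z w : ℕ) : ℕ :=
  1 + 2 * (x % 4) + 8 * (y % 4) + 32 * (w % 2) + 64 * (z % 4) + 256 * (w / 2 % 2) + 512 * (w / 4)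

/-- The degrees in `coreCode x y z w` plus three, as hexadecimal digits; the digits of vertices that
may not get further neighbors are `7`. -/
def coreDegrees (x y z w : ℕ) : ℕ :=
  (4 + x % 2 + y % 2 + z % 2) + 16 * (4 + x / 2 % 2 + y / 2 % 2 + z / 2 % 2) +
  256 * (if x < 4 then 3 + x % 2 + x / 2 % 2 + w % 2 + w / 2 % 2 else 7) +
  4096 * (if y < 4 then 3 + y % 2 + y / 2 % 2 + w % 2 + w / 4 else 7) +
  65536 * (if z < 4 then 3 + z % 2 + z / 2 % 2 + w / 2 % 2 + w / 4 else 7)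

/-- The sides `x / 4`, `y / 4`, `z / 4` of `2`, `3`, `4` are compatible with the edges `w`, and the
core is not yet excluded by an obstruction. -/
def coreAdmissible (x y z w : ℕ) : Bool :=
  Nat.ble x y && Nat.ble y z && (Nat.beq (w % 2) 0 || !Nat.beq (x / 4) (y / 4)) &&
    (Nat.beq (w / 2 % 2) 0 || !Nat.beq (x / 4) (z / 4)) &&
    (Nat.beq (w / 4) 0 || !Nat.beq (y / 4) (z / 4)) && hitsAll coreObstructions (coreCode x y z w)

/-- Keep the code `g` if it hits all obstructions and has a coloring with three colors. -/
def collect (g : ℕ) (acc : List ℕ) : List ℕ :=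
  bif hitsAll obstructions g then
    bif extendsColoring (lowerNeighbors g) [2, 3, 4, 5, 6, 7, 8] 1 2 0 then g :: acc else acc
  else acc

/-- The codes found by the search from a given core. -/
def candidatesFrom (x y z w : ℕ) : List ℕ :=
  if coreAdmissible x y z w then
    withValue (coreDegrees x y z w) fun d => withValue (coreCode x y z w) fun g =>
      extend collect [10, 15, 21, 28] typeTable d g []
  else []

/-- The numbers below eight. -/
def octal : List ℕ := [0, 1, 2, 3, 4, 5, 6, 7]

/-- The codes found by the search. -/
def candidates : List ℕ :=
  octal.flatMap fun x => octal.flatMap fun y => octal.flatMap fun z =>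
    octal.flatMap fun w => candidatesFrom x y z w

/-- Codes of the thirty graphs. -/
def representatives : List ℕ := [
    6484888769, 7558630593, 7575407809, 8114083009, 7025759425, 8099501249, 8116278465, 6757356737,
    7831098561, 8114214081, 7562695873, 7571084481, 8112149697, 7025890497, 8099632321, 8108020929,
    8116409537, 7831229633, 7839618241, 8114345153, 7575280833, 7023762625, 8105893057, 7562763457,
    7571152065, 8112217281, 7575411905, 8116417729, 8114353345, 6484898003]

/-- For each candidate the index of a representative and an isomorphism, as decimal digits. -/
def isomorphisms : List (ℕ × ℕ) := [
    (0, 876543210), (1, 876543210), (1, 876542310), (2, 876543210), (3, 876543210), (0, 658713204),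
    (4, 876543210), (5, 876543210), (5, 875642310), (6, 876543210), (7, 876543210), (8, 876543210),
    (8, 875642301), (9, 876543210), (7, 678513240), (10, 876543210), (8, 857602341),
    (11, 876543210), (12, 876543210), (1, 658713204), (13, 876543210), (14, 876543210),
    (15, 876543210), (16, 876543210), (10, 678513240), (17, 876543210), (11, 768513240),
    (12, 867513240), (18, 876543210), (19, 876543210), (3, 867513240), (8, 678513240),
    (17, 678513240), (9, 867513240), (18, 678513240), (19, 867513240), (7, 785642310),
    (8, 876543201), (8, 875642310), (9, 875642310), (0, 658713240), (4, 876543201), (5, 876543201),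
    (5, 875642301), (6, 876543201), (7, 678513204), (10, 876543201), (8, 857602314),
    (11, 876543201), (12, 876543201), (10, 678513204), (17, 876543201), (11, 678513204),
    (18, 876543201), (12, 867513204), (19, 786543201), (1, 658713240), (13, 876543201),
    (14, 876543201), (15, 876543201), (16, 876543201), (3, 867513204), (8, 678513204),
    (17, 678513204), (9, 867513204), (18, 678513204), (19, 867513204), (7, 765812340),
    (8, 856703241), (11, 875642310), (10, 875642310), (12, 875642310), (7, 765812304),
    (8, 856703214), (11, 875642301), (10, 875642301), (12, 875642301), (4, 658703241),
    (13, 658703241), (13, 657802341), (20, 876543210), (21, 876543210), (21, 876543201),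
    (21, 756802341), (22, 876543210), (22, 876543201), (10, 658703214), (17, 856703241),
    (11, 568702314), (23, 876543210), (18, 856702341), (24, 876543210), (25, 876543210),
    (10, 658703241), (17, 856703214), (11, 568702341), (23, 876543201), (18, 856702314),
    (24, 876543201), (25, 876543201), (5, 658703241), (14, 658703241), (15, 658702341),
    (26, 876543210), (3, 876542310), (1, 658712304), (13, 786542310), (15, 876542310),
    (14, 876542310), (16, 876542310), (11, 768512340), (10, 768512340), (12, 867512340),
    (18, 876542310), (17, 876542310), (19, 876542310), (8, 768512340), (9, 867512340),
    (18, 678512340), (3, 867512340), (17, 678512340), (19, 867512340), (11, 678512304),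
    (18, 876542301), (10, 768512304), (12, 867512304), (17, 876542301), (19, 786542301),
    (1, 658712340), (13, 786542301), (15, 876542301), (14, 876542301), (16, 876542301),
    (8, 768512304), (9, 867512304), (18, 678512304), (3, 867512304), (17, 678512304),
    (19, 867512304), (21, 756803241), (21, 786542301), (22, 876542310), (21, 786542310),
    (22, 876542301), (11, 658703214), (18, 856703241), (10, 568702314), (24, 876542310),
    (17, 856702341), (23, 876542310), (25, 876542310), (11, 658703241), (18, 856703214),
    (10, 568702341), (24, 876542301), (17, 856702314), (23, 876542301), (25, 876542301),
    (5, 568702341), (15, 658703241), (14, 658702341), (26, 876542310), (22, 758603241),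
    (22, 578602341), (2, 658713204), (20, 658713204), (26, 658713204), (26, 658712304),
    (27, 876543210), (23, 758613240), (24, 758613240), (25, 857613240), (24, 578612340),
    (25, 856713204), (23, 758612340), (25, 857612340), (25, 856712304), (28, 876543210),
    (12, 658703214), (19, 758603241), (12, 568702314), (25, 658703214), (19, 758602341),
    (25, 658702314), (28, 867513240), (2, 658713240), (20, 658713240), (26, 658713240),
    (26, 658712340), (27, 876543201), (12, 658703241), (19, 758603214), (12, 568702341),
    (25, 658703241), (19, 758602314), (25, 658702341), (28, 867513204), (6, 658703241),
    (16, 658703241), (16, 658702341), (27, 658703241), (29, 876543210)]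

/-- The map on vertices given by the decimal digits of `p`. -/
def digitMap (p : ℕ) (a : Fin 9) : Fin 9 := Fin.ofNat 9 (p / 10 ^ a.val % 10)

/-- The digits of `p` give an isomorphism from the graph of `g` to the graph of `h`. -/
def isIso (g h p : ℕ) : Bool :=
  decide (∀ a b : Fin 9, a < b → digitMap p a ≠ digitMap p b ∧
    codeAdj g a b = codeAdj h (digitMap p a) (digitMap p b))

/-- The isomorphisms in the second list are valid for the codes in the first. -/
def allIso : List ℕ → List (ℕ × ℕ) → Bool
  | [], _ => true
  | _ :: _, [] => false
  | g :: gs, c :: cs => isIso g (representatives.getD c.1 0) c.2 && allIso gs cs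

theorem allIso_candidates : allIso candidates isomorphisms = true := by
  decide +kernel

theorem extend_cons_cons (leaf : ℕ → List ℕ → List ℕ) (n : ℕ) (ns : List ℕ) (p : ℕ × ℕ)
    (ps : List (ℕ × ℕ)) (d g : ℕ) (acc : List ℕ) :
    extend leaf (n :: ns) (p :: ps) d g acc =
      if (d + p.2) &&& 559240 = 0 then
        extend leaf ns (p :: ps) (d + p.2) (g + p.1 * 2 ^ n) (extend leaf (n :: ns) ps d g acc)
      else extend leaf (n :: ns) ps d g acc := by
  refine (withValue_eq (α := List ℕ) (d + p.2) fun d' => Bool.rec (extend leaf (n :: ns) ps d g acc)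
    (withValue (g + p.1 * 2 ^ n) fun g' =>
      extend leaf ns (p :: ps) d' g' (extend leaf (n :: ns) ps d g acc))
    (Nat.beq (d' &&& 559240) 0)).trans ?_
  split_ifs with h
  · simp only [show Nat.beq ((d + p.2) &&& 559240) 0 = true from Nat.beq_eq.mpr h]
    exact withValue_eq _ _
  · simp only [show Nat.beq ((d + p.2) &&& 559240) 0 = false from
      Bool.eq_false_iff.2 fun hb => h (Nat.eq_of_beq_eq_true hb)]

theorem extendsColoring_cons (r : ℕ → ℕ) (v : ℕ) (vs : List ℕ) (a b c : ℕ) :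
    extendsColoring r (v :: vs) a b c =
      ((Nat.beq (r v &&& a) 0 && extendsColoring r vs (a ||| 2 ^ v) b c) ||
        ((Nat.beq (r v &&& b) 0 && extendsColoring r vs a (b ||| 2 ^ v) c) ||
          (Nat.beq (r v &&& c) 0 && extendsColoring r vs a b (c ||| 2 ^ v)))) := by
  have hand : ∀ x y : Bool, (Bool.rec false y x : Bool) = (x && y) := by decide
  have hor : ∀ x y : Bool, (Bool.rec y true x : Bool) = (x || y) := by decide
  simp only [← hand, ← hor]
  exact withValue_eq (α := Bool) (r v) fun n => Bool.rec (Bool.rec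
    (Bool.rec false (extendsColoring r vs a b (c ||| 2 ^ v)) (Nat.beq (n &&& c) 0)) true
    (Bool.rec false (extendsColoring r vs a (b ||| 2 ^ v) c) (Nat.beq (n &&& b) 0))) true
    (Bool.rec false (extendsColoring r vs (a ||| 2 ^ v) b c) (Nat.beq (n &&& a) 0))

theorem mem_extend_of_mem {leaf : ℕ → List ℕ → List ℕ}
    (hleaf : ∀ g acc a, a ∈ acc → a ∈ leaf g acc) {a : ℕ} (ns : List ℕ) :
    ∀ (ts : List (ℕ × ℕ)) (d g : ℕ) (acc : List ℕ), a ∈ acc → a ∈ extend leaf ns ts d g acc := by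
  induction ns with
  | nil => exact fun _ _ g acc h => hleaf g acc a h
  | cons n ns ih =>
    intro ts d g acc h
    induction ts with
    | nil => exact h
    | cons p ps ihp =>
      rw [extend_cons_cons]
      split_ifs
      exacts [ih _ _ _ _ ihp, ihp]

theorem mem_extend_cons {leaf : ℕ → List ℕ → List ℕ}
    (hleaf : ∀ g acc a, a ∈ acc → a ∈ leaf g acc) {a n d g : ℕ} {ns : List ℕ} {p : ℕ × ℕ}
    (hd : (d + p.2) &&& 559240 = 0) {ts : List (ℕ × ℕ)} (hp : p ∈ ts)
    (hts : ts.Pairwise fun p q => p.1 < q.1)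
    (h : ∀ ts' acc', (∀ q ∈ ts, p.1 ≤ q.1 → q ∈ ts') → (ts'.Pairwise fun p q => p.1 < q.1) →
      a ∈ extend leaf ns ts' (d + p.2) (g + p.1 * 2 ^ n) acc') (acc : List ℕ) :
    a ∈ extend leaf (n :: ns) ts d g acc := by
  induction ts with
  | nil => simp at hp
  | cons q qs ih =>
    rw [extend_cons_cons]
    rcases List.mem_cons.1 hp with rfl | hpq
    · rw [if_pos hd]
      exact h _ _ (fun q hq _ => hq) hts
    · have hr : a ∈ extend leaf (n :: ns) qs d g acc := by
        refine ih hpq hts.of_cons fun ts' acc' h1 h2 => h ts' acc' (fun x hx hpx => ?_) h2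
        rcases List.mem_cons.1 hx with rfl | hx
        · exact absurd hpx (List.rel_of_pairwise_cons hts hpq).not_ge
        · exact h1 x hx hpx
      split_ifs
      exacts [mem_extend_of_mem hleaf _ _ _ _ _ hr, hr]

theorem hitsAll_of_forall {os : List Obstruction} {g : ℕ}
    (h : ∀ o ∈ os, ∃ k, g.testBit k = true ∧ o.pairs.testBit k = true) : hitsAll os g = true := by
  induction os with
  | nil => rfl
  | cons o os ih =>
    obtain ⟨k, hk⟩ := h o List.mem_cons_self
    have hb : Nat.beq (Nat.land g o.pairs) 0 = false := by
      refine Bool.eq_false_iff.2 fun hb => ?_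
      have h0 := congrArg (Nat.testBit · k) (Nat.eq_of_beq_eq_true hb)
      change (g &&& o.pairs).testBit k = _ at h0
      simp [hk] at h0
    change Bool.rec (motive := fun _ => Bool) (hitsAll os g) false
      (Nat.beq (Nat.land g o.pairs) 0) = true
    rw [hb]
    exact ih fun o ho => h o (List.mem_cons_of_mem _ ho)

theorem extendsColoring_of_coloring {r : ℕ → ℕ} (s : ℕ → Fin 3) {vs : List ℕ}
    (hr : ∀ v ∈ vs, ∀ n, (r v).testBit n = true → s n ≠ s v) {a b c : ℕ}
    (ha : ∀ n, a.testBit n = true → s n = 0) (hb : ∀ n, b.testBit n = true → s n = 1)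
    (hc : ∀ n, c.testBit n = true → s n = 2) : extendsColoring r vs a b c = true := by
  induction vs generalizing a b c with
  | nil => rfl
  | cons v vs ih =>
    have hvs : ∀ u ∈ vs, ∀ n, (r u).testBit n = true → s n ≠ s u :=
      fun u hu => hr u (List.mem_cons_of_mem _ hu)
    have hdisj : ∀ t x, (∀ n, t.testBit n = true → s n = x) → s v = x →
        Nat.beq (r v &&& t) 0 = true := fun t x ht hx => by
      refine Nat.beq_eq.mpr (Nat.eq_of_testBit_eq fun n => ?_)
      rw [Nat.testBit_and, Nat.zero_testBit, Bool.and_eq_false_iff]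
      by_contra! hn
      simp only [ne_eq, Bool.not_eq_false] at hn
      exact hr v List.mem_cons_self n hn.1 ((ht n hn.2).trans hx.symm)
    have hlor : ∀ t x, (∀ n, t.testBit n = true → s n = x) → s v = x →
        ∀ n, (t ||| 2 ^ v).testBit n = true → s n = x := fun t x ht hx n hn => by
      rw [Nat.testBit_or, Nat.testBit_two_pow, Bool.or_eq_true, decide_eq_true_eq] at hn
      rcases hn with hn | rfl
      exacts [ht n hn, hx]
    rw [extendsColoring_cons]
    have h3 : ∀ x : Fin 3, x = 0 ∨ x = 1 ∨ x = 2 := by decide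
    rcases h3 (s v) with hv | hv | hv
    · simp [hdisj a 0 ha hv, ih hvs (hlor a 0 ha hv) hb hc]
    · simp [hdisj b 1 hb hv, ih hvs ha (hlor b 1 hb hv) hc]
    · simp [hdisj c 2 hc hv, ih hvs ha hb (hlor c 2 hc hv)]

theorem mem_collect_of_mem (g : ℕ) (acc : List ℕ) (a : ℕ) (h : a ∈ acc) : a ∈ collect g acc := by
  unfold collect
  cases hitsAll obstructions g
  · exact h
  · cases extendsColoring (lowerNeighbors g) [2, 3, 4, 5, 6, 7, 8] 1 2 0
    · exact h
    · exact List.mem_cons_of_mem _ h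

theorem typeTable_sorted : typeTable.Pairwise fun p q => p.1 < q.1 := by decide

theorem mem_typeTable : ∀ a b c d e : Bool,
    2 ≤ a.toNat + b.toNat + c.toNat + d.toNat + e.toNat →
    a.toNat + b.toNat + c.toNat + d.toNat + e.toNat ≤ 4 →
    (a.toNat + 2 * b.toNat + 4 * c.toNat + 8 * d.toNat + 16 * e.toNat,
      a.toNat + 16 * b.toNat + 256 * c.toNat + 4096 * d.toNat + 65536 * e.toNat) ∈ typeTable := by
  decide

theorem land_eq_zero_of_digits {a b c d e : ℕ} (ha : a < 8) (hb : b < 8) (hc : c < 8) (hd : d < 8)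
    (he : e < 8) : (a + 16 * b + 256 * c + 4096 * d + 65536 * e) &&& 559240 = 0 := by
  have h : ∀ x < 8, ∀ y m : ℕ, (x + 16 * y) &&& (8 + 16 * m) = 16 * (y &&& m) := fun x hx y m => by
    have h8 : ∀ x < 8, x &&& 8 = 0 := by decide
    have h1 := Nat.and_div_two_pow (a := x + 16 * y) (b := 8 + 16 * m) (n := 4)
    have h2 := Nat.and_mod_two_pow (a := x + 16 * y) (b := 8 + 16 * m) (n := 4)
    rw [show (x + 16 * y) / 2 ^ 4 = y by omega, show (8 + 16 * m) / 2 ^ 4 = m by omega] at h1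
    rw [show (x + 16 * y) % 2 ^ 4 = x by omega, show (8 + 16 * m) % 2 ^ 4 = 8 by omega,
      h8 x hx] at h2
    omega
  rw [show a + 16 * b + 256 * c + 4096 * d + 65536 * e =
    a + 16 * (b + 16 * (c + 16 * (d + 16 * (e + 16 * 0)))) by ring,
    show 559240 = 8 + 16 * (8 + 16 * (8 + 16 * (8 + 16 * (8 + 16 * 0)))) by rfl,
    h a ha, h b hb, h c hc, h d hd, h e he]
  rfl

/-- The pairs of vertices in colexicographic order. -/
def pairAt : Fin 36 → Fin 9 × Fin 9 :=
  ![(0, 1), (0, 2), (1, 2), (0, 3), (1, 3), (2, 3), (0, 4), (1, 4), (2, 4), (3, 4), (0, 5),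
    (1, 5), (2, 5), (3, 5), (4, 5), (0, 6), (1, 6), (2, 6), (3, 6), (4, 6), (5, 6), (0, 7),
    (1, 7), (2, 7), (3, 7), (4, 7), (5, 7), (6, 7), (0, 8), (1, 8), (2, 8), (3, 8), (4, 8),
    (5, 8), (6, 8), (7, 8)]

/-- The code of the graph `H`. -/
def codeOf (H : SimpleGraph (Fin 9)) [DecidableRel H.Adj] : ℕ :=
  Nat.ofBits fun k => decide (H.Adj (pairAt k).1 (pairAt k).2)

theorem testBit_codeOf (H : SimpleGraph (Fin 9)) [DecidableRel H.Adj] {i j : Fin 9} (hij : i ≠ j) :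
    (codeOf H).testBit (pairIndex i j) = decide (H.Adj i j) := by
  have key : ∀ i j : Fin 9, i ≠ j → pairIndex i j < 36 ∧
      (pairAt (Fin.ofNat 36 (pairIndex i j)) = (i, j) ∨
        pairAt (Fin.ofNat 36 (pairIndex i j)) = (j, i)) := by decide +kernel
  obtain ⟨hlt, h⟩ := key i j hij
  have hk : (⟨pairIndex i j, hlt⟩ : Fin 36) = Fin.ofNat 36 (pairIndex i j) :=
    Fin.ext (Nat.mod_eq_of_lt hlt).symm
  rw [codeOf, Nat.testBit_ofBits_lt _ _ hlt, hk]
  rcases h with h | h <;> rw [h]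
  exact decide_eq_decide.2 (H.adj_comm j i)

theorem graphOfCode_codeOf (H : SimpleGraph (Fin 9)) [DecidableRel H.Adj] :
    graphOfCode (codeOf H) = H := by
  ext i j
  change i ≠ j ∧ (codeOf H).testBit (pairIndex i j) = true ↔ _
  refine ⟨fun h => ?_, fun h => ⟨h.ne, ?_⟩⟩
  · simpa [testBit_codeOf H h.1] using h.2
  · simpa [testBit_codeOf H h.ne] using h

/-- The edges among the vertices `2`, `3`, `4`, as a bit mask. -/
def innerEdges (H : SimpleGraph (Fin 9)) [DecidableRel H.Adj] : ℕ :=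
  (decide (H.Adj 2 3)).toNat + 2 * (decide (H.Adj 2 4)).toNat + 4 * (decide (H.Adj 3 4)).toNat

theorem octal_digits (a b c : Bool) : (a.toNat + 2 * b.toNat + 4 * c.toNat) % 2 = a.toNat ∧
    (a.toNat + 2 * b.toNat + 4 * c.toNat) / 2 % 2 = b.toNat ∧
    (a.toNat + 2 * b.toNat + 4 * c.toNat) / 4 = c.toNat := by
  revert a b c
  decide

theorem octal_mod_four (a b c : Bool) :
    (a.toNat + 2 * b.toNat + 4 * c.toNat) % 4 = a.toNat + 2 * b.toNat := by
  revert a b c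
  decide

theorem octal_lt_four (a b c : Bool) :
    a.toNat + 2 * b.toNat + 4 * c.toNat < 4 ↔ c = false := by
  revert a b c
  decide

namespace IsNormalized

variable {H : SimpleGraph (Fin 9)} [DecidableRel H.Adj] {σ : Fin 9 → Bool}

theorem not_adj (h : IsNormalized H σ) {v w : Fin 9} (hv : 2 ≤ v) (hσ : σ v = true) (hw : 5 ≤ w) :
    ¬ H.Adj v w := fun hvw =>
  h.separates v w hv (le_trans (by decide) hw) hvw (hσ.trans (h.side w hw).symm)

theorem codeOf_eq (h : IsNormalized H σ) :
    codeOf H = coreCode (coreKey H σ 2) (coreKey H σ 3) (coreKey H σ 4) (innerEdges H) +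
      coreNeighbors H 5 * 2 ^ 10 + coreNeighbors H 6 * 2 ^ 15 + coreNeighbors H 7 * 2 ^ 21 +
        coreNeighbors H 8 * 2 ^ 28 := by
  obtain ⟨f, hf⟩ : ∃ f : Fin 9 → Fin 9 → Bool, ∀ i j, decide (H.Adj i j) = f i j :=
    ⟨_, fun _ _ => rfl⟩
  have hzero : ∀ i j, 5 ≤ i → 5 ≤ j → f i j = false := fun i j hi hj => by
    rw [← hf, decide_eq_false (h.not_adj (le_trans (by decide) hi) (h.side i hi) hj)]
  have hone : f 0 1 = true := by rw [← hf, decide_eq_true h.adj]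
  simp only [codeOf, Nat.ofBits, Fin.foldr_succ, Fin.foldr_zero, coreCode, coreKey, innerEdges,
    coreNeighbors, octal_digits, octal_mod_four, hf]
  simp [pairAt, hone, hzero]
  ring

theorem coreDegrees_eq :
    coreDegrees (coreKey H σ 2) (coreKey H σ 3) (coreKey H σ 4) (innerEdges H) =
      (4 + (decide (H.Adj 0 2)).toNat + (decide (H.Adj 0 3)).toNat + (decide (H.Adj 0 4)).toNat) +
      16 * (4 + (decide (H.Adj 1 2)).toNat + (decide (H.Adj 1 3)).toNat +
        (decide (H.Adj 1 4)).toNat) +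
      256 * (if σ 2 = false then 3 + (decide (H.Adj 0 2)).toNat + (decide (H.Adj 1 2)).toNat +
        (decide (H.Adj 2 3)).toNat + (decide (H.Adj 2 4)).toNat else 7) +
      4096 * (if σ 3 = false then 3 + (decide (H.Adj 0 3)).toNat + (decide (H.Adj 1 3)).toNat +
        (decide (H.Adj 2 3)).toNat + (decide (H.Adj 3 4)).toNat else 7) +
      65536 * (if σ 4 = false then 3 + (decide (H.Adj 0 4)).toNat + (decide (H.Adj 1 4)).toNat +
        (decide (H.Adj 2 4)).toNat + (decide (H.Adj 3 4)).toNat else 7) := by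
  simp only [coreDegrees, coreKey, innerEdges, octal_digits, octal_lt_four]

theorem exists_pair_of_obstruction (hH : IsEdgeCritical H) {o : Obstruction}
    (ho : o ∈ coreObstructions ++ obstructions) :
    ∃ i j : Fin 9, H.Adj i j ∧ o.covers i j = true ∧ o.pairs.testBit (pairIndex i j) = true := by
  have key : ∀ o ∈ coreObstructions ++ obstructions, o.fst < 9 ∧ o.snd < 9 ∧ o.fst ≠ o.snd ∧
      ∀ i j : Fin 9, i ≠ j → o.covers i j = true → o.pairs.testBit (pairIndex i j) = true := by
    decide +kernel
  obtain ⟨hp, hq, hpq, hcov⟩ := key o ho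
  by_cases hadj : H.Adj ⟨o.fst, hp⟩ ⟨o.snd, hq⟩
  · have hc : o.covers o.fst o.snd = true := by simp [Obstruction.covers]
    exact ⟨_, _, hadj, hc, hcov _ _ hadj.ne hc⟩
  · by_contra! hn
    refine hH.not_bipartiteAway ⟨o.fst, hp⟩ ⟨o.snd, hq⟩ (by simpa using hpq) hadj
      ⟨fun v => o.side.testBit v, fun a b ha ha' hb hb' hab hs => ?_⟩
    have hc : o.covers a b = true := by
      simp only [ne_eq, Fin.ext_iff] at ha ha' hb hb'
      simp [Obstruction.covers, ha, ha', hb, hb', hs]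
    exact hn a b hab hc (hcov a b hab.ne hc)

theorem hitsAll_codeOf (hH : IsEdgeCritical H) : hitsAll obstructions (codeOf H) = true :=
  hitsAll_of_forall fun _ ho => by
    obtain ⟨i, j, hij, -, hp⟩ := exists_pair_of_obstruction hH (List.mem_append_right _ ho)
    exact ⟨_, by simpa [testBit_codeOf H hij.ne] using hij, hp⟩

theorem hitsAll_coreCode (h : IsNormalized H σ) (hH : IsEdgeCritical H) :
    hitsAll coreObstructions (coreCode (coreKey H σ 2) (coreKey H σ 3) (coreKey H σ 4)
      (innerEdges H)) = true := by
  have key : ∀ o ∈ coreObstructions, ∀ i j : Fin 9, i ≠ j → o.covers i j = true →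
      pairIndex i j < 10 ∨ 5 ≤ i ∧ 5 ≤ j := by decide +kernel
  refine hitsAll_of_forall fun o ho => ?_
  obtain ⟨i, j, hij, hc, hp⟩ := exists_pair_of_obstruction hH (List.mem_append_left _ ho)
  rcases key o ho i j hij.ne hc with hlt | hB
  · refine ⟨_, ?_, hp⟩
    have hcore :
        coreCode (coreKey H σ 2) (coreKey H σ 3) (coreKey H σ 4) (innerEdges H) < 2 ^ 10 := by
      simp only [coreCode, coreKey, innerEdges, octal_digits, octal_mod_four]
      have hle : ∀ b : Bool, b.toNat ≤ 1 := Bool.toNat_le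
      have := hle (decide (H.Adj 0 2))
      have := hle (decide (H.Adj 0 3))
      have := hle (decide (H.Adj 0 4))
      have := hle (decide (H.Adj 1 2))
      have := hle (decide (H.Adj 1 3))
      have := hle (decide (H.Adj 1 4))
      have := hle (decide (H.Adj 2 3))
      have := hle (decide (H.Adj 2 4))
      have := hle (decide (H.Adj 3 4))
      omega
    have hmod : codeOf H % 2 ^ 10 =
        coreCode (coreKey H σ 2) (coreKey H σ 3) (coreKey H σ 4) (innerEdges H) := by
      rw [h.codeOf_eq]
      omega
    rw [← hmod, Nat.testBit_mod_two_pow, testBit_codeOf H hij.ne]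
    simpa using ⟨hlt, hij⟩
  · exact absurd hij (h.not_adj (le_trans (by decide) hB.1) (h.side i hB.1) hB.2)

theorem coreAdmissible_of_isNormalized (h : IsNormalized H σ) (hH : IsEdgeCritical H) :
    coreAdmissible (coreKey H σ 2) (coreKey H σ 3) (coreKey H σ 4) (innerEdges H) = true := by
  have hside : ∀ a b : Fin 9, 2 ≤ a → 2 ≤ b → Nat.beq (decide (H.Adj a b)).toNat 0 = true ∨
      Nat.beq (σ a).toNat (σ b).toNat = false := fun a b ha hb => by
    by_cases hab : H.Adj a b
    · have hne := h.separates a b ha hb hab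
      right
      revert hne
      generalize σ a = x
      generalize σ b = y
      revert x y
      decide
    · simp [hab]
  simp only [coreAdmissible, h.hitsAll_coreCode hH, Bool.and_eq_true, Bool.or_eq_true,
    Bool.not_eq_true', Nat.ble_eq, h.key_two_le, h.key_three_le, true_and, and_true]
  simp only [coreKey, innerEdges, octal_digits]
  exact ⟨⟨hside 2 3 (by decide) (by decide), hside 2 4 (by decide) (by decide)⟩,
    hside 3 4 (by decide) (by decide)⟩

end IsNormalized

theorem IsEdgeCritical.two_le_deg {G : SimpleGraph (Fin 9)} (hG : IsEdgeCritical G) (v : Fin 9) :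
    2 ≤ deg G v := by
  classical
  obtain ⟨a, b, hab, ha, hb⟩ := hG.exists_two_adj v
  rw [deg_eq_sum]
  calc 2 = ∑ w ∈ {a, b}, (decide (G.Adj v w)).toNat := by simp [Finset.sum_pair hab, ha, hb]
    _ ≤ _ := Finset.sum_le_sum_of_subset (Finset.subset_univ _)

theorem testBit_lowerNeighbors (g v n : ℕ) :
    (lowerNeighbors g v).testBit n = (decide (n < v) && g.testBit (pairIndex n v)) := by
  change (g / 2 ^ (v * (v - 1) / 2) % 2 ^ v).testBit n = _
  rw [Nat.testBit_mod_two_pow, Nat.testBit_div_two_pow]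
  by_cases h : n < v
  · simp [h, pairIndex, Nat.add_comm]
  · simp [h]

theorem extendsColoring_codeOf {H : SimpleGraph (Fin 9)} [DecidableRel H.Adj]
    (hc : H.Colorable 3) (h01 : H.Adj 0 1) :
    extendsColoring (lowerNeighbors (codeOf H)) [2, 3, 4, 5, 6, 7, 8] 1 2 0 = true := by
  obtain ⟨c⟩ := hc
  have hperm : ∀ x y : Fin 3, x ≠ y → ∃ π : Equiv.Perm (Fin 3), π x = 0 ∧ π y = 1 := by decide
  obtain ⟨π, h0, h1⟩ := hperm _ _ (c.valid h01)
  refine extendsColoring_of_coloring (fun n => π (c (Fin.ofNat 9 n))) (fun v hv n hn he => ?_)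
    (fun n hn => ?_) (fun n hn => ?_) (fun n hn => by simp at hn)
  · rw [testBit_lowerNeighbors, Bool.and_eq_true, decide_eq_true_eq] at hn
    have hv9 : v < 9 := by
      revert v
      simp
    have hvv : (Fin.ofNat 9 v).val = v := Nat.mod_eq_of_lt hv9
    have hnn : (Fin.ofNat 9 n).val = n := Nat.mod_eq_of_lt (hn.1.trans hv9)
    have hne : Fin.ofNat 9 n ≠ Fin.ofNat 9 v := fun h => by
      have := congrArg Fin.val h
      omega
    have hb := testBit_codeOf H hne
    rw [hvv, hnn, hn.2] at hb
    exact c.valid (of_decide_eq_true hb.symm) (π.injective he)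
  · obtain rfl : n = 0 := by
      rw [Nat.testBit_one_eq_true_iff_self_eq_zero] at hn
      exact hn
    exact h0
  · obtain rfl : n = 1 := by
      rw [show 2 = 2 ^ 1 from rfl, Nat.testBit_two_pow, decide_eq_true_eq] at hn
      exact hn.symm
    exact h1

theorem mem_octal (a b c : Bool) : a.toNat + 2 * b.toNat + 4 * c.toNat ∈ octal := by
  revert a b c
  decide

theorem IsNormalized.codeOf_mem_candidates {H : SimpleGraph (Fin 9)} [DecidableRel H.Adj]
    {σ : Fin 9 → Bool} (h : IsNormalized H σ) (hH : IsEdgeCritical H) :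
    codeOf H ∈ candidates := by
  simp only [candidates, List.mem_flatMap]
  refine ⟨coreKey H σ 2, mem_octal _ _ _, coreKey H σ 3, mem_octal _ _ _, coreKey H σ 4,
    mem_octal _ _ _, innerEdges H, mem_octal _ _ _, ?_⟩
  rw [candidatesFrom, if_pos (h.coreAdmissible_of_isNormalized hH), withValue_eq, withValue_eq,
    coreDegrees_eq]
  have hcode := h.codeOf_eq
  have h5 := h.neighbors_five_le
  have h6 := h.neighbors_six_le
  have h7 := h.neighbors_seven_le
  have hcollect : ∀ acc, codeOf H ∈ collect (codeOf H) acc := fun acc => by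
    simp [collect, hitsAll_codeOf hH, extendsColoring_codeOf hH.colorable h.adj]
  have hdeg := hH.deg_le
  have hdeg' := hH.two_le_deg
  simp only [deg_eq_sum] at hdeg hdeg'
  obtain ⟨f, hf⟩ : ∃ f : Fin 9 → Fin 9 → Bool, ∀ i j, decide (H.Adj i j) = f i j :=
    ⟨_, fun _ _ => rfl⟩
  have hloop : ∀ i, f i i = false := fun i => by rw [← hf, decide_eq_false (H.loopless.irrefl i)]
  have hsymm : ∀ i j, j < i → f i j = f j i := fun i j _ => by
    rw [← hf, ← hf]
    exact decide_eq_decide.2 (H.adj_comm i j)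
  have hzero : ∀ i j, 2 ≤ i → σ i = true → 5 ≤ j → f i j = false := fun i j hi hσ hj => by
    rw [← hf, decide_eq_false (h.not_adj hi hσ hj)]
  have hzero' : ∀ i j, 5 ≤ i → 5 ≤ j → f i j = false := fun i j hi hj =>
    hzero i j (le_trans (by decide) hi) (h.side i hi) hj
  have hone : f 0 1 = true := by rw [← hf, decide_eq_true h.adj]
  have hmem : ∀ v : Fin 9, 5 ≤ v → (coreNeighbors H v, (f 0 v).toNat + 16 * (f 1 v).toNat +
      256 * (f 2 v).toNat + 4096 * (f 3 v).toNat + 65536 * (f 4 v).toNat) ∈ typeTable := by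
    intro v hv
    have hsum : ∑ w, (decide (H.Adj v w)).toNat = (f 0 v).toNat + (f 1 v).toNat + (f 2 v).toNat +
        (f 3 v).toNat + (f 4 v).toNat := by
      have hlt : ∀ w < 5, f v w = f w v := fun w hw => hsymm v w (lt_of_lt_of_le hw hv)
      simp [hf, Fin.sum_univ_succ, hzero' v _ hv, hlt]
      ring
    have hle := hdeg v
    have hge := hdeg' v
    rw [hsum] at hle hge
    simpa only [coreNeighbors, hf] using mem_typeTable _ _ _ _ _ hge hle
  have hd0 := hdeg 0
  have hd1 := hdeg 1
  have hd2 := hdeg 2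
  have hd3 := hdeg 3
  have hd4 := hdeg 4
  simp only [hf] at hd0 hd1 hd2 hd3 hd4 ⊢
  simp [Fin.sum_univ_succ, hloop, hsymm, hone] at hd0 hd1 hd2 hd3 hd4
  have hy0 : 4 + (f 0 2).toNat + (f 0 3).toNat + (f 0 4).toNat +
      ((f 0 5).toNat + (f 0 6).toNat + (f 0 7).toNat + (f 0 8).toNat) ≤ 7 := by omega
  have hy1 : 4 + (f 1 2).toNat + (f 1 3).toNat + (f 1 4).toNat +
      ((f 1 5).toNat + (f 1 6).toNat + (f 1 7).toNat + (f 1 8).toNat) ≤ 7 := by omega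
  have hside : ∀ (i : Fin 9) (n : ℕ), 2 ≤ i →
      n + ((f i 5).toNat + (f i 6).toNat + (f i 7).toNat + (f i 8).toNat) ≤ 7 →
      (if σ i = false then n else 7) +
        ((f i 5).toNat + (f i 6).toNat + (f i 7).toNat + (f i 8).toNat) ≤ 7 := by
    intro i n hi hn
    split_ifs with hσ
    · exact hn
    · simp [hzero i _ hi (by simpa using hσ)]
  have hy2 := hside 2 (3 + (f 0 2).toNat + (f 1 2).toNat + (f 2 3).toNat + (f 2 4).toNat)
    (by decide) (by omega)
  have hy3 := hside 3 (3 + (f 0 3).toNat + (f 1 3).toNat + (f 2 3).toNat + (f 3 4).toNat)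
    (by decide) (by omega)
  have hy4 := hside 4 (3 + (f 0 4).toNat + (f 1 4).toNat + (f 2 4).toNat + (f 3 4).toNat)
    (by decide) (by omega)
  generalize 4 + (f 0 2).toNat + (f 0 3).toNat + (f 0 4).toNat = y0 at hy0 ⊢
  generalize 4 + (f 1 2).toNat + (f 1 3).toNat + (f 1 4).toNat = y1 at hy1 ⊢
  generalize (if σ 2 = false then 3 + (f 0 2).toNat + (f 1 2).toNat +
    (f 2 3).toNat + (f 2 4).toNat else 7) = y2 at hy2 ⊢
  generalize (if σ 3 = false then 3 + (f 0 3).toNat + (f 1 3).toNat +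
    (f 2 3).toNat + (f 3 4).toNat else 7) = y3 at hy3 ⊢
  generalize (if σ 4 = false then 3 + (f 0 4).toNat + (f 1 4).toNat +
    (f 2 4).toNat + (f 3 4).toNat else 7) = y4 at hy4 ⊢
  have hland : ∀ n a b c d e : ℕ, n = a + 16 * b + 256 * c + 4096 * d + 65536 * e →
      a < 8 → b < 8 → c < 8 → d < 8 → e < 8 → n &&& 559240 = 0 := by
    rintro _ a b c d e rfl
    exact land_eq_zero_of_digits
  refine mem_extend_cons mem_collect_of_mem (hland _
      (y0 + (f 0 5).toNat) (y1 + (f 1 5).toNat) (y2 + (f 2 5).toNat) (y3 + (f 3 5).toNat)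
      (y4 + (f 4 5).toNat)
      (by ring) (by omega) (by omega) (by omega) (by omega) (by omega))
    (hmem 5 (by decide)) typeTable_sorted
    (fun ts5 acc5 hts5 hs5 => ?_) _
  refine mem_extend_cons mem_collect_of_mem (hland _
      (y0 + (f 0 5).toNat + (f 0 6).toNat) (y1 + (f 1 5).toNat + (f 1 6).toNat)
      (y2 + (f 2 5).toNat + (f 2 6).toNat) (y3 + (f 3 5).toNat + (f 3 6).toNat)
      (y4 + (f 4 5).toNat + (f 4 6).toNat)
      (by ring) (by omega) (by omega) (by omega) (by omega) (by omega))
    (hts5 _ (hmem 6 (by decide)) h5) hs5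
    (fun ts6 acc6 hts6 hs6 => ?_) _
  refine mem_extend_cons mem_collect_of_mem (hland _
      (y0 + (f 0 5).toNat + (f 0 6).toNat + (f 0 7).toNat)
      (y1 + (f 1 5).toNat + (f 1 6).toNat + (f 1 7).toNat)
      (y2 + (f 2 5).toNat + (f 2 6).toNat + (f 2 7).toNat)
      (y3 + (f 3 5).toNat + (f 3 6).toNat + (f 3 7).toNat)
      (y4 + (f 4 5).toNat + (f 4 6).toNat + (f 4 7).toNat)
      (by ring) (by omega) (by omega) (by omega) (by omega) (by omega))
    (hts6 _ (hts5 _ (hmem 7 (by decide)) (h5.trans h6)) h6) hs6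
    (fun ts7 acc7 hts7 hs7 => ?_) _
  refine mem_extend_cons mem_collect_of_mem (hland _
      (y0 + (f 0 5).toNat + (f 0 6).toNat + (f 0 7).toNat + (f 0 8).toNat)
      (y1 + (f 1 5).toNat + (f 1 6).toNat + (f 1 7).toNat + (f 1 8).toNat)
      (y2 + (f 2 5).toNat + (f 2 6).toNat + (f 2 7).toNat + (f 2 8).toNat)
      (y3 + (f 3 5).toNat + (f 3 6).toNat + (f 3 7).toNat + (f 3 8).toNat)
      (y4 + (f 4 5).toNat + (f 4 6).toNat + (f 4 7).toNat + (f 4 8).toNat)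
      (by ring) (by omega) (by omega) (by omega) (by omega) (by omega))
    (hts7 _ (hts6 _ (hts5 _ (hmem 8 (by decide)) ((h5.trans h6).trans h7))
      (h6.trans h7)) h7) hs7
    (fun _ _ _ _ => ?_) _
  change codeOf H ∈ collect _ _
  rw [← hcode]
  exact hcollect _

theorem nonempty_iso_of_isIso {g h p : ℕ} (hp : isIso g h p = true) :
    Nonempty (graphOfCode g ≃g graphOfCode h) := by
  have hp := of_decide_eq_true hp
  have hinj : Function.Injective (digitMap p) := fun a b hab => by
    rcases lt_trichotomy a b with hlt | heq | hlt
    exacts [absurd hab (hp a b hlt).1, heq, absurd hab.symm (hp b a hlt).1]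
  have hadj : ∀ a b : Fin 9, a ≠ b →
      codeAdj g a b = codeAdj h (digitMap p a) (digitMap p b) := fun a b hab => by
    rcases lt_or_gt_of_ne hab with hlt | hlt
    · exact (hp a b hlt).2
    · rw [codeAdj, codeAdj, pairIndex_comm, pairIndex_comm (digitMap p a)]
      exact (hp b a hlt).2
  refine ⟨Equiv.ofBijective _ (Finite.injective_iff_bijective.1 hinj), fun {a b} => ?_⟩
  change digitMap p a ≠ digitMap p b ∧ codeAdj h (digitMap p a) (digitMap p b) = true ↔
    a ≠ b ∧ codeAdj g a b = true
  rw [hinj.ne_iff]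
  exact and_congr_right fun hab => by rw [hadj a b hab]

theorem exists_isIso_of_allIso {gs : List ℕ} {cs : List (ℕ × ℕ)} (h : allIso gs cs = true) {g : ℕ}
    (hg : g ∈ gs) : ∃ c ∈ cs, isIso g (representatives.getD c.1 0) c.2 = true := by
  induction gs generalizing cs with
  | nil => simp at hg
  | cons g' gs ih =>
    match cs, h with
    | c :: cs, h =>
      rw [allIso, Bool.and_eq_true] at h
      rcases List.mem_cons.1 hg with rfl | hg
      · exact ⟨c, List.mem_cons_self, h.1⟩
      · obtain ⟨d, hd, hiso⟩ := ih h.2 hg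
        exact ⟨d, List.mem_cons_of_mem _ hd, hiso⟩

/-- Colorings with three colors, as decimal digits. -/
def colorings : List ℕ := [
    002221110, 100122210, 010122210, 012221010, 102220110, 010222110]

theorem representatives_deg : ∀ h ∈ representatives,
    (∀ v, ∑ w, (decide ((graphOfCode h).Adj v w)).toNat ≤ 4) ∧
      ∃ v, ∑ w, (decide ((graphOfCode h).Adj v w)).toNat = 4 := by
  decide +kernel

theorem representatives_coloring : ∀ h ∈ representatives, ∃ c ∈ colorings,
    ∀ a b : Fin 9, (graphOfCode h).Adj a b →
      Fin.ofNat 3 (c / 10 ^ a.val % 10) ≠ Fin.ofNat 3 (c / 10 ^ b.val % 10) := by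
  decide +kernel

theorem representatives_bipartition : ∀ h ∈ representatives, (graphOfCode h).Adj 0 1 ∧
    ∀ a b : Fin 9, a ≠ 0 → a ≠ 1 → b ≠ 0 → b ≠ 1 → (graphOfCode h).Adj a b →
      decide (5 ≤ a) ≠ decide (5 ≤ b) := by
  decide +kernel

theorem representatives_extendsColoring : ∀ h ∈ representatives, ∀ p q : Fin 9, p ≠ q →
    ¬ (graphOfCode h).Adj p q → extendsColoring (fun v => Nat.lor (lowerNeighbors h v) 512)
      ([0, 1, 2, 3, 4, 5, 6, 7, 8].filter fun v => v != p.val && v != q.val) 0 0 512 = false := by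
  decide +kernel

theorem extendsColoring_of_bipartiteAway {g : ℕ} {p q : Fin 9}
    (h : BipartiteAway (graphOfCode g) p q) :
    extendsColoring (fun v => Nat.lor (lowerNeighbors g v) 512)
      ([0, 1, 2, 3, 4, 5, 6, 7, 8].filter fun v => v != p.val && v != q.val) 0 0 512 = true := by
  obtain ⟨s, hs⟩ := h
  refine extendsColoring_of_coloring (fun n => if n = p ∨ n = q ∨ n = 9 then 2 else
    bif s (Fin.ofNat 9 n) then 1 else 0) (fun v hv n hn => ?_) (fun n hn => by simp at hn)
    (fun n hn => by simp at hn) (fun n hn => ?_)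
  · rw [List.mem_filter, Bool.and_eq_true, bne_iff_ne, bne_iff_ne] at hv
    obtain ⟨hv, hvp, hvq⟩ := hv
    have hv9 : v < 9 := by
      clear hvp hvq hn
      revert v
      simp
    have hcol : ∀ x : Bool, (2 : Fin 3) ≠ bif x then 1 else 0 := by decide
    rw [if_neg (show ¬ (v = p ∨ v = q ∨ v = 9) by omega)]
    split_ifs with hn'
    · exact hcol _
    · change (lowerNeighbors g v ||| 2 ^ 9).testBit n = true at hn
      rw [Nat.testBit_or, Nat.testBit_two_pow, testBit_lowerNeighbors, Bool.or_eq_true,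
        Bool.and_eq_true, decide_eq_true_eq, decide_eq_true_eq] at hn
      rcases hn with hn | hn
      · have hvv : (Fin.ofNat 9 v).val = v := Nat.mod_eq_of_lt hv9
        have hnn : (Fin.ofNat 9 n).val = n := Nat.mod_eq_of_lt (hn.1.trans hv9)
        have hne := hs (Fin.ofNat 9 n) (Fin.ofNat 9 v) (by omega) (by omega) (by omega) (by omega)
          ⟨by omega, by rw [codeAdj, hvv, hnn]; exact hn.2⟩
        revert hne
        generalize s (Fin.ofNat 9 n) = x
        generalize s (Fin.ofNat 9 v) = y
        revert x y
        decide
      · omega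
  · rw [show 512 = 2 ^ 9 from rfl, Nat.testBit_two_pow, decide_eq_true_eq] at hn
    simp [← hn]

theorem isEdgeCritical_of_mem_representatives {h : ℕ} (hh : h ∈ representatives) :
    IsEdgeCritical (graphOfCode h) := by
  refine ⟨fun v => ?_, ?_, fun p q hpq hadj hb => ?_, ?_⟩
  · rw [deg_eq_sum]
    exact (representatives_deg h hh).1 v
  · obtain ⟨c, -, hc⟩ := representatives_coloring h hh
    exact ⟨Coloring.mk (fun a => Fin.ofNat 3 (c / 10 ^ a.val % 10)) fun hab => hc _ _ hab⟩
  · have hf := representatives_extendsColoring h hh p q hpq hadj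
    rw [extendsColoring_of_bipartiteAway hb] at hf
    exact absurd hf (by decide)
  · obtain ⟨h01, hs⟩ := representatives_bipartition h hh
    exact ⟨0, 1, h01, _, hs⟩

/-- The sum over the neighbors `x` of `w` of one plus three times the number of common neighbors of
`w` and `x`. -/
def triangleWeight (A : Fin 9 → Fin 9 → Bool) (w : Fin 9) : ℕ :=
  ∑ x, bif A w x then 1 + 3 * ∑ y, (A w y && A x y).toNat else 0

/-- The sum of the squares of the total triangle weights of the neighborhoods. -/
def weightInvariant (A : Fin 9 → Fin 9 → Bool) : ℕ :=
  ∑ v, (∑ w, bif A v w then triangleWeight A w else 0) ^ 2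

theorem weightInvariant_congr {A B : Fin 9 → Fin 9 → Bool} (e : Fin 9 ≃ Fin 9)
    (h : ∀ a b, B (e a) (e b) = A a b) : weightInvariant A = weightInvariant B := by
  have hw : ∀ w, triangleWeight B (e w) = triangleWeight A w := fun w => by
    refine (Equiv.sum_comp e _).symm.trans (Finset.sum_congr rfl fun x _ => ?_)
    rw [h, ← Equiv.sum_comp e]
    simp only [h]
  symm
  refine (Equiv.sum_comp e _).symm.trans (Finset.sum_congr rfl fun v _ => ?_)
  rw [← Equiv.sum_comp e]
  simp only [h, hw]

theorem representatives_weightInvariant_nodup : (representatives.map fun h =>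
    weightInvariant fun a b => decide ((graphOfCode h).Adj a b)).Nodup := by
  decide +kernel

theorem eq_of_representatives_iso {i j : Fin 30}
    (e : graphOfCode (representatives.getD i 0) ≃g graphOfCode (representatives.getD j 0)) :
    i = j := by
  have hlen : representatives.length = 30 := rfl
  have he := weightInvariant_congr
    (A := fun a b => decide ((graphOfCode (representatives.getD i 0)).Adj a b))
    (B := fun a b => decide ((graphOfCode (representatives.getD j 0)).Adj a b)) e.toEquiv
    fun a b => decide_eq_decide.2 e.map_adj_iff
  rw [List.getD_eq_getElem representatives 0 (show i.val < representatives.length from i.2),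
    List.getD_eq_getElem representatives 0 (show j.val < representatives.length from j.2)] at he
  exact Fin.ext ((representatives_weightInvariant_nodup.getElem_inj_iff
    (hi := by simp [hlen]) (hj := by simp [hlen])).1 (by simpa using he))

theorem IsEdgeCritical.exists_iso_representative {G : SimpleGraph (Fin 9)}
    (hG : IsEdgeCritical G) :
    ∃ i : Fin 30, Nonempty (G ≃g graphOfCode (representatives.getD i 0)) := by
  classical
  obtain ⟨e, σ, hσ⟩ := hG.exists_normalized
  obtain ⟨c, hc, hiso⟩ := exists_isIso_of_allIso allIso_candidates
    (hσ.codeOf_mem_candidates (hG.comap e))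
  have hlt : ∀ c ∈ isomorphisms, c.1 < 30 := by decide +kernel
  obtain ⟨ε⟩ := nonempty_iso_of_isIso hiso
  rw [graphOfCode_codeOf] at ε
  exact ⟨⟨c.1, hlt c hc⟩, ⟨(Iso.comap e G).symm.trans ε⟩⟩

/-- There are exactly `30` isomorphism classes of graphs on `9` vertices with `Δ = 4`,
`χ = 3`, `ivs_χ = 3` and `vs_χ = 2`: there is a family of `30` pairwise non-isomorphic
such graphs so that every such graph is isomorphic to a member of the family. -/
theorem stmt_12 :
    ∃ f : Fin 30 → SimpleGraph (Fin 9),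
      (∀ i, maxDeg (f i) = 4 ∧ chi (f i) = 3 ∧ ivsChi (f i) = 3 ∧ vsChi (f i) = 2) ∧
      (∀ i j, i ≠ j → IsEmpty (f i ≃g f j)) ∧
      (∀ G : SimpleGraph (Fin 9),
        maxDeg G = 4 ∧ chi G = 3 ∧ ivsChi G = 3 ∧ vsChi G = 2 →
        ∃ i, Nonempty (G ≃g f i)) := by
  refine ⟨fun i => graphOfCode (representatives.getD i 0), fun i => ?_,
    fun i j hij => ⟨fun e => hij (eq_of_representatives_iso e)⟩,
    fun G hG => (isEdgeCritical_of_params hG.1 hG.2.1 hG.2.2.1 hG.2.2.2).exists_iso_representative⟩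
  have hmem : representatives.getD i 0 ∈ representatives := by
    rw [List.getD_eq_getElem _ _ i.2]
    exact List.getElem_mem _
  obtain ⟨v, hv⟩ := (representatives_deg _ hmem).2
  exact params_of_isEdgeCritical (isEdgeCritical_of_mem_representatives hmem)
    ⟨v, by rw [deg_eq_sum]; exact hv⟩
end
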